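/- There is a constant q₀ depending only on n such that the following holds whenever q ≥ q₀: for every J ⊆ [n] with 1 ∈ J or n ∈ J, if 𝓕_J is a ratio-sharp EKR-set of flags of type J, then there exist i ∈ {1, n} ∩ J and an EKR-set 𝓕_i of totally isotropic i-spaces of maximum cardinality among all EKR-sets of i-spaces such that 𝓕_J = { F : F is a flag of type J and F_i ∈ 𝓕_i }. -/

import Mathlib

open scoped Classical

open Module

section Defs

variable {F V : Type} [Field F] [AddCommGroup V] [Module F V]

/-- The orthogonal complement of a subspace with respect to a bilinear form. -/
def bperp (B : V →ₗ[F] V →ₗ[F] F) (W : Submodule F V) : Submodule F V :=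
  ⨅ w ∈ W, LinearMap.ker (B w)

/-- A subspace is totally isotropic for `B`. -/
def IsTotIso (B : V →ₗ[F] V →ₗ[F] F) (W : Submodule F V) : Prop :=
  ∀ u ∈ W, ∀ w ∈ W, B u w = 0

/-- `B` is an alternating form. -/
def IsAltForm (B : V →ₗ[F] V →ₗ[F] F) : Prop := ∀ v, B v v = 0

/-- `B` is nondegenerate. -/
def NondegForm (B : V →ₗ[F] V →ₗ[F] F) : Prop := ∀ v, (∀ w, B v w = 0) → v = 0

/-- A flag of type `J` of totally isotropic subspaces: entries outside `J` are `⊥`. -/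
structure SFlag (B : V →ₗ[F] V →ₗ[F] F) (J : Finset ℕ) where
  space : ℕ → Submodule F V
  isotropic : ∀ i ∈ J, IsTotIso B (space i)
  finrank_eq : ∀ i ∈ J, Module.finrank F (space i) = i
  mono : ∀ i ∈ J, ∀ j ∈ J, i ≤ j → space i ≤ space j
  eq_bot : ∀ i, i ∉ J → space i = ⊥

/-- Two flags of type `J` are opposite. -/
def FlagOpp {B : V →ₗ[F] V →ₗ[F] F} {J : Finset ℕ} (C C' : SFlag B J) : Prop :=
  ∀ i ∈ J, bperp B (C.space i) ⊓ C'.space i = ⊥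

/-- An EKR-set of flags of type `J`: no two members are opposite. -/
def IsEKRFlags {B : V →ₗ[F] V →ₗ[F] F} {J : Finset ℕ} (𝓕 : Set (SFlag B J)) : Prop :=
  ∀ C ∈ 𝓕, ∀ C' ∈ 𝓕, ¬ FlagOpp C C'

/-- Two subspaces are opposite. -/
def SpaceOpp (B : V →ₗ[F] V →ₗ[F] F) (S T : Submodule F V) : Prop :=
  bperp B S ⊓ T = ⊥

/-- An EKR-set of totally isotropic `s`-spaces: no two members are opposite. -/
def IsEKRSpaces (B : V →ₗ[F] V →ₗ[F] F) (s : ℕ) (𝓕 : Set (Submodule F V)) : Prop :=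
  (∀ S ∈ 𝓕, IsTotIso B S ∧ Module.finrank F S = s) ∧
    ∀ S ∈ 𝓕, ∀ T ∈ 𝓕, ¬ SpaceOpp B S T

/-- An `s`-space `S` is heavy with respect to a set `𝓕` of flags: every flag whose
`s`-th entry equals `S` belongs to `𝓕`. -/
def Heavy {B : V →ₗ[F] V →ₗ[F] F} {J : Finset ℕ} (𝓕 : Set (SFlag B J)) (s : ℕ)
    (S : Submodule F V) : Prop :=
  ∀ C : SFlag B J, C.space s = S → C ∈ 𝓕

end Defs

/-- `z_k = ∏_{i=1}^k (q^i-1)/(q-1)`. -/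
noncomputable def zpol (q k : ℕ) : ℝ :=
  ∏ i ∈ Finset.Icc 1 k, ((q : ℝ) ^ i - 1) / ((q : ℝ) - 1)

/-- The Gaussian binomial coefficient `[m choose k]_q` as a real number. -/
noncomputable def gaussq (q m k : ℕ) : ℝ :=
  ∏ i ∈ Finset.Icc 1 k, ((q : ℝ) ^ (m - k + i) - 1) / ((q : ℝ) ^ i - 1)

/-- `Φ_m^s` in `PS(n,1,q)`: the number of totally isotropic `s`-spaces containing a
fixed totally isotropic `m`-space. -/
noncomputable def PhiP (q n m s : ℕ) : ℝ :=
  gaussq q (n - m) (s - m) * ∏ i ∈ Finset.Icc 1 (s - m), ((q : ℝ) ^ (n - m + 1 - i) + 1)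

/-!
In the symplectic polar space of rank `n` over a field with `q` elements, the opposition matrix on
chambers is the product of panel adjacency matrices along a reduced word for the longest element of
the Weyl group of type `B_n`. These matrices satisfy the Hecke relations, so the least eigenvalue of
the opposition matrix is its valency divided by `-q ^ n`, and Hoffman's bound says that an EKR-set
of chambers has density at most `1 / (q ^ n + 1)`. If equality holds, the indicator function of the
set minus its density is an eigenvector for the least eigenvalue, and a dimension count in the
irreducible constituents makes it a sum of functions `w i` of the single `i`-spaces of a chamber.

Fix a chamber. Each `w i` is constant on the chambers opposite to it, so a maximum EKR-set `S` has
an index `i` for which no two `i`-spaces of members of `S` are opposite, and maximality gives that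
`S` consists of all chambers whose `i`-space lies in a set `P`.

The case `1 < i < n` is impossible. There the eigenvector equations express the number of members
of `P` in a pencil as a function of its bottom plus a function of its top. Hence every
`i + 1`-space either contains no member of `P`, or the members of `P` in it are its `i`-spaces
through a point, and the chambers whose `i + 1`-space contains a member of `P` form a larger
EKR-set.

Flags of type `J` are treated by passing to the chambers containing them: the number of chambers
containing a flag does not depend on the flag, because adjacent chambers are related by an isometry.
-/

section BraidWords

variable {M : Type*} [Monoid M] {s : ℕ → M} {m n : ℕ}

/-- The palindrome `s m * ⋯ * s 1 * s 0 * s 1 * ⋯ * s m`. -/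
def palindrome (s : ℕ → M) : ℕ → M
  | 0 => s 0
  | m + 1 => s (m + 1) * palindrome s m * s (m + 1)

/-- The product of the first `n` palindromes. If `s 0, …, s (n - 1)` are the Coxeter generators of
type `B_n`, numbered from the double bond, this is a reduced word for the longest element. -/
def longestWord (s : ℕ → M) : ℕ → M
  | 0 => 1
  | m + 1 => palindrome s m * longestWord s m

/-- The elements `s 0, …, s (n - 1)` satisfy the braid relations of type `B_n`, where the double
bond joins `s 0` and `s 1`. -/
structure IsBraidB (s : ℕ → M) (n : ℕ) : Prop where
  commute : ∀ i j, i + 2 ≤ j → j < n → Commute (s i) (s j)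
  braid_succ : ∀ i, 1 ≤ i → i + 1 < n → s i * s (i + 1) * s i = s (i + 1) * s i * s (i + 1)
  braid_zero_one : 1 < n → s 1 * s 0 * s 1 * s 0 = s 0 * (s 1 * s 0 * s 1)

lemma palindrome_mem {S : Submonoid M} (h : ∀ k ≤ m, s k ∈ S) : palindrome s m ∈ S := by
  induction m with
  | zero => exact h 0 le_rfl
  | succ m ih =>
    have hm := h (m + 1) le_rfl
    exact S.mul_mem (S.mul_mem hm (ih fun k hk => h k (by omega))) hm

lemma longestWord_mem {S : Submonoid M} (h : ∀ k < n, s k ∈ S) : longestWord s n ∈ S := by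
  induction n with
  | zero => exact S.one_mem
  | succ n ih =>
    exact S.mul_mem (palindrome_mem fun k hk => h k (by omega)) (ih fun k hk => h k (by omega))

lemma map_palindrome {N : Type*} [Monoid N] (f : M →* N) :
    f (palindrome s m) = palindrome (fun i => f (s i)) m := by
  induction m with
  | zero => rfl
  | succ m ih => simp only [palindrome, map_mul, ih]

lemma map_longestWord {N : Type*} [Monoid N] (f : M →* N) :
    f (longestWord s n) = longestWord (fun i => f (s i)) n := by
  induction n with
  | zero => exact map_one f
  | succ n ih => simp only [longestWord, map_mul, map_palindrome, ih]

lemma commute_palindrome {x : M} (h : ∀ k ≤ m, Commute x (s k)) :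
    Commute x (palindrome s m) :=
  Submonoid.mem_centralizer_iff.1
    (palindrome_mem (S := Submonoid.centralizer {x}) fun k hk => by
      rintro _ rfl
      exact h k hk) x rfl

lemma commute_longestWord {x : M} (h : ∀ k < n, Commute x (s k)) :
    Commute x (longestWord s n) :=
  Submonoid.mem_centralizer_iff.1
    (longestWord_mem (S := Submonoid.centralizer {x}) fun k hk => by
      rintro _ rfl
      exact h k hk) x rfl

namespace IsBraidB

variable (h : IsBraidB s n)
include h

lemma commute_palindrome_of_add_two_le {k : ℕ} (hk : m + 2 ≤ k) (hkn : k < n) :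
    Commute (palindrome s m) (s k) :=
  (commute_palindrome fun j hj => (h.commute j k (by omega) hkn).symm).symm

lemma commute_palindrome_succ (hm : m + 1 < n) : Commute (palindrome s (m + 1)) (s m) := by
  cases m with
  | zero => exact h.braid_zero_one hm
  | succ m =>
    set x := s (m + 1)
    set y := s (m + 2)
    set p := palindrome s m
    have hc : p * y = y * p := h.commute_palindrome_of_add_two_le le_rfl hm
    have hxy : x * y * x = y * x * y := h.braid_succ (m + 1) (by omega) hm
    calc y * (x * p * x) * y * x = y * x * p * (x * y * x) := by simp only [mul_assoc]
      _ = y * x * (p * y) * x * y := by rw [hxy]; simp only [mul_assoc]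
      _ = (y * x * y) * p * x * y := by rw [hc]; simp only [mul_assoc]
      _ = x * (y * (x * p * x) * y) := by rw [← hxy]; simp only [mul_assoc]

lemma commute_palindrome_of_lt {k : ℕ} (hk : k < m) (hm : m < n) :
    Commute (palindrome s m) (s k) := by
  induction m with
  | zero => omega
  | succ m ih =>
    rcases Nat.lt_succ_iff_lt_or_eq.1 hk with hkm | rfl
    · have hfar : Commute (s (m + 1)) (s k) := (h.commute k (m + 1) (by omega) hm).symm
      exact (hfar.mul_left (ih hkm (by omega))).mul_left hfar
    · exact h.commute_palindrome_succ hm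

lemma commute_palindrome_mul_palindrome (hm : m + 1 < n) :
    Commute (palindrome s (m + 1) * palindrome s m) (s (m + 1)) := by
  have hcomm : Commute (palindrome s (m + 1)) (palindrome s m) :=
    commute_palindrome fun k hk => h.commute_palindrome_of_lt (by omega) hm
  calc palindrome s (m + 1) * palindrome s m * s (m + 1)
      = s (m + 1) * (palindrome s m * palindrome s (m + 1)) := by
        simp only [palindrome, mul_assoc]
    _ = s (m + 1) * (palindrome s (m + 1) * palindrome s m) := by rw [hcomm.eq]

lemma commute_longestWord {k : ℕ} (hk : k < m) (hm : m ≤ n) :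
    Commute (longestWord s m) (s k) := by
  induction m with
  | zero => omega
  | succ m ih =>
    rcases Nat.lt_succ_iff_lt_or_eq.1 hk with hkm | rfl
    · exact (h.commute_palindrome_of_lt hkm hm).mul_left (ih hkm (by omega))
    · cases k with
      | zero => exact Commute.mul_left (Commute.refl _) (Commute.one_left _)
      | succ k =>
        have hfar : Commute (longestWord s k) (s (k + 1)) :=
          (_root_.commute_longestWord fun j hj => (h.commute j (k + 1) (by omega) hm).symm).symm
        simpa only [longestWord, mul_assoc] using
          (h.commute_palindrome_mul_palindrome hm).mul_left hfar

end IsBraidB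

section CommMonoid

variable {N : Type*} [CommMonoid N] {x : ℕ → N}

lemma palindrome_eq_prod_mul_pow (hx : ∀ i, 1 ≤ i → i < m → x i = x (i + 1)) :
    palindrome x m = (∏ i ∈ Finset.range m, x i) * x m ^ (m + 1) := by
  induction m with
  | zero => simp [palindrome]
  | succ m ih =>
    rw [palindrome, ih fun i h1 hi => hx i h1 (by omega), Finset.prod_range_succ]
    rcases Nat.eq_zero_or_pos m with rfl | hm
    · simp [pow_two, mul_comm, mul_left_comm]
    · rw [hx m hm (by omega), pow_succ _ (m + 1)]
      ac_rfl

/-- In a commutative quotient all generators but `s 0` become equal, and each of the `n`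
generators `s 0, …, s (n - 1)` then accounts for `n` of the `n ^ 2` letters. -/
lemma longestWord_eq_prod_pow (hx : ∀ i, 1 ≤ i → i + 1 < n → x i = x (i + 1)) :
    longestWord x n = (∏ i ∈ Finset.range n, x i) ^ n := by
  induction n with
  | zero => simp [longestWord]
  | succ n ih =>
    rw [longestWord, ih fun i h1 hi => hx i h1 (by omega),
      palindrome_eq_prod_mul_pow fun i h1 hi => hx i h1 (by omega), Finset.prod_range_succ,
      mul_pow, pow_succ (∏ i ∈ Finset.range n, x i) n]
    ac_rfl

end CommMonoid

end BraidWords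

section Determinants

variable {K E : Type*} [Field K] [AddCommGroup E] [Module K E]

lemma det_eq_of_sub_mul_sub_eq_zero [FiniteDimensional K E] {f : End K E} {a b : K}
    (h : (f - a • 1) * (f - b • 1) = 0) :
    LinearMap.det f = a ^ finrank K (f.eigenspace a) * b ^ finrank K (E ⧸ f.eigenspace a) := by
  set U := f.eigenspace a
  have hmem : ∀ x ∈ U, f x = a • x := fun x hx => End.mem_eigenspace_iff.1 hx
  have hU : U ≤ U.comap f := fun x hx => by
    rw [Submodule.mem_comap, hmem x hx]; exact U.smul_mem a hx
  have hmaps : ∀ x ∈ U, f x ∈ U := hU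
  have hsub : f.restrict hmaps = a • LinearMap.id := by
    ext x; exact hmem x x.2
  have hquot : U.mapQ U f hU = b • LinearMap.id := by
    ext x
    have hx : f x - b • x ∈ U := End.mem_eigenspace_iff.2 <| sub_eq_zero.1 <| by
      simpa using congr($h x)
    simpa using (Submodule.Quotient.eq U).2 hx
  have hsubdet : LinearMap.det (f.restrict hmaps) = a ^ finrank K U := by
    rw [hsub, LinearMap.det_smul, LinearMap.det_id, mul_one]
  rw [LinearMap.det_eq_det_mul_det U f hU, hquot, LinearMap.det_smul, LinearMap.det_id, mul_one]
  exact congrArg (· * _) hsubdet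

variable {ι : Type*} {U : ι → Submodule K E}

lemma pi_mkQ_injective_of_iInf_eq_bot (hU : ⨅ i, U i = ⊥) :
    Function.Injective (LinearMap.pi fun i => (U i).mkQ) := by
  rw [← LinearMap.ker_eq_bot, LinearMap.ker_pi]
  simpa using hU

variable [Fintype ι] [FiniteDimensional K E]

lemma finrank_pi_quotient_add_sum_finrank (U : ι → Submodule K E) :
    finrank K (Π i, E ⧸ U i) + ∑ i, finrank K (U i) = Fintype.card ι * finrank K E := by
  rw [Module.finrank_pi_fintype, ← Finset.sum_add_distrib]
  simp [Submodule.finrank_quotient_add_finrank]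

lemma sum_finrank_add_finrank_le_of_iInf_eq_bot (hU : ⨅ i, U i = ⊥) :
    ∑ i, finrank K (U i) + finrank K E ≤ Fintype.card ι * finrank K E := by
  have hle := LinearMap.finrank_le_finrank_of_injective (pi_mkQ_injective_of_iInf_eq_bot hU)
  have hsum := finrank_pi_quotient_add_sum_finrank U
  omega

/-- Equality makes the diagonal map `E → Π i, E ⧸ U i` bijective; the summands are the preimages of
the coordinates. -/
lemma exists_sum_eq_of_sum_finrank_add_finrank_eq (hU : ⨅ i, U i = ⊥)
    (hdim : ∑ i, finrank K (U i) + finrank K E = Fintype.card ι * finrank K E) (x : E) :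
    ∃ w : ι → E, x = ∑ i, w i ∧ ∀ i j, j ≠ i → w i ∈ U j := by
  set φ := LinearMap.pi fun i => (U i).mkQ
  have hinj : Function.Injective φ := pi_mkQ_injective_of_iInf_eq_bot hU
  have hsurj : Function.Surjective φ :=
    (LinearMap.injective_iff_surjective_of_finrank_eq_finrank (by
      have := finrank_pi_quotient_add_sum_finrank U; omega)).1 hinj
  choose w hw using fun i => hsurj (Pi.single i ((U i).mkQ x))
  refine ⟨w, hinj ?_, fun i j hji => ?_⟩
  · rw [map_sum, Finset.sum_congr rfl fun i _ => hw i]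
    exact (Finset.univ_sum_single (φ x)).symm
  · have hj : (U j).mkQ (w i) = 0 := (congrFun (hw i) j).trans (Pi.single_eq_of_ne hji _)
    simpa using hj

end Determinants

section Hecke

/-- The elements `s 0, …, s (n - 1)` of an algebra satisfy the defining relations of the
Iwahori–Hecke algebra of type `B_n` with all parameters equal to `q`. -/
structure IsHeckeB {R A : Type*} [CommRing R] [Ring A] [Algebra R A] (s : ℕ → A) (n : ℕ) (q : R) :
    Prop where
  braid : IsBraidB s n
  quad : ∀ i < n, s i * s i = (q - 1) • s i + q • 1

namespace IsHeckeB

lemma map {R A A' : Type*} [CommRing R] [Ring A] [Algebra R A] [Ring A'] [Algebra R A']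
    {s : ℕ → A} {n : ℕ} {q : R} (H : IsHeckeB s n q) (f : A →ₐ[R] A') :
    IsHeckeB (fun i => f (s i)) n q where
  braid :=
    { commute := fun i j hij hj => (H.braid.commute i j hij hj).map f
      braid_succ := fun i hi hin => by
        simpa only [map_mul] using congr(f $(H.braid.braid_succ i hi hin))
      braid_zero_one := fun hn => by
        simpa only [map_mul] using congr(f $(H.braid.braid_zero_one hn)) }
  quad := fun i hi => by
    simpa only [map_mul, map_add, map_smul, map_one] using congr(f $(H.quad i hi))

variable {E : Type*} [AddCommGroup E] [Module ℝ E] {s : ℕ → End ℝ E} {n : ℕ} {q μ : ℝ}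

section Restrict

variable {W : Submodule ℝ E} {t : ℕ → End ℝ W}

lemma exists_restrict (hW : ∀ i < n, ∀ y ∈ W, s i y ∈ W) :
    ∃ t : ℕ → End ℝ W, ∀ i < n, ∀ y : W, (t i y : E) = s i y :=
  ⟨fun i => if hi : i < n then (s i).restrict (hW i hi) else 0, fun i hi y => by
    simp only [dif_pos hi]; rfl⟩

lemma restrict (H : IsHeckeB s n q) (ht : ∀ i < n, ∀ y : W, (t i y : E) = s i y) :
    IsHeckeB t n q where
  braid :=
    { commute := fun i j hij hj => LinearMap.ext fun y => Subtype.ext <| by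
        simpa [ht i (by omega), ht j hj] using congr($(H.braid.commute i j hij hj) y)
      braid_succ := fun i hi hin => LinearMap.ext fun y => Subtype.ext <| by
        simpa [ht i (by omega), ht (i + 1) hin] using congr($(H.braid.braid_succ i hi hin) y)
      braid_zero_one := fun hn => LinearMap.ext fun y => Subtype.ext <| by
        simpa [ht 0 (by omega), ht 1 hn] using congr($(H.braid.braid_zero_one hn) y) }
  quad := fun i hi => LinearMap.ext fun y => Subtype.ext <| by
    simpa [ht i hi] using congr($(H.quad i hi) y)

lemma longestWord_restrict (ht : ∀ i < n, ∀ y : W, (t i y : E) = s i y) (y : W) :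
    (longestWord t n y : E) = longestWord s n y := by
  let S : Submonoid (End ℝ W × End ℝ E) :=
    { carrier := {p | ∀ y : W, (p.1 y : E) = p.2 y}
      mul_mem' := fun {a b} ha hb y => (ha (b.1 y)).trans (congrArg a.2 (hb y))
      one_mem' := fun _ => rfl }
  have hmem : longestWord (fun i => (t i, s i)) n ∈ S := longestWord_mem ht
  have hfst := map_longestWord (n := n) (s := fun i => (t i, s i)) (MonoidHom.fst _ _)
  have hsnd := map_longestWord (n := n) (s := fun i => (t i, s i)) (MonoidHom.snd _ _)
  rw [show longestWord t n = _ from hfst.symm, show longestWord s n = _ from hsnd.symm]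
  exact hmem y

end Restrict

section Scalar

variable [FiniteDimensional ℝ E] (H : IsHeckeB s n q)
include H

lemma abs_det (hq : 0 ≤ q) {i : ℕ} (hi : i < n) :
    |LinearMap.det (s i)| = q ^ finrank ℝ ((s i).eigenspace q) := by
  have h : (s i - q • 1) * (s i - (-1 : ℝ) • 1) = 0 := by
    simp only [sub_mul, mul_sub, H.quad i hi, mul_smul_comm, smul_mul_assoc, mul_one, one_mul]
    module
  rw [det_eq_of_sub_mul_sub_eq_zero h, abs_mul, abs_pow, abs_pow, abs_neg, abs_one, one_pow,
    mul_one, abs_of_nonneg hq]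

lemma abs_det_longestWord (hq : 0 < q) :
    |LinearMap.det (longestWord s n)| =
      q ^ (n * ∑ i : Fin n, finrank ℝ ((s i).eigenspace q)) := by
  let f : End ℝ E →* ℝ := (absHom : ℝ →*₀ ℝ).toMonoidHom.comp LinearMap.det
  have hf : ∀ i < n, f (s i) = q ^ finrank ℝ ((s i).eigenspace q) := fun i hi =>
    H.abs_det hq.le hi
  have hconst : ∀ i, 1 ≤ i → i + 1 < n → f (s i) = f (s (i + 1)) := fun i hi hin => by
    have hne : ∀ j < n, f (s j) ≠ 0 := fun j hj => by rw [hf j hj]; positivity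
    have hbraid : f (s i) * f (s (i + 1)) * f (s i) = f (s (i + 1)) * f (s i) * f (s (i + 1)) := by
      simpa only [map_mul] using congr(f $(H.braid.braid_succ i hi hin))
    refine mul_left_cancel₀ (mul_ne_zero (hne i (by omega)) (hne (i + 1) hin)) ?_
    rw [hbraid, mul_comm (f (s i))]
  calc f (longestWord s n) = (∏ i ∈ Finset.range n, f (s i)) ^ n := by
        rw [map_longestWord, longestWord_eq_prod_pow hconst]
    _ = _ := by
        rw [Finset.prod_range, Finset.prod_congr rfl fun (i : Fin n) _ => hf i i.2,
          Finset.prod_pow_eq_pow_sum, ← pow_mul, mul_comm]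

lemma abs_pow_finrank_of_longestWord_eq_smul_one (hq : 0 < q) (hμ : longestWord s n = μ • 1) :
    |μ| ^ finrank ℝ E = q ^ (n * ∑ i : Fin n, finrank ℝ ((s i).eigenspace q)) := by
  rw [← H.abs_det_longestWord hq, hμ, LinearMap.det_smul, map_one, mul_one, abs_pow]

lemma abs_le_of_longestWord_eq_smul_one [Nontrivial E] (hq : 1 < q)
    (hfix : ⨅ i : Fin n, (s i).eigenspace q = ⊥) (hμ : longestWord s n = μ • 1) :
    |μ| ≤ q ^ (n * (n - 1)) := by
  have hdim := sum_finrank_add_finrank_le_of_iInf_eq_bot hfix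
  rw [Fintype.card_fin] at hdim
  rw [← pow_le_pow_iff_left₀ (abs_nonneg μ) (by positivity) (finrank_pos (R := ℝ) (M := E)).ne',
    H.abs_pow_finrank_of_longestWord_eq_smul_one (by linarith) hμ, ← pow_mul, mul_assoc,
    Nat.sub_mul, one_mul]
  exact pow_le_pow_right₀ hq.le (Nat.mul_le_mul_left _ (by omega))

lemma exists_sum_eq_of_longestWord_eq_smul_one [Nontrivial E] (hq : 1 < q)
    (hfix : ⨅ i : Fin n, (s i).eigenspace q = ⊥) (hμ : longestWord s n = μ • 1)
    (hμq : |μ| = q ^ (n * (n - 1))) (x : E) :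
    ∃ w : Fin n → E, x = ∑ i, w i ∧ ∀ i j : Fin n, j ≠ i → w i ∈ (s j).eigenspace q := by
  refine exists_sum_eq_of_sum_finrank_add_finrank_eq hfix ?_ x
  have hle := sum_finrank_add_finrank_le_of_iInf_eq_bot hfix
  have hpow := H.abs_pow_finrank_of_longestWord_eq_smul_one (by linarith) hμ
  rw [hμq, ← pow_mul, mul_assoc] at hpow
  have hexp := pow_right_injective₀ (by linarith) hq.ne' hpow
  rw [Fintype.card_fin] at hle ⊢
  have hd : 0 < finrank ℝ E := finrank_pos
  have hn : 0 < n := Nat.pos_of_ne_zero fun h => by simp [h] at hle; omega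
  have hsum := Nat.eq_of_mul_eq_mul_left hn hexp
  rw [← hsum, ← Nat.succ_mul, Nat.succ_eq_add_one, Nat.sub_add_cancel hn]

end Scalar

lemma exists_eigenspace_restrict (H : IsHeckeB s n q)
    (hfix : ∀ x ∈ (longestWord s n).eigenspace μ, (∀ i < n, s i x = q • x) → x = 0) :
    ∃ t : ℕ → End ℝ ((longestWord s n).eigenspace μ),
      (∀ i < n, ∀ y, (t i y : E) = s i y) ∧ IsHeckeB t n q ∧
      ⨅ i : Fin n, (t i).eigenspace q = ⊥ ∧ longestWord t n = μ • 1 := by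
  obtain ⟨t, ht⟩ := exists_restrict (s := s) (n := n) (W := (longestWord s n).eigenspace μ)
    fun i hi y hy => End.mem_eigenspace_iff.2 <| by
      have hcomm := congr($(H.braid.commute_longestWord hi le_rfl) y)
      rw [End.mul_apply, End.mul_apply, End.mem_eigenspace_iff.1 hy, map_smul] at hcomm
      exact hcomm
  refine ⟨t, ht, H.restrict ht, ?_, LinearMap.ext fun y => Subtype.ext ?_⟩
  · refine (Submodule.eq_bot_iff _).2 fun y hy => Subtype.ext <| hfix y y.2 fun i hi => ?_
    rw [← ht i hi, End.mem_eigenspace_iff.1 ((Submodule.mem_iInf _).1 hy ⟨i, hi⟩)]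
    rfl
  · rw [longestWord_restrict ht, End.mem_eigenspace_iff.1 y.2]
    rfl

variable [FiniteDimensional ℝ E]

lemma abs_eigenvalue_le (H : IsHeckeB s n q) (hq : 1 < q) (hμ : (longestWord s n).HasEigenvalue μ)
    (hfix : ∀ x ∈ (longestWord s n).eigenspace μ, (∀ i < n, s i x = q • x) → x = 0) :
    |μ| ≤ q ^ (n * (n - 1)) := by
  have : Nontrivial ((longestWord s n).eigenspace μ) := Submodule.nontrivial_iff_ne_bot.2 hμ
  obtain ⟨t, -, Ht, htfix, htμ⟩ := H.exists_eigenspace_restrict hfix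
  exact Ht.abs_le_of_longestWord_eq_smul_one hq htfix htμ

lemma exists_sum_eq_of_abs_eigenvalue_eq (H : IsHeckeB s n q) (hq : 1 < q)
    (hfix : ∀ x ∈ (longestWord s n).eigenspace μ, (∀ i < n, s i x = q • x) → x = 0)
    (hμq : |μ| = q ^ (n * (n - 1))) {x : E} (hx : x ∈ (longestWord s n).eigenspace μ) :
    ∃ w : Fin n → E, x = ∑ i, w i ∧ (∀ i, w i ∈ (longestWord s n).eigenspace μ) ∧
      ∀ i j : Fin n, j ≠ i → s j (w i) = q • w i := by
  rcases eq_or_ne x 0 with rfl | hx0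
  · exact ⟨0, by simp, fun _ => zero_mem _, by simp⟩
  have : Nontrivial ((longestWord s n).eigenspace μ) :=
    ⟨⟨x, hx⟩, 0, fun h => hx0 congr(Subtype.val $h)⟩
  obtain ⟨t, ht, Ht, htfix, htμ⟩ := H.exists_eigenspace_restrict hfix
  obtain ⟨w, hsum, hw⟩ :=
    Ht.exists_sum_eq_of_longestWord_eq_smul_one hq htfix htμ hμq ⟨x, hx⟩
  refine ⟨fun i => w i, by simpa using congr(Subtype.val $hsum), fun i => (w i).2,
    fun i j hij => ?_⟩
  rw [← ht j j.2, End.mem_eigenspace_iff.1 (hw i j hij)]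
  rfl

end IsHeckeB

end Hecke

section Hoffman

open Matrix

variable {X : Type*} [Fintype X] {A : Matrix X X ℝ} {k m : ℝ} {S : Set X}

lemma indicator_one_dotProduct (S : Set X) (f : X → ℝ) :
    S.indicator 1 ⬝ᵥ f = ∑ x ∈ S.toFinset, f x := by
  simp [dotProduct, Set.indicator_apply, Finset.sum_ite, Set.filter_mem_univ_eq_toFinset]

/-- The vector to which Hoffman's argument applies the positive semidefinite matrix `A + m`. -/
lemma add_smul_one_mulVec_indicator_sub (hrow : A *ᵥ 1 = k • 1) (hkm : k + m ≠ 0) :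
    (A + m • (1 : Matrix X X ℝ)) *ᵥ (S.indicator 1 - (m / (k + m)) • 1) =
      A *ᵥ S.indicator 1 - m • (1 - S.indicator 1) := by
  have hc : m / (k + m) * k = m - m * (m / (k + m)) := by field_simp; ring
  rw [mulVec_sub, add_mulVec, mulVec_smul, add_mulVec, smul_mulVec, smul_mulVec, one_mulVec,
    one_mulVec, hrow, ← add_smul, smul_smul, mul_add, hc]
  module

lemma dotProduct_add_smul_one_mulVec_indicator_sub (hrow : A *ᵥ 1 = k • 1) (hkm : k + m ≠ 0)
    (hA : (A + m • (1 : Matrix X X ℝ)).IsHermitian) (hS : ∀ x ∈ S, ∀ y ∈ S, A x y = 0) :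
    (S.indicator 1 - (m / (k + m)) • 1) ⬝ᵥ
        (A + m • (1 : Matrix X X ℝ)) *ᵥ (S.indicator 1 - (m / (k + m)) • 1) =
      m / (k + m) * (m * Fintype.card X - (k + m) * S.ncard) := by
  set z : X → ℝ := S.indicator 1 - (m / (k + m)) • 1 with hz
  have hind : S.indicator 1 ⬝ᵥ (A + m • (1 : Matrix X X ℝ)) *ᵥ z = 0 := by
    rw [add_smul_one_mulVec_indicator_sub hrow hkm, indicator_one_dotProduct]
    refine Finset.sum_eq_zero fun x hx => ?_
    have hxS : x ∈ S := Set.mem_toFinset.1 hx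
    have hAx : (A *ᵥ S.indicator 1) x = 0 := by
      rw [mulVec, dotProduct_comm, indicator_one_dotProduct]
      exact Finset.sum_eq_zero fun y hy => hS x hxS y (Set.mem_toFinset.1 hy)
    simp [hAx, hxS]
  have hone : (1 : X → ℝ) ⬝ᵥ (A + m • (1 : Matrix X X ℝ)) *ᵥ z =
      (k + m) * S.ncard - m * Fintype.card X := by
    have hT : (A + m • (1 : Matrix X X ℝ))ᵀ = A + m • 1 := hA
    rw [dotProduct_mulVec, ← mulVec_transpose, hT, add_mulVec, hrow, smul_mulVec, one_mulVec,
      ← add_smul, smul_dotProduct, hz, dotProduct_sub, dotProduct_comm, indicator_one_dotProduct,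
      dotProduct_smul, Set.ncard_eq_toFinset_card']
    simp only [Pi.one_apply, Finset.sum_const, nsmul_eq_mul, mul_one, smul_eq_mul, dotProduct,
      Finset.card_univ]
    field_simp
  rw [hz, sub_dotProduct, ← hz, hind, smul_dotProduct, hone, smul_eq_mul]
  ring

lemma ncard_mul_le_of_posSemidef (hrow : A *ᵥ 1 = k • 1) (hk : 0 ≤ k) (hm : 0 < m)
    (hA : (A + m • (1 : Matrix X X ℝ)).PosSemidef) (hS : ∀ x ∈ S, ∀ y ∈ S, A x y = 0) :
    S.ncard * (k + m) ≤ m * Fintype.card X := by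
  have hform := dotProduct_add_smul_one_mulVec_indicator_sub hrow (by positivity) hA.isHermitian hS
  have hnonneg := hA.dotProduct_mulVec_nonneg (S.indicator 1 - (m / (k + m)) • 1)
  rw [star_trivial, hform] at hnonneg
  have := nonneg_of_mul_nonneg_right hnonneg (by positivity)
  linarith

lemma mulVec_indicator_eq_of_ncard_mul_eq (hrow : A *ᵥ 1 = k • 1) (hkm : k + m ≠ 0)
    (hA : (A + m • (1 : Matrix X X ℝ)).PosSemidef) (hS : ∀ x ∈ S, ∀ y ∈ S, A x y = 0)
    (hcard : S.ncard * (k + m) = m * Fintype.card X) :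
    A *ᵥ S.indicator 1 = m • (1 - S.indicator 1) := by
  have hform := dotProduct_add_smul_one_mulVec_indicator_sub hrow hkm hA.isHermitian hS
  rw [← hcard, mul_comm (k + m), sub_self, mul_zero] at hform
  have hker := (hA.dotProduct_mulVec_zero_iff _).1 (by rwa [star_trivial])
  rw [add_smul_one_mulVec_indicator_sub hrow hkm] at hker
  exact sub_eq_zero.1 hker

end Hoffman

section HeckeMatrices

open Matrix

variable {X : Type*} [Fintype X] {s : ℕ → Matrix X X ℝ} {n : ℕ} {q : ℝ}

lemma pow_sq_eq_mul {R : Type*} [Monoid R] (q : R) (n : ℕ) :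
    q ^ (n ^ 2) = q ^ (n * (n - 1)) * q ^ n := by
  rw [← pow_add, sq, Nat.mul_sub, mul_one, Nat.sub_add_cancel (Nat.le_mul_self n)]

lemma mem_eigenspace_longestWord_toLin' {μ : ℝ} {x : X → ℝ} :
    x ∈ End.eigenspace (longestWord (fun i => ((s i).toLin' : End ℝ (X → ℝ))) n) μ ↔
      longestWord s n *ᵥ x = μ • x := by
  have hmap := map_longestWord (s := s) (n := n)
    ((toLinAlgEquiv' : Matrix X X ℝ ≃ₐ[ℝ] _) : Matrix X X ℝ →* End ℝ (X → ℝ))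
  rw [End.mem_eigenspace_iff, show longestWord (fun i => ((s i).toLin' : End ℝ (X → ℝ))) n = _ from
    hmap.symm]
  exact Iff.rfl

/-- The matrices `s 0, …, s (n - 1)` behave like the adjacency matrices of the `n` kinds of
adjacency on the chambers of a finite connected building of type `B_n` in which every panel has
`q + 1` chambers: they satisfy the Hecke relations, are symmetric with row sums `q`, and only the
constant vectors are common eigenvectors for `q`. -/
structure IsChamberHeckeB (s : ℕ → Matrix X X ℝ) (n : ℕ) (q : ℝ) : Prop extends
    IsHeckeB s n q where
  symm : ∀ i < n, (s i)ᵀ = s i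
  row_sum : ∀ i < n, s i *ᵥ 1 = q • 1
  connected : ∀ x : X → ℝ, (∀ i < n, s i *ᵥ x = q • x) → ∃ c : ℝ, x = c • 1

namespace IsChamberHeckeB

variable (H : IsChamberHeckeB s n q)
include H

lemma palindrome_mulVec_one {m : ℕ} (hm : m < n) :
    palindrome s m *ᵥ 1 = q ^ (2 * m + 1) • (1 : X → ℝ) := by
  induction m with
  | zero => simpa [palindrome] using H.row_sum 0 hm
  | succ m ih =>
    simp only [palindrome, ← mulVec_mulVec, H.row_sum _ hm, mulVec_smul, ih (by omega), smul_smul]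
    ring_nf

lemma longestWord_mulVec_one {m : ℕ} (hm : m ≤ n) :
    longestWord s m *ᵥ 1 = q ^ (m ^ 2) • (1 : X → ℝ) := by
  induction m with
  | zero => simp [longestWord]
  | succ m ih =>
    simp only [longestWord, ← mulVec_mulVec, mulVec_smul, ih (by omega), smul_smul,
      H.palindrome_mulVec_one hm]
    ring_nf

lemma palindrome_transpose {m : ℕ} (hm : m < n) : (palindrome s m)ᵀ = palindrome s m := by
  induction m with
  | zero => exact H.symm 0 hm
  | succ m ih => simp only [palindrome, transpose_mul, H.symm _ hm, ih (by omega), mul_assoc]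

lemma longestWord_transpose {m : ℕ} (hm : m ≤ n) : (longestWord s m)ᵀ = longestWord s m := by
  induction m with
  | zero => exact transpose_one
  | succ m ih =>
    have hcomm : Commute (palindrome s m) (longestWord s m) :=
      commute_longestWord fun k hk => H.braid.commute_palindrome_of_lt hk hm
    rw [longestWord, transpose_mul, H.palindrome_transpose hm, ih (by omega), hcomm.eq]

lemma toLin' : IsHeckeB (fun i => ((s i).toLin' : End ℝ (X → ℝ))) n q :=
  H.toIsHeckeB.map (toLinAlgEquiv' : Matrix X X ℝ ≃ₐ[ℝ] _).toAlgHom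

lemma eq_zero_of_mem_eigenspace {μ : ℝ} (hμ : μ ≠ q ^ (n ^ 2)) {x : X → ℝ}
    (hx : longestWord s n *ᵥ x = μ • x) (hfix : ∀ i < n, s i *ᵥ x = q • x) : x = 0 := by
  obtain ⟨c, rfl⟩ := H.connected x hfix
  rw [mulVec_smul, H.longestWord_mulVec_one le_rfl, smul_comm, ← sub_eq_zero, ← sub_smul] at hx
  exact (smul_eq_zero.1 hx).resolve_left (sub_ne_zero.2 hμ.symm)

lemma abs_eigenvalue_le (hq : 1 < q) {μ : ℝ} (hμ : μ ≠ q ^ (n ^ 2)) {x : X → ℝ} (hx0 : x ≠ 0)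
    (hx : longestWord s n *ᵥ x = μ • x) : |μ| ≤ q ^ (n * (n - 1)) :=
  H.toLin'.abs_eigenvalue_le hq
    (End.hasEigenvalue_of_hasEigenvector ⟨mem_eigenspace_longestWord_toLin'.2 hx, hx0⟩)
    fun _ hy => H.eq_zero_of_mem_eigenspace hμ (mem_eigenspace_longestWord_toLin'.1 hy)

lemma longestWord_add_smul_one_posSemidef (hq : 1 < q) :
    (longestWord s n + q ^ (n * (n - 1)) • (1 : Matrix X X ℝ)).PosSemidef := by
  have hH : (longestWord s n + q ^ (n * (n - 1)) • (1 : Matrix X X ℝ)).IsHermitian := by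
    rw [IsHermitian, conjTranspose_eq_transpose_of_trivial, transpose_add, transpose_smul,
      transpose_one, H.longestWord_transpose le_rfl]
  rw [hH.posSemidef_iff_eigenvalues_nonneg]
  intro j
  set v : X → ℝ := (hH.eigenvectorBasis j).ofLp
  set l := hH.eigenvalues j
  have hv0 : v ≠ 0 := fun h0 =>
    hH.eigenvectorBasis.orthonormal.ne_zero j (WithLp.ofLp_injective 2 h0)
  have hv : longestWord s n *ᵥ v = (l - q ^ (n * (n - 1))) • v := by
    have hl := hH.mulVec_eigenvectorBasis j
    rw [add_mulVec, smul_mulVec, one_mulVec] at hl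
    rw [sub_smul]
    exact eq_sub_of_add_eq hl
  change 0 ≤ l
  by_cases htriv : l - q ^ (n * (n - 1)) = q ^ (n ^ 2)
  · rw [sub_eq_iff_eq_add.1 htriv]; positivity
  · linarith [(abs_le.1 (H.abs_eigenvalue_le hq htriv hv0 hv)).1]

variable {S : Set X}

lemma ncard_mul_le (hq : 1 < q) (hS : ∀ x ∈ S, ∀ y ∈ S, longestWord s n x y = 0) :
    S.ncard * (q ^ n + 1) ≤ Fintype.card X := by
  have hm : 0 < q ^ (n * (n - 1)) := by positivity
  have hle := ncard_mul_le_of_posSemidef (H.longestWord_mulVec_one le_rfl) (by positivity) hm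
    (H.longestWord_add_smul_one_posSemidef hq) hS
  rw [pow_sq_eq_mul] at hle
  exact le_of_mul_le_mul_left (by linarith) hm

lemma longestWord_mulVec_indicator (hq : 1 < q)
    (hS : ∀ x ∈ S, ∀ y ∈ S, longestWord s n x y = 0)
    (hcard : S.ncard * (q ^ n + 1) = Fintype.card X) :
    longestWord s n *ᵥ S.indicator 1 = q ^ (n * (n - 1)) • (1 - S.indicator 1) := by
  refine mulVec_indicator_eq_of_ncard_mul_eq (H.longestWord_mulVec_one le_rfl) (by positivity)
    (H.longestWord_add_smul_one_posSemidef hq) hS ?_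
  rw [pow_sq_eq_mul, ← hcard]
  ring

lemma exists_sub_smul_one_eq_sum (hq : 1 < q) {f : X → ℝ} {d : ℝ}
    (hf : longestWord s n *ᵥ f = q ^ (n * (n - 1)) • (d • 1 - f)) :
    ∃ w : Fin n → X → ℝ, f - (d / (q ^ n + 1)) • 1 = ∑ i, w i ∧
      (∀ i, longestWord s n *ᵥ w i = -q ^ (n * (n - 1)) • w i) ∧
      ∀ i j : Fin n, j ≠ i → s j *ᵥ w i = q • w i := by
  have hm : 0 < q ^ (n * (n - 1)) := by positivity
  have hy : longestWord s n *ᵥ (f - (d / (q ^ n + 1)) • 1) =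
      (-q ^ (n * (n - 1))) • (f - (d / (q ^ n + 1)) • 1) := by
    have hc : d / (q ^ n + 1) * q ^ n = d - d / (q ^ n + 1) := by field_simp; ring
    rw [mulVec_sub, hf, mulVec_smul, H.longestWord_mulVec_one le_rfl, pow_sq_eq_mul, smul_smul,
      mul_left_comm, hc]
    module
  obtain ⟨w, hsum, hw, hfix⟩ := H.toLin'.exists_sum_eq_of_abs_eigenvalue_eq hq
    (fun _ hx => H.eq_zero_of_mem_eigenspace
      (ne_of_lt (lt_trans (neg_neg_of_pos hm) (by positivity)))
      (mem_eigenspace_longestWord_toLin'.1 hx))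
    (by rw [abs_neg, abs_of_pos hm]) (mem_eigenspace_longestWord_toLin'.2 hy)
  exact ⟨w, hsum, fun i => mem_eigenspace_longestWord_toLin'.1 (hw i), hfix⟩

end IsChamberHeckeB

end HeckeMatrices

section Pencils

variable {F V : Type*} [Field F] [AddCommGroup V] [Module F V]
  {A S T U : Submodule F V} {k : ℕ}

lemma mem_sup_span_singleton_iff {v x : V} :
    x ∈ S ⊔ Submodule.span F {v} ↔ ∃ w ∈ S, ∃ a : F, w + a • v = x := by
  simp [Submodule.mem_sup, Submodule.mem_span_singleton]

lemma notMem_sup_span_singleton_sub (hAS : A ≤ S) (hAT : A ≤ T) {p p' : V}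
    (hpS : p ∈ S) (hpT : p ∉ T) (hp'S : p' ∉ S) : p ∉ A ⊔ Submodule.span F {p' - p} := by
  intro hp
  obtain ⟨w, hw, a, hwa⟩ := mem_sup_span_singleton_iff.1 hp
  obtain rfl | ha := eq_or_ne a 0
  · rw [zero_smul, add_zero] at hwa
    exact hpT (hAT (hwa ▸ hw))
  · have hp' : p' - p = a⁻¹ • (p - w) := by
      rw [eq_inv_smul_iff₀ ha, eq_sub_iff_add_eq', hwa]
    exact hp'S ((Submodule.sub_mem_iff_left S hpS).1
      (hp' ▸ Submodule.smul_mem S _ (Submodule.sub_mem S hpS (hAS hw))))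

variable [FiniteDimensional F V]

lemma sup_span_singleton_eq_of_finrank_eq_add_one
    (hAS : A ≤ S) (hS : finrank F S = finrank F A + 1) {p : V} (hpS : p ∈ S) (hpA : p ∉ A) :
    A ⊔ Submodule.span F {p} = S :=
  Submodule.eq_of_le_of_finrank_eq
    (sup_le hAS ((Submodule.span_singleton_le_iff_mem _ _).2 hpS))
    ((Submodule.finrank_sup_span_singleton hpA).trans hS.symm)

lemma eq_of_finrank_le_finrank_inf (hS : finrank F S ≤ finrank F ↥(S ⊓ T))
    (hT : finrank F T ≤ finrank F ↥(S ⊓ T)) : S = T :=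
  (Submodule.eq_of_le_of_finrank_le inf_le_left hS).symm.trans
    (Submodule.eq_of_le_of_finrank_le inf_le_right hT)

lemma inf_eq_of_finrank_eq_add_one (hA : finrank F A = k) (hS : finrank F S = k + 1)
    (hT : finrank F T = k + 1) (hAS : A ≤ S) (hAT : A ≤ T) (hne : S ≠ T) : S ⊓ T = A := by
  refine (Submodule.eq_of_le_of_finrank_le (le_inf hAS hAT) ?_).symm
  by_contra! hlt
  exact hne (eq_of_finrank_le_finrank_inf (by omega) (by omega))

lemma finrank_sup_of_finrank_eq_add_one (hA : finrank F A = k) (hS : finrank F S = k + 1)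
    (hT : finrank F T = k + 1) (hAS : A ≤ S) (hAT : A ≤ T) (hne : S ≠ T) :
    finrank F ↥(S ⊔ T) = k + 2 := by
  have := Submodule.finrank_sup_add_finrank_inf_eq S T
  rw [inf_eq_of_finrank_eq_add_one hA hS hT hAS hAT hne] at this
  omega

lemma finrank_inf_and_sup_eq_of_finrank_eq_add_two (hU : finrank F U = k + 2)
    (hS : finrank F S = k + 1) (hT : finrank F T = k + 1) (hSU : S ≤ U) (hTU : T ≤ U)
    (hne : S ≠ T) : finrank F ↥(S ⊓ T) = k ∧ S ⊔ T = U := by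
  have hadd := Submodule.finrank_sup_add_finrank_inf_eq S T
  have hsup : finrank F ↥(S ⊔ T) ≤ k + 2 := hU ▸ Submodule.finrank_mono (sup_le hSU hTU)
  have hinf : ¬ k + 1 ≤ finrank F ↥(S ⊓ T) := fun hle =>
    hne (eq_of_finrank_le_finrank_inf (by omega) (by omega))
  exact ⟨by omega, Submodule.eq_of_le_of_finrank_le (sup_le hSU hTU) (by omega)⟩

lemma finrank_inf_add_one_of_not_le (hU : finrank F U = finrank F S + 1) (hSU : S ≤ U) (hAU : A ≤ U)
    (hAS : ¬ A ≤ S) : finrank F ↥(A ⊓ S) + 1 = finrank F A := by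
  have hadd := Submodule.finrank_sup_add_finrank_inf_eq A S
  have hsup : finrank F ↥(A ⊔ S) ≤ finrank F U := Submodule.finrank_mono (sup_le hAU hSU)
  have hinf := Submodule.finrank_lt_finrank_of_lt (inf_lt_left.2 hAS)
  omega

lemma exists_finrank_eq_add_one_not_le (hAU : A ≤ U) (hAT : A ≤ T) (hUT : ¬ U ≤ T) :
    ∃ S, A ≤ S ∧ S ≤ U ∧ ¬ S ≤ T ∧ finrank F S = finrank F A + 1 := by
  obtain ⟨v, hvU, hvT⟩ := SetLike.not_le_iff_exists.1 hUT
  exact ⟨A ⊔ Submodule.span F {v}, le_sup_left,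
    sup_le hAU ((Submodule.span_singleton_le_iff_mem _ _).2 hvU),
    fun h => hvT (h (Submodule.mem_sup_right (Submodule.mem_span_singleton_self v))),
    Submodule.finrank_sup_span_singleton fun h => hvT (hAT h)⟩

lemma exists_le_le_finrank_eq (hAU : A ≤ U) (hA : finrank F A ≤ k) (hU : k ≤ finrank F U) :
    ∃ S, A ≤ S ∧ S ≤ U ∧ finrank F S = k := by
  induction k, hA using Nat.le_induction with
  | base => exact ⟨A, le_rfl, hAU, rfl⟩
  | succ k _ ih =>
    obtain ⟨S, hAS, hSU, hS⟩ := ih (by omega)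
    obtain ⟨S', hSS', hS'U, -, hS'⟩ := exists_finrank_eq_add_one_not_le hSU le_rfl fun h => by
      have := Submodule.finrank_mono h
      omega
    exact ⟨S', hAS.trans hSS', hS'U, by omega⟩

lemma exists_finrank_add_one_eq_notMem {v : V} (hAU : A ≤ U) (hvU : v ∈ U) (hvA : v ∉ A) :
    ∃ T, A ≤ T ∧ T ≤ U ∧ v ∉ T ∧ finrank F T + 1 = finrank F U := by
  obtain ⟨f, hfv, hAf⟩ := Submodule.exists_le_ker_of_notMem hvA
  have hf : f ≠ 0 := by
    rintro rfl
    exact hfv rfl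
  have hker := Module.Dual.finrank_ker_add_one_of_ne_zero hf
  rw [← finrank_top F V] at hker
  exact ⟨U ⊓ LinearMap.ker f, le_inf hAU hAf, inf_le_left, fun h => hfv h.2,
    finrank_inf_add_one_of_not_le hker.symm le_top le_top fun h => hfv (h hvU)⟩

end Pencils

section SymplecticSpaces

variable {F V : Type} [Field F] [AddCommGroup V] [Module F V] {B : V →ₗ[F] V →ₗ[F] F} {n : ℕ}

lemma mem_bperp {W : Submodule F V} {v : V} : v ∈ bperp B W ↔ ∀ w ∈ W, B w v = 0 := by
  simp [bperp, Submodule.mem_iInf]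

lemma bperp_anti {W U : Submodule F V} (h : W ≤ U) : bperp B U ≤ bperp B W :=
  fun _ hv => mem_bperp.2 fun w hw => mem_bperp.1 hv w (h hw)

lemma spaceOpp_iff {S T : Submodule F V} :
    SpaceOpp B S T ↔ ∀ v ∈ T, (∀ w ∈ S, B w v = 0) → v = 0 := by
  rw [SpaceOpp, Submodule.eq_bot_iff]
  simp only [Submodule.mem_inf, mem_bperp]
  exact ⟨fun h v hv hw => h v ⟨hw, hv⟩, fun h v hv => h v hv.2 hv.1⟩

lemma isTotIso_bot : IsTotIso B ⊥ := by
  rintro u hu w -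
  rw [(Submodule.mem_bot F).1 hu, map_zero, LinearMap.zero_apply]

lemma isTotIso_iff_le_bperp {W : Submodule F V} : IsTotIso B W ↔ W ≤ bperp B W :=
  ⟨fun h v hv => mem_bperp.2 fun w hw => h w hw v hv, fun h u hu _ hw => mem_bperp.1 (h hw) u hu⟩

lemma IsTotIso.mono {S T : Submodule F V} (h : IsTotIso B T) (hST : S ≤ T) : IsTotIso B S :=
  fun u hu w hw => h u (hST hu) w (hST hw)

/-- `V` together with the form `B` is a symplectic space of rank `n`. -/
structure IsSymplectic (B : V →ₗ[F] V →ₗ[F] F) (n : ℕ) : Prop where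
  alt : IsAltForm B
  nondeg : NondegForm B
  finiteDimensional : FiniteDimensional F V
  finrank_eq : finrank F V = 2 * n

namespace IsSymplectic

variable (hB : IsSymplectic B n)
include hB

lemma apply_eq_neg (u v : V) : B u v = -B v u := by
  have h := hB.alt (u + v)
  simp only [map_add, LinearMap.add_apply, hB.alt u, hB.alt v] at h
  linear_combination h

lemma apply_eq_zero_symm {u v : V} (h : B u v = 0) : B v u = 0 := by
  rw [hB.apply_eq_neg, h, neg_zero]

lemma finrank_bperp_add (W : Submodule F V) :
    finrank F (bperp B W) + finrank F W = 2 * n := by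
  have := hB.finiteDimensional
  have hnd : LinearMap.BilinForm.Nondegenerate B :=
    ⟨hB.nondeg, fun v hv => hB.nondeg v fun w => hB.apply_eq_zero_symm (hv w)⟩
  have horth : LinearMap.BilinForm.orthogonal B W = bperp B W := by
    ext v
    rw [mem_bperp, LinearMap.BilinForm.mem_orthogonal_iff]
  have h := LinearMap.BilinForm.finrank_orthogonal hnd W
  have hle := Submodule.finrank_le W
  rw [horth, hB.finrank_eq] at h
  rw [hB.finrank_eq] at hle
  omega

lemma le_bperp_bperp (W : Submodule F V) : W ≤ bperp B (bperp B W) := fun v hv =>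
  mem_bperp.2 fun _ hw => hB.apply_eq_zero_symm (mem_bperp.1 hw v hv)

lemma bperp_bperp (W : Submodule F V) : bperp B (bperp B W) = W := by
  have := hB.finiteDimensional
  refine (Submodule.eq_of_le_of_finrank_eq (hB.le_bperp_bperp W) ?_).symm
  have h₁ := hB.finrank_bperp_add W
  have h₂ := hB.finrank_bperp_add (bperp B W)
  omega

lemma le_bperp_comm {W U : Submodule F V} (h : W ≤ bperp B U) : U ≤ bperp B W :=
  (hB.le_bperp_bperp U).trans (bperp_anti h)

lemma exists_mem_bperp_ne_zero {W : Submodule F V} {v : V} (hv : v ∉ W) :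
    ∃ z ∈ bperp B W, B z v ≠ 0 := by
  by_contra! h
  exact hv (hB.bperp_bperp W ▸ mem_bperp.2 h)

lemma spaceOpp_symm {S T : Submodule F V} (hd : finrank F S = finrank F T)
    (h : SpaceOpp B S T) : SpaceOpp B T S := by
  have := hB.finiteDimensional
  have htop : bperp B S ⊔ T = ⊤ := by
    have hadd := Submodule.finrank_sup_add_finrank_inf_eq (bperp B S) T
    have hS := hB.finrank_bperp_add S
    rw [show bperp B S ⊓ T = ⊥ from h, finrank_bot] at hadd
    exact Submodule.eq_top_of_finrank_eq (by rw [hB.finrank_eq]; omega)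
  refine spaceOpp_iff.2 fun v hv hvT => hB.nondeg v fun x => ?_
  obtain ⟨a, ha, b, hb, rfl⟩ := Submodule.mem_sup.1 (htop ▸ Submodule.mem_top : x ∈ bperp B S ⊔ T)
  rw [map_add, mem_bperp.1 ha v hv, hB.apply_eq_zero_symm (hvT b hb), add_zero]

lemma isTotIso_sup_span_singleton {S : Submodule F V} (h : IsTotIso B S) {v : V}
    (hv : v ∈ bperp B S) : IsTotIso B (S ⊔ Submodule.span F {v}) := by
  intro x hx y hy
  obtain ⟨a, ha, l, rfl⟩ := mem_sup_span_singleton_iff.1 hx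
  obtain ⟨b, hb, m, rfl⟩ := mem_sup_span_singleton_iff.1 hy
  have hav := mem_bperp.1 hv a ha
  have hvb := hB.apply_eq_zero_symm (mem_bperp.1 hv b hb)
  simp [h a ha b hb, hav, hvb, hB.alt v]

lemma bperp_eq_self {S : Submodule F V} (h : IsTotIso B S) (hd : finrank F S = n) :
    bperp B S = S := by
  have := hB.finiteDimensional
  refine (Submodule.eq_of_le_of_finrank_eq (isTotIso_iff_le_bperp.1 h) ?_).symm
  have := hB.finrank_bperp_add S
  omega

end IsSymplectic

end SymplecticSpaces

/-- The chambers of the polar space of `B`: flags with one totally isotropic `i`-space for each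
`1 ≤ i ≤ n`. -/
abbrev Chamber {F V : Type} [Field F] [AddCommGroup V] [Module F V] (B : V →ₗ[F] V →ₗ[F] F)
    (n : ℕ) :=
  SFlag B (Finset.Icc 1 n)

namespace SFlag

variable {F V : Type} [Field F] [AddCommGroup V] [Module F V] {B : V →ₗ[F] V →ₗ[F] F}

lemma ext {J : Finset ℕ} {C D : SFlag B J} (h : ∀ i ∈ J, C.space i = D.space i) : C = D := by
  have hall : C.space = D.space := funext fun i => by
    by_cases hi : i ∈ J
    · exact h i hi
    · rw [C.eq_bot i hi, D.eq_bot i hi]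
  cases C; cases D; cases hall; rfl

instance finite [Finite V] {J : Finset ℕ} : Finite (SFlag B J) := by
  have : Finite (Submodule F V) := Finite.of_injective _ SetLike.coe_injective
  exact Finite.of_injective (fun (C : SFlag B J) (j : J) => C.space j) fun C D h =>
    ext fun i hi => congrFun h ⟨i, hi⟩

lemma isTotIso_space {J : Finset ℕ} (C : SFlag B J) (i : ℕ) : IsTotIso B (C.space i) := by
  by_cases hi : i ∈ J
  · exact C.isotropic i hi
  · exact C.eq_bot i hi ▸ isTotIso_bot

variable {n : ℕ}

lemma space_zero (C : Chamber B n) : C.space 0 = ⊥ := C.eq_bot 0 (by simp)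

lemma space_of_lt (C : Chamber B n) {i : ℕ} (h : n < i) : C.space i = ⊥ :=
  C.eq_bot i (by simp [h])

lemma finrank_space (C : Chamber B n) {i : ℕ} (h : i ≤ n) : finrank F (C.space i) = i := by
  rcases Nat.eq_zero_or_pos i with rfl | hi
  · rw [C.space_zero, finrank_bot]
  · exact C.finrank_eq i (Finset.mem_Icc.2 ⟨hi, h⟩)

lemma space_le (C : Chamber B n) {i j : ℕ} (h : i ≤ j) (hj : j ≤ n) :
    C.space i ≤ C.space j := by
  rcases Nat.eq_zero_or_pos i with rfl | hi
  · exact C.space_zero ▸ bot_le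
  · exact C.mono i (Finset.mem_Icc.2 ⟨hi, h.trans hj⟩) j (Finset.mem_Icc.2 ⟨le_trans hi h, hj⟩) h

lemma exists_space_eq {f : ℕ → Submodule F V} (h0 : f 0 = ⊥)
    (hrank : ∀ i ∈ Finset.Icc 1 n, finrank F (f i) = i) (hiso : IsTotIso B (f n))
    (hf : ∀ i < n, f i ≤ f (i + 1)) :
    ∃ C : Chamber B n, ∀ i ≤ n, C.space i = f i := by
  have hle : ∀ i j, i ≤ j → j ≤ n → f i ≤ f j := by
    intro i j hij
    induction j, hij using Nat.le_induction with
    | base => exact fun _ => le_rfl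
    | succ j _ ih => exact fun hj => (ih (by omega)).trans (hf j hj)
  refine ⟨⟨fun i => if i ∈ Finset.Icc 1 n then f i else ⊥, fun i hi => ?_, fun i hi => ?_,
    fun i hi j hj hij => ?_, fun i hi => if_neg hi⟩, fun i hi => ?_⟩
  · simp only [hi, if_true]
    exact hiso.mono (hle i n (Finset.mem_Icc.1 hi).2 le_rfl)
  · rw [if_pos hi]
    exact hrank i hi
  · simp only [hi, hj, if_true]
    exact hle i j hij (Finset.mem_Icc.1 hj).2
  · rcases Nat.eq_zero_or_pos i with rfl | hpos
    · simpa using h0.symm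
    · exact if_pos (Finset.mem_Icc.2 ⟨hpos, hi⟩)

lemma exists_forall_space {P : ℕ → Submodule F V → Prop} (h0 : P 0 ⊥)
    (hs : ∀ i < n, ∀ M, P i M → IsTotIso B M → finrank F M = i →
      ∃ M', M ≤ M' ∧ IsTotIso B M' ∧ finrank F M' = i + 1 ∧ P (i + 1) M') :
    ∃ D : Chamber B n, ∀ i ≤ n, P i (D.space i) := by
  let Q (i : ℕ) (M : Submodule F V) : Prop := P i M ∧ IsTotIso B M ∧ finrank F M = i
  have hQ : ∀ i M, ∃ M', i < n → Q i M → M ≤ M' ∧ Q (i + 1) M' := by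
    intro i M
    by_cases h : i < n ∧ Q i M
    · obtain ⟨M', hle, hiso, hrank, hP⟩ := hs i h.1 M h.2.1 h.2.2.1 h.2.2.2
      exact ⟨M', fun _ _ => ⟨hle, hP, hiso, hrank⟩⟩
    · exact ⟨⊥, fun h1 h2 => absurd ⟨h1, h2⟩ h⟩
  choose next hnext using hQ
  let f (i : ℕ) : Submodule F V := i.rec ⊥ next
  have hf : ∀ i ≤ n, Q i (f i) := by
    intro i
    induction i with
    | zero => exact fun _ => ⟨h0, isTotIso_bot, finrank_bot F V⟩
    | succ i ih => exact fun hi => (hnext i (f i) (by omega) (ih (by omega))).2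
  obtain ⟨D, hD⟩ := exists_space_eq (n := n) (f := f) rfl
    (fun i hi => (hf i (Finset.mem_Icc.1 hi).2).2.2) (hf n le_rfl).2.1
    fun i hi => (hnext i (f i) hi (hf i hi.le)).1
  exact ⟨D, fun i hi => hD i hi ▸ (hf i hi).1⟩

end SFlag

section Intervals

variable {F V : Type*} [Field F] [AddCommGroup V] [Module F V] [Finite F]

lemma card_submodule_le_finrank_eq_one {W : Submodule F V} (hW : finrank F W = 2) :
    Nat.card {S : Submodule F V // S ≤ W ∧ finrank F S = 1} = Nat.card F + 1 := by
  rw [← Projectivization.card_of_finrank_two F W hW]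
  refine Nat.card_congr (((Projectivization.equivSubmodule F W).trans
    ((Submodule.mapIic W).toEquiv.subtypeEquiv fun H => ?_)).trans
    (Equiv.subtypeSubtypeEquivSubtypeInter (· ≤ W) fun S => finrank F S = 1)).symm
  exact (Submodule.finrank_map_subtype_eq W H ▸ Iff.rfl)

lemma card_interval_finrank_eq_add_one [FiniteDimensional F V] {A T : Submodule F V} (hAT : A ≤ T)
    (hT : finrank F T = finrank F A + 2) :
    Nat.card {S : Submodule F V // A ≤ S ∧ S ≤ T ∧ finrank F S = finrank F A + 1} =
      Nat.card F + 1 := by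
  obtain ⟨W, hAW, rfl⟩ := IsModularLattice.exists_disjoint_and_sup_eq hAT
  have hrank : ∀ S ≤ W, finrank F ↥(A ⊔ S) = finrank F A + finrank F S := fun S hS => by
    rw [← Submodule.finrank_sup_add_finrank_inf_eq, (hAW.mono_right hS).eq_bot, finrank_bot,
      add_zero]
  rw [← card_submodule_le_finrank_eq_one (W := W) (by have := hrank W le_rfl; omega)]
  refine Nat.card_congr ⟨fun S => ⟨W ⊓ S, inf_le_left, ?_⟩,
    fun S => ⟨A ⊔ S, le_sup_left, sup_le_sup_left S.2.1 A, by rw [hrank S S.2.1, S.2.2]⟩,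
    fun S => ?_, fun S => ?_⟩
  · have h := hrank (W ⊓ S) inf_le_left
    rw [← sup_inf_assoc_of_le _ S.2.1, inf_eq_right.2 S.2.2.1, S.2.2.2] at h
    omega
  · simp only [← sup_inf_assoc_of_le _ S.2.1, inf_eq_right.2 S.2.2.1]
  · simp only [inf_comm W, sup_comm A, sup_inf_assoc_of_le _ S.2.1, hAW.eq_bot, sup_bot_eq]

end Intervals

namespace SFlag

variable {F V : Type} [Field F] [AddCommGroup V] [Module F V] {B : V →ₗ[F] V →ₗ[F] F} {n i : ℕ}
  {C D E : Chamber B n}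

/-- The chambers `C` and `D` lie in the same `i`-panel: they differ at most in their `i`-spaces. -/
def SamePanel (i : ℕ) (C D : Chamber B n) : Prop := ∀ j, j ≠ i → C.space j = D.space j

/-- The chambers `C` and `D` are `i`-adjacent: they are distinct and lie in the same `i`-panel. -/
def Adj (i : ℕ) (C D : Chamber B n) : Prop := C ≠ D ∧ SamePanel i C D

/-- The subspace `U` such that the `i`-panel of `C` consists of all choices of an `i`-space between
`C.space (i - 1)` and `U`: it is `C.space (i + 1)` for `i < n`, and `(C.space (n - 1))^⊥` for
`i = n`. -/
def panelTop (C : Chamber B n) (i : ℕ) : Submodule F V :=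
  if i < n then C.space (i + 1) else bperp B (C.space (n - 1))

lemma samePanel_equivalence : Equivalence (SamePanel (B := B) (n := n) i) :=
  ⟨fun _ _ _ => rfl, fun h j hj => (h j hj).symm, fun h h' j hj => (h j hj).trans (h' j hj)⟩

lemma SamePanel.symm (h : SamePanel i C D) : SamePanel i D C := samePanel_equivalence.symm h

lemma SamePanel.trans (h : SamePanel i C D) (h' : SamePanel i D E) : SamePanel i C E :=
  samePanel_equivalence.trans h h'

lemma SamePanel.eq (h : SamePanel i C D) (h' : C.space i = D.space i) : C = D :=
  ext fun j _ => if hj : j = i then hj ▸ h' else h j hj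

lemma SamePanel.panelTop_eq (h : SamePanel i C D) (hi : 1 ≤ i) (hin : i ≤ n) :
    C.panelTop i = D.panelTop i := by
  unfold panelTop
  split_ifs
  · exact h _ (by omega)
  · rw [h _ (by omega)]

lemma Adj.symm (h : Adj i C D) : Adj i D C := ⟨h.1.symm, h.2.symm⟩

lemma Adj.space_ne (h : Adj i C D) : C.space i ≠ D.space i := fun h' => h.1 (h.2.eq h')

lemma SamePanel.adj (h : SamePanel i C D) (h' : C.space i ≠ D.space i) : Adj i C D :=
  ⟨fun he => h' (he ▸ rfl), h⟩

lemma space_le_panelTop (C : Chamber B n) (hin : i ≤ n) : C.space i ≤ C.panelTop i := by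
  unfold panelTop
  split_ifs with h
  · exact C.space_le (by omega) (by omega)
  · obtain rfl : i = n := by omega
    exact (isTotIso_iff_le_bperp.1 (C.isTotIso_space i)).trans
      (bperp_anti (C.space_le (by omega) le_rfl))

end SFlag

namespace IsSymplectic

variable {F V : Type} [Field F] [AddCommGroup V] [Module F V] {B : V →ₗ[F] V →ₗ[F] F} {n i : ℕ}
  (hB : IsSymplectic B n)
include hB

open SFlag

lemma finrank_panelTop (C : Chamber B n) (hi : 1 ≤ i) (hin : i ≤ n) :
    finrank F (C.panelTop i) = i + 1 := by
  by_cases h : i < n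
  · rw [panelTop, if_pos h, C.finrank_space h]
  · rw [panelTop, if_neg h]
    have hadd := hB.finrank_bperp_add (C.space (n - 1))
    rw [C.finrank_space (by omega)] at hadd
    omega

lemma isTotIso_of_le_panelTop (C : Chamber B n) (hin : i ≤ n) {S : Submodule F V}
    (hlow : C.space (i - 1) ≤ S) (htop : S ≤ C.panelTop i) (hrank : finrank F S = i) :
    IsTotIso B S := by
  have := hB.finiteDimensional
  unfold panelTop at htop
  split_ifs at htop with h
  · exact (C.isTotIso_space _).mono htop
  obtain rfl : i = n := by omega
  have hlow_rank := C.finrank_space (i := i - 1) (by omega)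
  rcases Nat.eq_zero_or_pos i with rfl | hi
  · exact Submodule.finrank_eq_zero.1 hrank ▸ isTotIso_bot
  obtain ⟨v, hv, hv'⟩ := SetLike.exists_of_lt (hlow.lt_of_ne fun heq => by
    rw [heq] at hlow_rank; omega)
  have hspan : C.space (i - 1) ⊔ Submodule.span F {v} = S :=
    Submodule.eq_of_le_of_finrank_eq (sup_le hlow (by simpa using hv))
      (by rw [Submodule.finrank_sup_span_singleton hv', hlow_rank, hrank]; omega)
  exact hspan ▸ hB.isTotIso_sup_span_singleton (C.isTotIso_space _) (htop hv)

lemma exists_samePanel_space_eq (C : Chamber B n) (hi : 1 ≤ i) (hin : i ≤ n) {S : Submodule F V}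
    (hlow : C.space (i - 1) ≤ S) (htop : S ≤ C.panelTop i) (hrank : finrank F S = i) :
    ∃ D : Chamber B n, SamePanel i C D ∧ D.space i = S := by
  obtain ⟨D, hD⟩ := exists_space_eq (B := B) (n := n) (f := Function.update C.space i S)
    (by rw [Function.update_of_ne (by omega), C.space_zero])
    (fun j hj => by
      obtain rfl | h := eq_or_ne j i
      · rwa [Function.update_self]
      · rw [Function.update_of_ne h, C.finrank_eq j hj])
    (by
      obtain rfl | h := eq_or_ne n i
      · simpa using hB.isTotIso_of_le_panelTop C hin hlow htop hrank
      · rw [Function.update_of_ne h]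
        exact C.isTotIso_space n)
    (fun j hj => by
      obtain rfl | h := eq_or_ne j i
      · rw [Function.update_self, Function.update_of_ne (by omega)]
        rwa [panelTop, if_pos hj] at htop
      obtain rfl | h' := eq_or_ne (j + 1) i
      · rwa [Function.update_self, Function.update_of_ne h]
      · rw [Function.update_of_ne h, Function.update_of_ne h']
        exact C.space_le (by omega) hj)
  refine ⟨D, fun j hj => ?_, by rw [hD i hin, Function.update_self]⟩
  by_cases hjn : j ≤ n
  · rw [hD j hjn, Function.update_of_ne hj]
  · rw [C.space_of_lt (by omega), D.space_of_lt (by omega)]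

lemma card_panel [Finite F] [Fintype (Chamber B n)] (C : Chamber B n) (hi : 1 ≤ i) (hin : i ≤ n) :
    Finset.card {D | SamePanel i C D} = Nat.card F + 1 := by
  have := hB.finiteDimensional
  have hrank := C.finrank_space (i := i - 1) (by omega)
  rw [← card_interval_finrank_eq_add_one (F := F) (A := C.space (i - 1)) (T := C.panelTop i)
      ((C.space_le (by omega) hin).trans (C.space_le_panelTop hin))
      (by rw [hB.finrank_panelTop C hi hin, hrank]; omega),
    ← Fintype.card_subtype, ← Nat.card_eq_fintype_card]
  refine Nat.card_eq_of_bijective (fun D => ⟨D.1.space i, ?_, ?_, ?_⟩) ⟨fun D D' h => ?_, ?_⟩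
  · exact D.2 (i - 1) (by omega) ▸ D.1.space_le (by omega) hin
  · exact D.2.panelTop_eq hi hin ▸ D.1.space_le_panelTop hin
  · rw [D.1.finrank_space hin, hrank]; omega
  · exact Subtype.ext ((D.2.symm.trans D'.2).eq (congrArg Subtype.val h))
  · rintro ⟨S, hlow, htop, hS⟩
    obtain ⟨D, hCD, hDS⟩ := hB.exists_samePanel_space_eq C hi hin hlow htop (by omega)
    exact ⟨⟨D, hCD⟩, Subtype.ext hDS⟩

end IsSymplectic

/-- The `0`-`1` matrix of a relation on a type. -/
noncomputable def relMatrix {X : Type*} (R : X → X → Prop) : Matrix X X ℝ :=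
  Matrix.of fun x y => if R x y then 1 else 0

section RelMatrix

open Matrix

variable {X : Type*} {R S : X → X → Prop}

lemma relMatrix_apply (x y : X) : relMatrix R x y = if R x y then 1 else 0 := rfl

lemma relMatrix_transpose (h : ∀ x y, R x y ↔ S y x) : (relMatrix R)ᵀ = relMatrix S := by
  ext x y
  simp only [transpose_apply, relMatrix_apply, h]

variable [Fintype X]

lemma relMatrix_mulVec (f : X → ℝ) (x : X) : (relMatrix R *ᵥ f) x = ∑ y with R x y, f y := by
  simp [mulVec, dotProduct, relMatrix_apply, Finset.sum_filter]

lemma relMatrix_mul (h : ∀ x y z z', R x z → S z y → R x z' → S z' y → z = z') :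
    relMatrix R * relMatrix S = relMatrix (Relation.Comp R S) := by
  ext x y
  simp only [mul_apply, relMatrix_apply, ite_zero_mul_ite_zero, mul_one, Finset.sum_boole]
  split_ifs with hxy
  · obtain ⟨z, hR, hS⟩ := hxy
    rw [Nat.cast_eq_one, Finset.card_eq_one]
    refine ⟨z, Finset.ext fun z' => ?_⟩
    simp only [Finset.mem_filter, Finset.mem_univ, true_and, Finset.mem_singleton]
    exact ⟨fun h' => h x y z' z h'.1 h'.2 hR hS, by rintro rfl; exact ⟨hR, hS⟩⟩
  · simpa [Finset.filter_eq_empty_iff, Relation.Comp] using hxy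

variable {k : ℕ}

lemma relMatrix_mul_self (hR : Equivalence R) (hk : ∀ x, Finset.card {y | R x y} = k) :
    relMatrix R * relMatrix R = (k : ℝ) • relMatrix R := by
  ext x y
  have hmid : ∀ z, R x z ∧ R z y ↔ R x y ∧ R x z := fun z =>
    ⟨fun h => ⟨hR.trans h.1 h.2, h.1⟩, fun h => ⟨h.2, hR.trans (hR.symm h.2) h.1⟩⟩
  simp only [mul_apply, Matrix.smul_apply, relMatrix_apply, ite_zero_mul_ite_zero, mul_one, hmid,
    Finset.sum_boole]
  split_ifs with hxy <;> simp [hxy, hk]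

lemma relMatrix_mulVec_one (hk : ∀ x, Finset.card {y | R x y} = k) :
    relMatrix R *ᵥ 1 = (k : ℝ) • 1 := by
  ext x
  simp [relMatrix_mulVec, hk]

lemma relMatrix_mulVec_eq_smul_iff (hR : Equivalence R) (hk : ∀ x, Finset.card {y | R x y} = k)
    {f : X → ℝ} : relMatrix R *ᵥ f = (k : ℝ) • f ↔ ∀ x y, R x y → f x = f y := by
  refine ⟨fun h x y hxy => ?_, fun h => funext fun x => ?_⟩
  · have hclass : ∀ z, R x z ↔ R y z := fun z => ⟨hR.trans (hR.symm hxy), hR.trans hxy⟩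
    have hk0 : (k : ℝ) ≠ 0 := by
      rw [← hk x, Nat.cast_ne_zero]
      exact Finset.card_ne_zero_of_mem (Finset.mem_filter.2 ⟨Finset.mem_univ x, hR.refl x⟩)
    have hx := congrFun h x
    simp only [relMatrix_mulVec, hclass] at hx
    rw [← relMatrix_mulVec, h] at hx
    exact (mul_left_cancel₀ hk0 hx).symm
  · rw [relMatrix_mulVec, Finset.sum_congr rfl fun y hy => (h x y (Finset.mem_filter.1 hy).2).symm]
    simp [hk]

end RelMatrix

section PanelMatrices

open Matrix SFlag

variable {F V : Type} [Field F] [AddCommGroup V] [Module F V] {B : V →ₗ[F] V →ₗ[F] F} {n i : ℕ}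

lemma relMatrix_samePanel :
    relMatrix (SamePanel (B := B) (n := n) i) = relMatrix (Adj i) + 1 := by
  ext C D
  rw [Matrix.add_apply, relMatrix_apply, relMatrix_apply, one_apply]
  obtain rfl | h := eq_or_ne C D
  · simp [Adj, samePanel_equivalence.refl C]
  · simp [Adj, h]

lemma relMatrix_adj_transpose : (relMatrix (Adj (B := B) (n := n) i))ᵀ = relMatrix (Adj i) :=
  relMatrix_transpose fun _ _ => ⟨Adj.symm, Adj.symm⟩

variable [Fintype (Chamber B n)]

namespace IsSymplectic

variable [Finite F] (hB : IsSymplectic B n)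
include hB

lemma relMatrix_adj_mul_self (hi : 1 ≤ i) (hin : i ≤ n) :
    relMatrix (Adj (B := B) (n := n) i) * relMatrix (Adj i) =
      ((Nat.card F : ℝ) - 1) • relMatrix (Adj i) + (Nat.card F : ℝ) • 1 := by
  have h := relMatrix_mul_self samePanel_equivalence fun C => hB.card_panel C hi hin
  rw [relMatrix_samePanel, add_mul, mul_add, mul_one, one_mul, Nat.cast_succ] at h
  rw [← sub_eq_zero] at h ⊢
  rw [← h]
  module

lemma relMatrix_adj_mulVec_one (hi : 1 ≤ i) (hin : i ≤ n) :
    relMatrix (Adj (B := B) (n := n) i) *ᵥ 1 = (Nat.card F : ℝ) • 1 := by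
  have h := relMatrix_mulVec_one fun C => hB.card_panel C hi hin
  rwa [relMatrix_samePanel, add_mulVec, one_mulVec, Nat.cast_succ, add_smul, one_smul,
    add_left_inj] at h

lemma relMatrix_adj_mulVec_eq_smul_iff (hi : 1 ≤ i) (hin : i ≤ n) {f : Chamber B n → ℝ} :
    relMatrix (Adj i) *ᵥ f = (Nat.card F : ℝ) • f ↔ ∀ C D, SamePanel i C D → f C = f D := by
  rw [← relMatrix_mulVec_eq_smul_iff samePanel_equivalence fun C => hB.card_panel C hi hin,
    relMatrix_samePanel, add_mulVec, one_mulVec, Nat.cast_succ, add_smul, one_smul, add_left_inj]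

end IsSymplectic

end PanelMatrices

section Braid

open Relation SFlag

variable {F V : Type} [Field F] [AddCommGroup V] [Module F V] {B : V →ₗ[F] V →ₗ[F] F} {n i j : ℕ}
  {C D X X' Y Z : Chamber B n}

namespace SFlag

/-- The chambers `C` and `D` lie in the same residue of type `{i, i + 1}`: they differ at most in
their `i`-spaces and their `(i + 1)`-spaces. -/
def SameResidue (i : ℕ) (C D : Chamber B n) : Prop :=
  ∀ k, k ≠ i → k ≠ i + 1 → C.space k = D.space k

lemma SameResidue.symm (h : SameResidue i C D) : SameResidue i D C :=
  fun k hk hk' => (h k hk hk').symm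

lemma space_eq_of_le [FiniteDimensional F V] (h : C.space i ≤ D.space i) :
    C.space i = D.space i := by
  by_cases hin : i ≤ n
  · exact Submodule.eq_of_le_of_finrank_eq h (by rw [C.finrank_space hin, D.finrank_space hin])
  · rw [C.space_of_lt (by omega), D.space_of_lt (by omega)]

lemma eq_of_adj_of_adj (hij : i ≠ j) (h₁ : Adj i C X) (h₂ : Adj j X D) (h₁' : Adj i C X')
    (h₂' : Adj j X' D) : X = X' := by
  refine (h₁.2.symm.trans h₁'.2).eq ?_
  rw [h₂.2 i hij, h₂'.2 i hij]

lemma comp_adj_adj_adj_swap (h : Comp (Comp (Adj i) (Adj j)) (Adj i) C D) :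
    Comp (Comp (Adj i) (Adj j)) (Adj i) D C := by
  obtain ⟨X, ⟨Y, hCY, hYX⟩, hXD⟩ := h
  exact ⟨Y, ⟨X, hXD.symm, hYX.symm⟩, hCY.symm⟩

lemma sameResidue_of_comp (h : Comp (Comp (Adj i) (Adj (i + 1))) (Adj i) C D) :
    SameResidue i C D := by
  obtain ⟨X, ⟨Y, hCY, hYX⟩, hXD⟩ := h
  exact fun k hk hk' => by rw [hCY.2 k hk, hYX.2 k hk', hXD.2 k hk]

lemma sameResidue_of_comp' (h : Comp (Comp (Adj (i + 1)) (Adj i)) (Adj (i + 1)) C D) :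
    SameResidue i C D := by
  obtain ⟨X, ⟨Y, hCY, hYX⟩, hXD⟩ := h
  exact fun k hk hk' => by rw [hCY.2 k hk', hYX.2 k hk, hXD.2 k hk']

end SFlag

namespace IsSymplectic

variable (hB : IsSymplectic B n)
include hB

lemma comp_adj_comm (hj : 1 ≤ j) (hjn : j ≤ n) (hij : i + 2 ≤ j ∨ j + 2 ≤ i)
    (h : Comp (Adj i) (Adj j) C D) : Comp (Adj j) (Adj i) C D := by
  obtain ⟨X, hCX, hXD⟩ := h
  have htop : C.panelTop j = D.panelTop j := by
    rw [← hXD.2.panelTop_eq hj hjn]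
    unfold panelTop
    split_ifs
    · exact hCX.2 _ (by omega)
    · rw [hCX.2 _ (by omega)]
  obtain ⟨Y, hCY, hY⟩ := hB.exists_samePanel_space_eq C hj hjn (S := D.space j)
    (by rw [hCX.2 _ (by omega), hXD.2 _ (by omega)]; exact D.space_le (by omega) hjn)
    (htop ▸ D.space_le_panelTop hjn) (D.finrank_space hjn)
  refine ⟨Y, hCY.adj ?_, SamePanel.adj (fun k hk => ?_) ?_⟩
  · rw [hY, hCX.2 _ (by omega)]; exact hXD.space_ne
  · obtain rfl | hkj := eq_or_ne k j
    · exact hY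
    · rw [← hCY k hkj, hCX.2 k hk, hXD.2 k hkj]
  · rw [← hCY i (by omega), ← hXD.2 i (by omega)]; exact hCX.space_ne

section A₂

lemma space_eq_inf_of_adj (hin : i + 1 ≤ n) (hCY : Adj i C Y) (hYX : Adj (i + 1) Y X)
    (hXD : Adj i X D) : X.space i = C.space (i + 1) ⊓ D.space (i + 1) := by
  have := hB.finiteDimensional
  refine (inf_eq_of_finrank_eq_add_one (X.finrank_space (by omega)) (C.finrank_space hin)
    (D.finrank_space hin) ?_ ?_ ?_).symm
  · rw [← hYX.2 _ (by omega), hCY.2 _ (by omega)]; exact Y.space_le (by omega) hin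
  · rw [← hXD.2 _ (by omega)]; exact X.space_le (by omega) hin
  · rw [hCY.2 _ (by omega), ← hXD.2 _ (by omega)]; exact hYX.space_ne

lemma space_eq_sup_of_adj (hi : 1 ≤ i) (hin : i + 1 ≤ n) (hCY : Adj (i + 1) C Y)
    (hYX : Adj i Y X) (hXD : Adj (i + 1) X D) : X.space (i + 1) = C.space i ⊔ D.space i := by
  have := hB.finiteDimensional
  obtain ⟨k, rfl⟩ : ∃ k, i = k + 1 := ⟨i - 1, by omega⟩
  refine (finrank_inf_and_sup_eq_of_finrank_eq_add_two (X.finrank_space hin)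
    (C.finrank_space (by omega)) (D.finrank_space (by omega)) ?_ ?_ ?_).2.symm
  · rw [← hYX.2 _ (by omega), hCY.2 _ (by omega)]; exact Y.space_le (by omega) hin
  · rw [← hXD.2 _ (by omega)]; exact X.space_le (by omega) hin
  · rw [hCY.2 _ (by omega), ← hXD.2 _ (by omega)]; exact hYX.space_ne

lemma eq_of_comp_of_adj (hin : i + 1 ≤ n) (h₁ : Comp (Adj i) (Adj (i + 1)) C X) (h₂ : Adj i X D)
    (h₁' : Comp (Adj i) (Adj (i + 1)) C X') (h₂' : Adj i X' D) : X = X' := by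
  obtain ⟨Y, hCY, hYX⟩ := h₁
  obtain ⟨Y', hCY', hYX'⟩ := h₁'
  refine (h₂.2.trans h₂'.2.symm).eq ?_
  rw [hB.space_eq_inf_of_adj hin hCY hYX h₂, hB.space_eq_inf_of_adj hin hCY' hYX' h₂']

lemma eq_of_comp_of_adj' (hi : 1 ≤ i) (hin : i + 1 ≤ n) (h₁ : Comp (Adj (i + 1)) (Adj i) C X)
    (h₂ : Adj (i + 1) X D) (h₁' : Comp (Adj (i + 1)) (Adj i) C X') (h₂' : Adj (i + 1) X' D) :
    X = X' := by
  obtain ⟨Y, hCY, hYX⟩ := h₁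
  obtain ⟨Y', hCY', hYX'⟩ := h₁'
  refine (h₂.2.trans h₂'.2.symm).eq ?_
  rw [hB.space_eq_sup_of_adj hi hin hCY hYX h₂, hB.space_eq_sup_of_adj hi hin hCY' hYX' h₂']

lemma not_le_of_comp (hin : i + 1 ≤ n) (h : Comp (Comp (Adj i) (Adj (i + 1))) (Adj i) C D) :
    ¬ C.space i ≤ D.space (i + 1) := by
  have := hB.finiteDimensional
  obtain ⟨X, ⟨Y, hCY, hYX⟩, hXD⟩ := h
  refine fun hle => hCY.space_ne (space_eq_of_le ?_)
  rw [hYX.2 _ (by omega), hB.space_eq_inf_of_adj hin hCY hYX hXD]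
  exact le_inf (C.space_le (by omega) hin) hle

lemma not_le_of_comp' (hi : 1 ≤ i) (hin : i + 1 ≤ n)
    (h : Comp (Comp (Adj (i + 1)) (Adj i)) (Adj (i + 1)) C D) : ¬ C.space i ≤ D.space (i + 1) := by
  have := hB.finiteDimensional
  obtain ⟨X, ⟨Y, hCY, hYX⟩, hXD⟩ := h
  refine fun hle => hXD.space_ne (space_eq_of_le ?_)
  rw [hB.space_eq_sup_of_adj hi hin hCY hYX hXD]
  exact sup_le hle (D.space_le (by omega) hin)

lemma comp_of_not_le (hi : 1 ≤ i) (hin : i + 1 < n) (hCD : SameResidue i C D)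
    (h : ¬ C.space i ≤ D.space (i + 1)) (h' : ¬ D.space i ≤ C.space (i + 1)) :
    Comp (Comp (Adj i) (Adj (i + 1))) (Adj i) C D := by
  have := hB.finiteDimensional
  have hne : C.space (i + 1) ≠ D.space (i + 1) := fun he => h (he ▸ C.space_le (by omega) hin.le)
  have hrank : finrank F ↥(C.space (i + 1) ⊓ D.space (i + 1)) = i :=
    (finrank_inf_and_sup_eq_of_finrank_eq_add_two (U := C.space (i + 2)) (C.finrank_space hin)
      (C.finrank_space hin.le) (D.finrank_space hin.le) (C.space_le (by omega) hin)
      (by rw [hCD _ (by omega) (by omega)]; exact D.space_le (by omega) hin) hne).1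
  have hlow : C.space (i - 1) ≤ C.space (i + 1) ⊓ D.space (i + 1) :=
    le_inf (C.space_le (by omega) hin.le)
      (by rw [hCD _ (by omega) (by omega)]; exact D.space_le (by omega) hin.le)
  obtain ⟨Y, hCY, hY⟩ := hB.exists_samePanel_space_eq C hi (by omega) hlow
    (by rw [panelTop, if_pos (by omega)]; exact inf_le_left) hrank
  obtain ⟨X, hDX, hX⟩ := hB.exists_samePanel_space_eq D hi (by omega)
    (by rwa [← hCD _ (by omega) (by omega)])
    (by rw [panelTop, if_pos (by omega)]; exact inf_le_right) hrank
  refine ⟨X, ⟨Y, hCY.adj fun he => h ?_, SamePanel.adj (fun k hk => ?_) ?_⟩,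
    (hDX.adj fun he => h' ?_).symm⟩
  · rw [he, hY]; exact inf_le_right
  · obtain rfl | hki := eq_or_ne k i
    · rw [hY, hX]
    · rw [← hCY k hki, ← hDX k hki, hCD k hki hk]
  · rwa [← hCY _ (by omega), ← hDX _ (by omega)]
  · rw [he, hX]; exact inf_le_left

lemma comp_of_not_le' (hi : 1 ≤ i) (hin : i + 1 < n) (hCD : SameResidue i C D)
    (h : ¬ C.space i ≤ D.space (i + 1)) (h' : ¬ D.space i ≤ C.space (i + 1)) :
    Comp (Comp (Adj (i + 1)) (Adj i)) (Adj (i + 1)) C D := by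
  have := hB.finiteDimensional
  obtain ⟨k, rfl⟩ : ∃ k, i = k + 1 := ⟨i - 1, by omega⟩
  have hne : C.space (k + 1) ≠ D.space (k + 1) := fun he => h (he ▸ D.space_le (by omega) hin.le)
  have hrank : finrank F ↥(C.space (k + 1) ⊔ D.space (k + 1)) = k + 2 :=
    finrank_sup_of_finrank_eq_add_one (C.finrank_space (i := k) (by omega))
      (C.finrank_space (by omega)) (D.finrank_space (by omega)) (C.space_le (by omega) (by omega))
      (by rw [hCD _ (by omega) (by omega)]; exact D.space_le (by omega) (by omega)) hne
  have htop : C.space (k + 1) ⊔ D.space (k + 1) ≤ C.space (k + 1 + 1 + 1) :=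
    sup_le (C.space_le (by omega) hin)
      (by rw [hCD _ (by omega) (by omega)]; exact D.space_le (by omega) hin)
  obtain ⟨Y, hCY, hY⟩ := hB.exists_samePanel_space_eq C (by omega) hin.le
    (S := C.space (k + 1) ⊔ D.space (k + 1)) le_sup_left (by rwa [panelTop, if_pos hin]) hrank
  obtain ⟨X, hDX, hX⟩ := hB.exists_samePanel_space_eq D (by omega) hin.le
    (S := C.space (k + 1) ⊔ D.space (k + 1)) le_sup_right
    (by rwa [panelTop, if_pos hin, ← hCD (k + 1 + 1 + 1) (by omega) (by omega)]) hrank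
  refine ⟨X, ⟨Y, hCY.adj fun he => h' ?_, SamePanel.adj (fun l hl => ?_) ?_⟩,
    (hDX.adj fun he => h ?_).symm⟩
  · rw [he, hY]; exact le_sup_right
  · obtain rfl | hlk := eq_or_ne l (k + 1 + 1)
    · rw [hY, hX]
    · rw [← hCY l hlk, ← hDX l hlk, hCD l hl hlk]
  · rwa [← hCY _ (by omega), ← hDX _ (by omega)]
  · rw [he, hX]; exact le_sup_left

lemma comp_adj_iff (hi : 1 ≤ i) (hin : i + 1 < n) :
    Comp (Comp (Adj i) (Adj (i + 1))) (Adj i) C D ↔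
      Comp (Comp (Adj (i + 1)) (Adj i)) (Adj (i + 1)) C D :=
  ⟨fun h => hB.comp_of_not_le' hi hin (sameResidue_of_comp h) (hB.not_le_of_comp hin.le h)
      (hB.not_le_of_comp hin.le (comp_adj_adj_adj_swap h)),
    fun h => hB.comp_of_not_le hi hin (sameResidue_of_comp' h) (hB.not_le_of_comp' hi hin.le h)
      (hB.not_le_of_comp' hi hin.le (comp_adj_adj_adj_swap h))⟩

end A₂

section B₂

lemma space_eq_inf_bperp_and_sup_of_adj (hin : i + 1 = n) (hCY : Adj i C Y)
    (hYZ : Adj (i + 1) Y Z) (hZX : Adj i Z X) (hXD : Adj (i + 1) X D) :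
    Z.space i = C.space (i + 1) ⊓ bperp B (D.space i) ∧
      X.space (i + 1) = Z.space i ⊔ D.space i := by
  have := hB.finiteDimensional
  have hX : X.space (i + 1) = Z.space i ⊔ D.space i := by
    rcases Nat.eq_zero_or_pos i with rfl | hi
    · exact absurd (by rw [Z.space_zero, X.space_zero]) hZX.space_ne
    rw [← hYZ.2 _ (by omega)]
    exact hB.space_eq_sup_of_adj hi hin.le hYZ hZX hXD
  have hZ : Z.space i ≤ C.space (i + 1) ⊓ bperp B (D.space i) := by
    refine le_inf ?_ ?_
    · rw [hCY.2 _ (by omega), ← hYZ.2 _ (by omega)]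
      exact Y.space_le (by omega) hin.le
    · refine le_trans ?_ (bperp_anti (hX ▸ le_sup_right : D.space i ≤ X.space (i + 1)))
      exact (hX ▸ le_sup_left : Z.space i ≤ _).trans (isTotIso_iff_le_bperp.1 (X.isTotIso_space _))
  refine ⟨Submodule.eq_of_le_of_finrank_le hZ ?_, hX⟩
  by_contra! hlt
  rw [Z.finrank_space (by omega)] at hlt
  have hperp : C.space (i + 1) ≤ bperp B (D.space i) :=
    inf_eq_left.1 (Submodule.eq_of_le_of_finrank_le inf_le_left
      (by rw [C.finrank_space hin.le]; omega))
  have hDC : D.space i ≤ C.space (i + 1) :=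
    hB.bperp_eq_self (C.isTotIso_space _) ((C.finrank_space hin.le).trans hin) ▸
      hB.le_bperp_comm hperp
  refine hYZ.space_ne.symm (space_eq_of_le ?_)
  rw [hZX.2 _ (by omega), hX, ← hCY.2 _ (by omega)]
  exact sup_le (hZ.trans inf_le_left) hDC

lemma eq_of_comp_of_comp (hin : i + 1 = n)
    (h₁ : Comp (Comp (Adj i) (Adj (i + 1))) (Adj i) C X) (h₂ : Adj (i + 1) X D)
    (h₁' : Comp (Comp (Adj i) (Adj (i + 1))) (Adj i) C X') (h₂' : Adj (i + 1) X' D) :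
    X = X' := by
  obtain ⟨Z, ⟨Y, hCY, hYZ⟩, hZX⟩ := h₁
  obtain ⟨Z', ⟨Y', hCY', hYZ'⟩, hZX'⟩ := h₁'
  obtain ⟨hZ, hX⟩ := hB.space_eq_inf_bperp_and_sup_of_adj hin hCY hYZ hZX h₂
  obtain ⟨hZ', hX'⟩ := hB.space_eq_inf_bperp_and_sup_of_adj hin hCY' hYZ' hZX' h₂'
  refine (h₂.2.trans h₂'.2.symm).eq ?_
  rw [hX, hX', hZ, hZ']

lemma opposite_of_comp (hin : i + 1 = n)
    (h : Comp (Comp (Comp (Adj i) (Adj (i + 1))) (Adj i)) (Adj (i + 1)) C D) :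
    SameResidue i C D ∧ ¬ D.space i ≤ bperp B (C.space i) ∧
      C.space (i + 1) ⊓ D.space (i + 1) ≤ C.space (i - 1) := by
  have := hB.finiteDimensional
  obtain ⟨X, ⟨Z, ⟨Y, hCY, hYZ⟩, hZX⟩, hXD⟩ := h
  obtain ⟨hZ, hX⟩ := hB.space_eq_inf_bperp_and_sup_of_adj hin hCY hYZ hZX hXD
  have hi : i ≠ 0 := by
    rintro rfl
    exact hCY.space_ne (by rw [C.space_zero, Y.space_zero])
  obtain ⟨k, rfl⟩ := Nat.exists_eq_succ_of_ne_zero hi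
  have hCZ : C.space k = Z.space k := by rw [hCY.2 _ (by omega), hYZ.2 _ (by omega)]
  refine ⟨fun j hj hj' => by rw [hCY.2 j hj, hYZ.2 j hj', hZX.2 j hj, hXD.2 j hj'], fun hle => ?_,
    ?_⟩
  · refine hCY.space_ne (space_eq_of_le ?_)
    rw [hYZ.2 _ (by omega), hZ]
    exact le_inf (C.space_le (by omega) hin.le) (hB.le_bperp_comm hle)
  · have hDX : X.space (k + 1 + 1) ⊓ D.space (k + 1 + 1) = X.space (k + 1) :=
      inf_eq_of_finrank_eq_add_one (X.finrank_space (by omega)) (X.finrank_space hin.le)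
        (D.finrank_space hin.le) (X.space_le (by omega) hin.le)
        (by rw [hXD.2 _ (by omega)]; exact D.space_le (by omega) hin.le) hXD.space_ne
    have hZX' : Z.space (k + 1) ⊓ X.space (k + 1) = Z.space k :=
      inf_eq_of_finrank_eq_add_one (Z.finrank_space (by omega)) (Z.finrank_space (by omega))
        (X.finrank_space (by omega)) (Z.space_le (by omega) (by omega))
        (by rw [hZX.2 _ (by omega)]; exact X.space_le (by omega) (by omega)) hZX.space_ne
    have hCDZ : C.space (k + 1 + 1) ⊓ D.space (k + 1 + 1) ≤ Z.space (k + 1) :=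
      hZ ▸ inf_le_inf_left _ ((isTotIso_iff_le_bperp.1 (D.isTotIso_space _)).trans
        (bperp_anti (D.space_le (by omega) hin.le)))
    rw [Nat.succ_eq_add_one, Nat.add_sub_cancel, hCZ, ← hZX', ← hDX]
    exact le_inf hCDZ (le_inf (hCDZ.trans (hX ▸ le_sup_left)) inf_le_right)

lemma finrank_inf_bperp_eq (hi : 1 ≤ i) (hin : i + 1 = n) (hCD : SameResidue i C D)
    (h : ¬ D.space i ≤ bperp B (C.space i)) :
    finrank F ↥(C.space (i + 1) ⊓ bperp B (D.space i)) = i := by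
  have := hB.finiteDimensional
  refine le_antisymm ?_ ?_
  · by_contra! hlt
    have heq := Submodule.eq_of_le_of_finrank_le
      (inf_le_left : C.space (i + 1) ⊓ bperp B (D.space i) ≤ _)
      (by rw [C.finrank_space hin.le]; omega)
    exact h (hB.le_bperp_comm ((C.space_le (by omega) hin.le).trans (inf_eq_left.1 heq)))
  · have hsup : C.space (i + 1) ⊔ bperp B (D.space i) ≤ bperp B (D.space (i - 1)) := by
      refine sup_le ?_ (bperp_anti (D.space_le (by omega) (by omega)))
      rw [← hCD _ (by omega) (by omega)]
      exact (isTotIso_iff_le_bperp.1 (C.isTotIso_space _)).trans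
        (bperp_anti (C.space_le (by omega) hin.le))
    have hadd := Submodule.finrank_sup_add_finrank_inf_eq (C.space (i + 1)) (bperp B (D.space i))
    have hmono := Submodule.finrank_mono hsup
    have hperp := hB.finrank_bperp_add (D.space (i - 1))
    have hperp' := hB.finrank_bperp_add (D.space i)
    rw [D.finrank_space (by omega)] at hperp hperp'
    rw [C.finrank_space hin.le] at hadd
    omega

lemma comp_of_opposite (hi : 1 ≤ i) (hin : i + 1 = n) (hCD : SameResidue i C D)
    (h : ¬ D.space i ≤ bperp B (C.space i))
    (h' : C.space (i + 1) ⊓ D.space (i + 1) ≤ C.space (i - 1)) :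
    Comp (Comp (Comp (Adj i) (Adj (i + 1))) (Adj i)) (Adj (i + 1)) C D := by
  have := hB.finiteDimensional
  obtain ⟨k, rfl⟩ : ∃ k, i = k + 1 := ⟨i - 1, by omega⟩
  have hlow : C.space k = D.space k := hCD k (by omega) (by omega)
  have hCC := isTotIso_iff_le_bperp.1 (C.isTotIso_space (k + 1 + 1))
  have hDD := isTotIso_iff_le_bperp.1 (D.isTotIso_space (k + 1))
  have hC : C.space (k + 1) ≤ C.space (k + 1 + 1) := C.space_le (by omega) hin.le
  have hDC : ¬ D.space (k + 1) ≤ C.space (k + 1 + 1) := fun hle =>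
    h ((hle.trans hCC).trans (bperp_anti hC))
  set L := C.space (k + 1 + 1) ⊓ bperp B (D.space (k + 1))
  have hLrank : finrank F L = k + 1 := hB.finrank_inf_bperp_eq hi hin hCD h
  have hDk : D.space k ≤ D.space (k + 1) := D.space_le (by omega) (by omega)
  have hCL : C.space k ≤ L :=
    le_inf (C.space_le (by omega) hin.le) (hlow ▸ hDk.trans hDD)
  have hLD : L ≠ D.space (k + 1) := fun he => hDC (he ▸ inf_le_left)
  obtain ⟨Y, hCY, hY⟩ := hB.exists_samePanel_space_eq C hi (by omega) hCL
    (by rw [panelTop, if_pos (by omega)]; exact inf_le_left) hLrank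
  obtain ⟨X, hDX, hX⟩ := hB.exists_samePanel_space_eq D (by omega) hin.le
    (S := L ⊔ D.space (k + 1)) le_sup_right
    (by rw [panelTop, if_neg (by omega), show n - 1 = k + 1 by omega]
        exact sup_le inf_le_right hDD)
    (finrank_sup_of_finrank_eq_add_one (C.finrank_space (by omega)) hLrank
      (D.finrank_space (by omega)) hCL (hlow ▸ hDk) hLD)
  obtain ⟨Z, hXZ, hZ⟩ := hB.exists_samePanel_space_eq X hi (by omega) (S := L)
    (by rwa [← hDX _ (by omega), ← hCD _ (by omega) (by omega)])
    (by rw [panelTop, if_pos (by omega), hX]; exact le_sup_left) hLrank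
  refine ⟨X, ⟨Z, ⟨Y, hCY.adj fun he => ?_, SamePanel.adj (fun l hl => ?_) fun he => ?_⟩,
    hXZ.symm.adj ?_⟩, hDX.symm.adj fun he => ?_⟩
  · exact h (hB.le_bperp_comm ((he.trans hY).le.trans inf_le_right))
  · obtain rfl | hlk := eq_or_ne l (k + 1)
    · rw [hY, hZ]
    · rw [← hCY l hlk, ← hXZ l hlk, ← hDX l hl, hCD l hlk hl]
  · rw [← hCY _ (by omega), ← hXZ _ (by omega), hX] at he
    exact hDC (he ▸ le_sup_right)
  · rwa [hZ, ← hDX _ (by omega)]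
  · have hle : L ≤ C.space k := (le_inf inf_le_left (he ▸ hX ▸ le_sup_left)).trans h'
    have := Submodule.finrank_mono hle
    rw [hLrank, C.finrank_space (by omega)] at this
    omega

lemma comp_adj_swap (hi : 1 ≤ i) (hin : i + 1 = n)
    (h : Comp (Comp (Comp (Adj i) (Adj (i + 1))) (Adj i)) (Adj (i + 1)) C D) :
    Comp (Comp (Comp (Adj i) (Adj (i + 1))) (Adj i)) (Adj (i + 1)) D C := by
  obtain ⟨hCD, hne, hinf⟩ := hB.opposite_of_comp hin h
  refine hB.comp_of_opposite hi hin hCD.symm (fun hle => hne (hB.le_bperp_comm hle)) ?_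
  rwa [inf_comm, ← hCD (i - 1) (by omega) (by omega)]

end B₂

end IsSymplectic

variable [Fintype (Chamber B n)]

lemma relMatrix_adj_mul_adj (hij : i ≠ j) :
    relMatrix (Adj (B := B) (n := n) i) * relMatrix (Adj j) = relMatrix (Comp (Adj i) (Adj j)) :=
  relMatrix_mul fun _ _ _ _ => eq_of_adj_of_adj hij

/-- The `m`-th generator of the Hecke algebra acting on functions on chambers: the adjacency matrix
of type `n - m`, so that the generators are numbered from the end of the diagram with the double
bond. -/
noncomputable def heckeGen (B : V →ₗ[F] V →ₗ[F] F) (n m : ℕ) :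
    Matrix (Chamber B n) (Chamber B n) ℝ :=
  relMatrix (Adj (n - m))

namespace IsSymplectic

variable (hB : IsSymplectic B n)
include hB

lemma relMatrix_adj_commute (hi : 1 ≤ i) (hin : i ≤ n) (hj : 1 ≤ j) (hjn : j ≤ n)
    (hij : i + 2 ≤ j ∨ j + 2 ≤ i) :
    relMatrix (Adj (B := B) (n := n) i) * relMatrix (Adj j) =
      relMatrix (Adj j) * relMatrix (Adj i) := by
  rw [relMatrix_adj_mul_adj (by omega),
    relMatrix_adj_mul_adj (by omega)]
  congr 1
  ext C D
  exact ⟨hB.comp_adj_comm hj hjn hij, hB.comp_adj_comm hi hin hij.symm⟩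

lemma relMatrix_adj_braid (hi : 1 ≤ i) (hin : i + 1 < n) :
    relMatrix (Adj (B := B) (n := n) i) * relMatrix (Adj (i + 1)) * relMatrix (Adj i) =
      relMatrix (Adj (i + 1)) * relMatrix (Adj i) * relMatrix (Adj (i + 1)) := by
  rw [relMatrix_adj_mul_adj (by omega),
    relMatrix_adj_mul_adj (by omega),
    relMatrix_mul fun _ _ _ _ => hB.eq_of_comp_of_adj hin.le,
    relMatrix_mul fun _ _ _ _ => hB.eq_of_comp_of_adj' hi hin.le]
  congr 1
  ext C D
  exact hB.comp_adj_iff hi hin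

lemma relMatrix_adj_braid_last (hi : 1 ≤ i) (hin : i + 1 = n) :
    relMatrix (Adj (B := B) (n := n) i) * relMatrix (Adj (i + 1)) * relMatrix (Adj i) *
        relMatrix (Adj (i + 1)) =
      relMatrix (Adj (i + 1)) * relMatrix (Adj i) * relMatrix (Adj (i + 1)) *
        relMatrix (Adj i) := by
  have hword : relMatrix (Adj (B := B) (n := n) i) * relMatrix (Adj (i + 1)) * relMatrix (Adj i) *
      relMatrix (Adj (i + 1)) =
        relMatrix (Comp (Comp (Comp (Adj i) (Adj (i + 1))) (Adj i)) (Adj (i + 1))) := by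
    rw [relMatrix_adj_mul_adj (by omega),
      relMatrix_mul fun _ _ _ _ => hB.eq_of_comp_of_adj hin.le,
      relMatrix_mul fun _ _ _ _ => hB.eq_of_comp_of_comp hin]
  have hsymm := relMatrix_transpose (R := Comp (Comp (Comp (Adj (B := B) (n := n) i)
    (Adj (i + 1))) (Adj i)) (Adj (i + 1))) fun C D =>
      ⟨hB.comp_adj_swap hi hin, hB.comp_adj_swap hi hin⟩
  rw [← hword] at hsymm
  rw [← hsymm]
  simp only [Matrix.transpose_mul, relMatrix_adj_transpose, mul_assoc]

lemma isBraidB_heckeGen : IsBraidB (heckeGen B n) n := by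
  refine ⟨fun i j hij hj => ?_, fun i hi hin => ?_, fun hn => ?_⟩
  · exact hB.relMatrix_adj_commute (by omega) (by omega) (by omega) (by omega) (by omega)
  · obtain ⟨k, hk⟩ : ∃ k, n - (i + 1) = k := ⟨_, rfl⟩
    simp only [heckeGen, hk, show n - i = k + 1 by omega]
    exact (hB.relMatrix_adj_braid (by omega) (by omega)).symm
  · obtain ⟨k, hk⟩ : ∃ k, n - 1 = k := ⟨_, rfl⟩
    simp only [heckeGen, hk, show n - 0 = k + 1 by omega]
    simpa only [mul_assoc] using (hB.relMatrix_adj_braid_last (by omega) (by omega))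

end IsSymplectic

end Braid

section LongestWordSupport

open SFlag

variable {F V : Type} [Field F] [AddCommGroup V] [Module F V] {B : V →ₗ[F] V →ₗ[F] F} {n i j : ℕ}
  {C C' D X Y : Chamber B n}

/-- Relations satisfied by chambers `C` and `C'` that are joined by a gallery of type
`j, j + 1, …, n, …, j + 1, j`. -/
structure PalindromeRel (j : ℕ) (C C' : Chamber B n) : Prop where
  space_eq : ∀ k < j, C.space k = C'.space k
  inf_bperp_le : ∀ i, j ≤ i → i ≤ n → C.space i ⊓ bperp B (C'.space j) ≤ C'.space i
  inf_le : C.space n ⊓ C'.space j ≤ C.space (j - 1)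

lemma flagOpp_iff : FlagOpp C D ↔ ∀ i ≤ n, SpaceOpp B (C.space i) (D.space i) := by
  refine ⟨fun h i hi => ?_, fun h i hi => h i (Finset.mem_Icc.1 hi).2⟩
  rcases Nat.eq_zero_or_pos i with rfl | h0
  · rw [SpaceOpp, D.space_zero, inf_bot_eq]
  · exact h i (Finset.mem_Icc.2 ⟨h0, hi⟩)

namespace IsSymplectic

variable (hB : IsSymplectic B n)
include hB

lemma flagOpp_symm (h : FlagOpp C D) : FlagOpp D C :=
  flagOpp_iff.2 fun i hi =>
    hB.spaceOpp_symm (by rw [C.finrank_space hi, D.finrank_space hi]) (flagOpp_iff.1 h i hi)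

lemma space_inf_of_adj (hi : 1 ≤ i) (hin : i ≤ n) (h : Adj i C D) :
    C.space i ⊓ D.space i = C.space (i - 1) := by
  have := hB.finiteDimensional
  obtain ⟨k, rfl⟩ : ∃ k, i = k + 1 := ⟨i - 1, by omega⟩
  exact inf_eq_of_finrank_eq_add_one (C.finrank_space (by omega)) (C.finrank_space hin)
    (D.finrank_space hin) (C.space_le (by omega) hin)
    (by rw [h.2 _ (by omega)]; exact D.space_le (by omega) hin) h.space_ne

lemma space_sup_of_adj (hi : 1 ≤ i) (hin : i < n) (h : Adj i C D) :
    C.space i ⊔ D.space i = C.space (i + 1) := by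
  have := hB.finiteDimensional
  obtain ⟨k, rfl⟩ : ∃ k, i = k + 1 := ⟨i - 1, by omega⟩
  exact (finrank_inf_and_sup_eq_of_finrank_eq_add_two (C.finrank_space hin)
    (C.finrank_space (by omega)) (D.finrank_space (by omega)) (C.space_le (by omega) hin)
    (by rw [h.2 _ (by omega)]; exact D.space_le (by omega) hin) h.space_ne).2

lemma palindromeRel_of_adj (hn : 1 ≤ n) (h : Adj n C C') : PalindromeRel n C C' where
  space_eq k hk := h.2 k (by omega)
  inf_bperp_le i hi hin := by
    obtain rfl : i = n := by omega
    rw [hB.bperp_eq_self (C'.isTotIso_space _) (C'.finrank_space le_rfl)]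
    exact inf_le_right
  inf_le := (hB.space_inf_of_adj hn le_rfl h).le

lemma inf_bperp_le_of_adj_of_palindromeRel (hj : 1 ≤ j) (hCX : Adj j C X)
    (hXY : PalindromeRel (j + 1) X Y) (hYC' : Adj j Y C') (hji : j < i) (hin : i ≤ n) :
    C.space i ⊓ bperp B (C'.space j) ≤ C'.space i := by
  rintro v ⟨hvC, hvC'⟩
  rw [← hYC'.2 i (by omega)]
  refine hXY.inf_bperp_le i hji hin ⟨hCX.2 i (by omega) ▸ hvC, ?_⟩
  rw [← hB.space_sup_of_adj hj (by omega) hYC', SetLike.mem_coe, mem_bperp]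
  intro w hw
  obtain ⟨y, hy, c, hc, rfl⟩ := Submodule.mem_sup.1 hw
  have hyC : y ∈ C.space i := by
    rw [hCX.2 i (by omega)]
    exact X.space_le hji.le hin (hXY.space_eq j (by omega) ▸ hy)
  rw [map_add, LinearMap.add_apply, C.isTotIso_space i y hyC v hvC, mem_bperp.1 hvC' c hc, add_zero]

lemma palindromeRel_of_adj_of_adj (hj : 1 ≤ j) (hjn : j < n) (hCX : Adj j C X)
    (hXY : PalindromeRel (j + 1) X Y) (hYC' : Adj j Y C') : PalindromeRel j C C' := by
  have hXY_inf : C.space n ⊓ C'.space (j + 1) ≤ X.space j := by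
    rw [hCX.2 n (by omega), ← hYC'.2 (j + 1) (by omega)]
    exact hXY.inf_le
  have hlow : ∀ k < j, C.space k = C'.space k := fun k hk => by
    rw [hCX.2 k (by omega), hXY.space_eq k (by omega), hYC'.2 k (by omega)]
  have hperp : ∀ i, j < i → i ≤ n → C.space i ⊓ bperp B (C'.space j) ≤ C'.space i :=
    fun i => hB.inf_bperp_le_of_adj_of_palindromeRel hj hCX hXY hYC'
  refine ⟨hlow, fun i hi hin => ?_, ?_⟩
  · obtain rfl | hji := hi.eq_or_lt
    · have hC' : C.space j ⊓ bperp B (C'.space j) ≤ C'.space (j + 1) :=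
        (inf_le_inf_right _ (C.space_le (by omega) hjn)).trans (hperp (j + 1) (by omega) hjn)
      have hX : C.space j ⊓ bperp B (C'.space j) ≤ X.space j :=
        (le_inf (inf_le_left.trans (C.space_le hin le_rfl)) hC').trans hXY_inf
      refine (le_inf inf_le_left hX).trans ?_
      rw [hB.space_inf_of_adj hj hin hCX, hlow _ (by omega)]
      exact C'.space_le (by omega) hin
    · exact hperp i hji hin
  · have hY : C.space n ⊓ C'.space j ≤ Y.space j := hXY.space_eq j (by omega) ▸
      (inf_le_inf_left _ (C'.space_le (by omega) hjn)).trans hXY_inf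
    refine (le_inf hY inf_le_right).trans ?_
    rw [hB.space_inf_of_adj hj hjn.le hYC', hlow _ (by omega), hYC'.2 _ (by omega)]

end IsSymplectic

lemma exists_ne_zero_of_mul_apply_ne_zero {X : Type*} [Fintype X] {M N : Matrix X X ℝ} {x y : X}
    (h : (M * N) x y ≠ 0) : ∃ z, M x z ≠ 0 ∧ N z y ≠ 0 := by
  rw [Matrix.mul_apply] at h
  obtain ⟨z, _, hz⟩ := Finset.exists_ne_zero_of_sum_ne_zero h
  exact ⟨z, left_ne_zero_of_mul hz, right_ne_zero_of_mul hz⟩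

lemma adj_of_heckeGen_ne_zero {m : ℕ} (h : heckeGen B n m C D ≠ 0) : Adj (n - m) C D :=
  by_contra fun hne => h (if_neg hne)

variable [Fintype (Chamber B n)]

namespace IsSymplectic

variable (hB : IsSymplectic B n)
include hB

lemma palindromeRel_of_palindrome_ne_zero {m : ℕ} (hm : m < n) {C C' : Chamber B n}
    (h : palindrome (heckeGen B n) m C C' ≠ 0) : PalindromeRel (n - m) C C' := by
  induction m generalizing C C' with
  | zero => exact hB.palindromeRel_of_adj hm (adj_of_heckeGen_ne_zero h)
  | succ m ih =>
    obtain ⟨Y, h, hYC'⟩ := exists_ne_zero_of_mul_apply_ne_zero h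
    obtain ⟨X, hCX, hXY⟩ := exists_ne_zero_of_mul_apply_ne_zero h
    have hXY := ih (by omega) hXY
    rw [show n - m = n - (m + 1) + 1 by omega] at hXY
    exact hB.palindromeRel_of_adj_of_adj (by omega) (by omega) (adj_of_heckeGen_ne_zero hCX) hXY
      (adj_of_heckeGen_ne_zero hYC')

lemma inf_bperp_le_of_longestWord_ne_zero {m : ℕ} (hm : m ≤ n) {C D : Chamber B n}
    (h : longestWord (heckeGen B n) m C D ≠ 0) :
    (∀ k ≤ n - m, C.space k = D.space k) ∧
      ∀ i ≤ n, C.space i ⊓ bperp B (D.space i) ≤ D.space (n - m) := by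
  induction m generalizing C D with
  | zero =>
    obtain rfl : C = D := by_contra fun hne => h (Matrix.one_apply_ne hne)
    exact ⟨fun _ _ => rfl, fun i hi => inf_le_left.trans (C.space_le hi le_rfl)⟩
  | succ m ih =>
    obtain ⟨C', hCC', hC'D⟩ := exists_ne_zero_of_mul_apply_ne_zero h
    have hCC' := hB.palindromeRel_of_palindrome_ne_zero hm hCC'
    obtain ⟨hlow, hperp⟩ := ih (by omega) hC'D
    have hCD : ∀ k ≤ n - (m + 1), C.space k = D.space k := fun k hk => by
      rw [hCC'.space_eq k (by omega), hlow k (by omega)]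
    refine ⟨hCD, fun i hi => ?_⟩
    rcases Nat.lt_or_ge i (n - m) with him | him
    · exact inf_le_left.trans (hCD i (by omega) ▸ D.space_le (by omega) (by omega))
    · have hC' : C.space i ⊓ bperp B (D.space i) ≤ C'.space i :=
        (inf_le_inf_left _ (hlow (n - m) le_rfl ▸ bperp_anti (D.space_le him hi))).trans
          (hCC'.inf_bperp_le i him hi)
      have hD : C.space i ⊓ bperp B (D.space i) ≤ C'.space (n - m) :=
        (le_inf hC' inf_le_right).trans (hlow (n - m) le_rfl ▸ hperp i hi)
      exact ((le_inf (inf_le_left.trans (C.space_le hi le_rfl)) hD).trans hCC'.inf_le).trans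
        (hCD (n - m - 1) (by omega) ▸ D.space_le (by omega) (by omega))

lemma flagOpp_of_longestWord_ne_zero (h : longestWord (heckeGen B n) n C D ≠ 0) :
    FlagOpp C D := by
  refine hB.flagOpp_symm (flagOpp_iff.2 fun i hi => ?_)
  have hle := (hB.inf_bperp_le_of_longestWord_ne_zero le_rfl h).2 i hi
  rw [Nat.sub_self, D.space_zero, inf_comm] at hle
  exact le_bot_iff.1 hle

end IsSymplectic

end LongestWordSupport

section Avoiding

variable {F V : Type*} [Field F] [AddCommGroup V] [Module F V]

lemma exists_mem_forall_notMem [Finite F] {W : Submodule F V} {s : Finset (Submodule F V)}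
    (hs : s.card < Nat.card F) (hW : ∀ A ∈ s, ¬ W ≤ A) : ∃ v ∈ W, ∀ A ∈ s, v ∉ A := by
  have hproper (A : s) : A.1.comap W.subtype ≠ ⊤ := fun h =>
    hW A A.2 (Submodule.comap_subtype_eq_top.1 h)
  obtain ⟨v, -, hv⟩ := Set.exists_of_ssubset <|
    Submodule.iUnion_ssubset_of_forall_ne_top_of_card_lt Finset.univ
      (fun A : s => A.1.comap W.subtype) hproper
      (by rw [ENat.card_eq_coe_natCard]; simpa using hs)
  exact ⟨v, v.2, fun A hA hvA => hv (Set.mem_iUnion₂.2 ⟨⟨A, hA⟩, Finset.mem_univ _, hvA⟩)⟩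

end Avoiding

section OppositeExtension

open SFlag

variable {F V : Type} [Field F] [AddCommGroup V] [Module F V] {B : V →ₗ[F] V →ₗ[F] F} {n : ℕ}

lemma SpaceOpp.mono_right {S T U : Submodule F V} (h : SpaceOpp B S U) (hTU : T ≤ U) :
    SpaceOpp B S T := by
  rw [SpaceOpp, eq_bot_iff] at h ⊢
  exact (inf_le_inf_left _ hTU).trans h

namespace IsSymplectic

variable (hB : IsSymplectic B n)
include hB

lemma exists_mem_forall_apply_ne_zero [Finite F] {W : Submodule F V} {s : Finset V}
    (hs : s.card < Nat.card F) (hW : ∀ c ∈ s, c ∉ bperp B W) :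
    ∃ p ∈ W, ∀ c ∈ s, B c p ≠ 0 := by
  obtain ⟨p, hp, hps⟩ := exists_mem_forall_notMem (W := W)
    (s := s.image fun c => LinearMap.ker (B c)) (Finset.card_image_le.trans_lt hs) (by
      simp only [Finset.mem_image, forall_exists_index, and_imp, forall_apply_eq_imp_iff₂]
      exact fun c hc hle => hW c hc (mem_bperp.2 fun w hw => hB.apply_eq_zero_symm (hle hw)))
  exact ⟨p, hp, fun c hc => hps _ (Finset.mem_image_of_mem _ hc)⟩

variable {E : Chamber B n} {M : Submodule F V} {i j : ℕ}

lemma finrank_bperp_inf_space (hij : i ≤ j) (hj : j ≤ n) (hM : finrank F M = i)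
    (h : SpaceOpp B M (E.space i)) : finrank F ↥(bperp B M ⊓ E.space j) = j - i := by
  have := hB.finiteDimensional
  have hE := E.finrank_space hj
  have hEi := E.finrank_space (hij.trans hj)
  have hlower := Submodule.finrank_sup_add_finrank_inf_eq (bperp B M) (E.space j)
  have hbperp := hB.finrank_bperp_add M
  have hle : finrank F ↥(bperp B M ⊔ E.space j) ≤ 2 * n := hB.finrank_eq ▸ Submodule.finrank_le _
  have hupper := Submodule.finrank_sup_add_finrank_inf_eq (bperp B M ⊓ E.space j) (E.space i)
  rw [inf_assoc, inf_eq_right.2 (E.space_le hij hj), show bperp B M ⊓ E.space i = ⊥ from h,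
    finrank_bot] at hupper
  have hle' := Submodule.finrank_mono
    (sup_le inf_le_right (E.space_le hij hj) : bperp B M ⊓ E.space j ⊔ E.space i ≤ E.space j)
  omega

lemma exists_spaceOpp_sup_span_singleton_iff (hi : i < n) (hM : finrank F M = i)
    (h : SpaceOpp B M (E.space i)) :
    ∃ c ∈ bperp B M ⊓ E.space (i + 1), c ≠ 0 ∧
      ∀ p, SpaceOpp B (M ⊔ Submodule.span F {p}) (E.space (i + 1)) ↔ B c p ≠ 0 := by
  obtain ⟨⟨c, hc⟩, hc0, hspan⟩ := finrank_eq_one_iff'.1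
    (Nat.add_sub_cancel_left i 1 ▸ hB.finrank_bperp_inf_space (j := i + 1) (by omega) hi hM h)
  have hc0 : c ≠ 0 := fun h => hc0 (Subtype.ext h)
  refine ⟨c, hc, hc0, fun p => spaceOpp_iff.trans ⟨fun ho hcp => hc0 (ho c hc.2 ?_),
    fun hcp v hv hvp => ?_⟩⟩
  · intro w hw
    obtain ⟨m, hm, a, rfl⟩ := mem_sup_span_singleton_iff.1 hw
    simp [mem_bperp.1 hc.1 m hm, hB.apply_eq_zero_symm hcp]
  · have hvM : v ∈ bperp B M := mem_bperp.2 fun m hm => hvp m (Submodule.mem_sup_left hm)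
    obtain ⟨a, ha⟩ := hspan ⟨v, hvM, hv⟩
    obtain rfl : a • c = v := congrArg Subtype.val ha
    have hpc := hvp p (Submodule.mem_sup_right (Submodule.mem_span_singleton_self p))
    rw [map_smul, smul_eq_mul] at hpc
    rw [(mul_eq_zero.1 hpc).resolve_right fun h => hcp (hB.apply_eq_zero_symm h), zero_smul]

lemma spaceOpp_bperp_space_add_one (hi : i < n) (hM : finrank F M = i)
    (h : SpaceOpp B M (E.space i)) : SpaceOpp B (bperp B M) (E.space (i + 1)) := by
  have h' := spaceOpp_iff.1 (hB.spaceOpp_symm (by rw [hM, E.finrank_space hi.le]) h)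
  rw [SpaceOpp, hB.bperp_bperp, Submodule.eq_bot_iff]
  exact fun v hv => h' v hv.1 fun w hw =>
    E.isTotIso_space (i + 1) w (E.space_le (by omega) hi hw) v hv.2

lemma finrank_sup_span_singleton_of_spaceOpp {p : V} (hi : i < n) (hM : finrank F M = i)
    (h : SpaceOpp B (M ⊔ Submodule.span F {p}) (E.space (i + 1))) :
    finrank F ↥(M ⊔ Submodule.span F {p}) = i + 1 := by
  have := hB.finiteDimensional
  rw [Submodule.finrank_sup_span_singleton fun hp => ?_, hM]
  rw [sup_eq_left.2 ((Submodule.span_singleton_le_iff_mem _ _).2 hp)] at h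
  have hinf := hB.finrank_bperp_inf_space (j := i + 1) (by omega) hi hM
    (h.mono_right (E.space_le (by omega) hi))
  rw [show bperp B M ⊓ E.space (i + 1) = ⊥ from h, finrank_bot] at hinf
  omega

variable [Finite F] {s : Finset (Chamber B n)} (hne : s.Nonempty)
  (hs : s.card < Nat.card F)
include hne hs

lemma exists_forall_spaceOpp_sup_span_singleton {T : Submodule F V} (hi : i < n)
    (hM : finrank F M = i) (hiso : IsTotIso B M) (h : ∀ E ∈ s, SpaceOpp B M (E.space i))
    (hTM : T ≤ bperp B M) (hT : ∀ E ∈ s, SpaceOpp B T (E.space (i + 1))) :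
    ∃ p ∈ T, IsTotIso B (M ⊔ Submodule.span F {p}) ∧
      finrank F ↥(M ⊔ Submodule.span F {p}) = i + 1 ∧
      ∀ E ∈ s, SpaceOpp B (M ⊔ Submodule.span F {p}) (E.space (i + 1)) := by
  obtain ⟨E, hE⟩ := hne
  choose! c hc hc0 hciff using fun E (hE : E ∈ s) =>
    hB.exists_spaceOpp_sup_span_singleton_iff hi hM (h E hE)
  obtain ⟨p, hp, hps⟩ := hB.exists_mem_forall_apply_ne_zero (W := T) (s := s.image c)
    (Finset.card_image_le.trans_lt hs) (Finset.forall_mem_image.2 fun E hE hcT =>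
      hc0 E hE (spaceOpp_iff.1 (hT E hE) _ (hc E hE).2 (mem_bperp.1 hcT)))
  rw [Finset.forall_mem_image] at hps
  have hp_opp (E) (hE : E ∈ s) := (hciff E hE p).2 (hps hE)
  exact ⟨p, hp, hB.isTotIso_sup_span_singleton hiso (hTM hp),
    hB.finrank_sup_span_singleton_of_spaceOpp hi hM (hp_opp E hE), hp_opp⟩

lemma exists_flagOpp_space_eq {T : Submodule F V} (hi : i ≤ n) (hrank : finrank F T = i)
    (hiso : IsTotIso B T) (hT : ∀ E ∈ s, SpaceOpp B T (E.space i)) :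
    ∃ D : Chamber B n, D.space i = T ∧ ∀ E ∈ s, FlagOpp D E := by
  have := hB.finiteDimensional
  refine (exists_forall_space (P := fun k M =>
      (∀ E ∈ s, SpaceOpp B M (E.space k)) ∧ (k ≤ i → M ≤ T) ∧ (i ≤ k → T ≤ M)) ?_ ?_).imp
    fun D hD => ⟨le_antisymm ((hD i hi).2.1 le_rfl) ((hD i hi).2.2 le_rfl),
      fun E hE => flagOpp_iff.2 fun k hk => (hD k hk).1 E hE⟩
  · refine ⟨fun E _ => ?_, fun _ => bot_le, fun h => ?_⟩
    · rw [SpaceOpp, E.space_zero, inf_bot_eq]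
    · rw [Submodule.finrank_eq_zero.1 (hrank.trans (by omega) : finrank F T = 0)]
  · rintro k hk M ⟨hopp, hMT, hTM⟩ hMiso hM
    rcases Nat.lt_or_ge k i with hki | hik
    · obtain ⟨p, hp, hp_iso, hp_rank, hp_opp⟩ :=
        hB.exists_forall_spaceOpp_sup_span_singleton hne hs hk hM hMiso hopp
          ((isTotIso_iff_le_bperp.1 hiso).trans (bperp_anti (hMT hki.le)))
          fun E hE => (hT E hE).mono_right (E.space_le hki hi)
      have hle : M ⊔ Submodule.span F {p} ≤ T :=
        sup_le (hMT hki.le) ((Submodule.span_singleton_le_iff_mem _ _).2 hp)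
      exact ⟨_, le_sup_left, hp_iso, hp_rank, hp_opp, fun _ => hle, fun h =>
        (Submodule.eq_of_le_of_finrank_le hle (by omega)).ge⟩
    · obtain ⟨p, -, hp_iso, hp_rank, hp_opp⟩ :=
        hB.exists_forall_spaceOpp_sup_span_singleton hne hs hk hM hMiso hopp le_rfl
          fun E hE => hB.spaceOpp_bperp_space_add_one hk hM (hopp E hE)
      exact ⟨_, le_sup_left, hp_iso, hp_rank, hp_opp, by omega,
        fun _ => (hTM hik).trans le_sup_left⟩

lemma exists_forall_flagOpp : ∃ D : Chamber B n, ∀ E ∈ s, FlagOpp D E := by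
  obtain ⟨D, -, hD⟩ := hB.exists_flagOpp_space_eq hne hs n.zero_le (finrank_bot F V) isTotIso_bot
    fun E _ => by rw [SpaceOpp, E.space_zero, inf_bot_eq]
  exact ⟨D, hD⟩

omit hs hne in
lemma exists_flagOpp_agreeing (hF : 1 < Nat.card F) {D : Chamber B n} (hD : FlagOpp D E)
    (hi : i < n) {U : Submodule F V} (hDU : D.space i ≤ U) (hiso : IsTotIso B U)
    (hrank : finrank F U = i + 1) (hU : SpaceOpp B U (E.space (i + 1))) :
    ∃ X : Chamber B n, FlagOpp X E ∧ (∀ k ≤ i, X.space k = D.space k) ∧ X.space (i + 1) = U := by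
  refine (exists_forall_space (P := fun k M =>
      SpaceOpp B M (E.space k) ∧ (k ≤ i → M = D.space k) ∧ (k = i + 1 → M = U)) ?_ ?_).imp
    fun X hX => ⟨flagOpp_iff.2 fun k hk => (hX k hk).1, fun k hk => (hX k (by omega)).2.1 hk,
      (hX _ hi).2.2 rfl⟩
  · exact ⟨by rw [SpaceOpp, E.space_zero, inf_bot_eq], fun _ => D.space_zero.symm, by omega⟩
  · rintro k hk M ⟨hopp, hMD, -⟩ hMiso hM
    rcases Nat.lt_trichotomy k i with hki | rfl | hki
    · exact ⟨D.space (k + 1), hMD hki.le ▸ D.space_le (by omega) hk, D.isTotIso_space _,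
        D.finrank_space hk, flagOpp_iff.1 hD _ hk, fun _ => rfl, by omega⟩
    · exact ⟨U, hMD le_rfl ▸ hDU, hiso, hrank, hU, by omega, fun _ => rfl⟩
    · obtain ⟨p, -, hp_iso, hp_rank, hp_opp⟩ :=
        hB.exists_forall_spaceOpp_sup_span_singleton (s := {E}) (by simp) (by simpa) hk hM hMiso
          (by simpa) le_rfl (by simpa using hB.spaceOpp_bperp_space_add_one hk hM hopp)
      exact ⟨_, le_sup_left, hp_iso, hp_rank, by simpa using hp_opp, by omega, by omega⟩

end IsSymplectic

end OppositeExtension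

section OppositeConnectivity

open SFlag

variable {F V α : Type} [Field F] [AddCommGroup V] [Module F V] {B : V →ₗ[F] V →ₗ[F] F}
  {n i : ℕ} {f : Chamber B n → α} {D D' E : Chamber B n}

/-- `f` takes the same value on any two chambers opposite `E` that share their subspaces of
dimension at most `i`. -/
def ConstOnOpp (f : Chamber B n → α) (E : Chamber B n) (i : ℕ) : Prop :=
  ∀ D D' : Chamber B n, FlagOpp D E → FlagOpp D' E → (∀ k ≤ i, D.space k = D'.space k) → f D = f D'

namespace IsSymplectic

variable (hB : IsSymplectic B n)
include hB

lemma disjoint_space_space_add_one (hD : FlagOpp D E) (hi : i + 1 ≤ n) :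
    Disjoint (D.space i) (E.space (i + 1)) := by
  rw [disjoint_iff, Submodule.eq_bot_iff]
  exact fun v hv => spaceOpp_iff.1 (flagOpp_iff.1 (hB.flagOpp_symm hD) i (by omega)) v hv.1
    fun w hw => E.isTotIso_space (i + 1) w (E.space_le (by omega) hi hw) v hv.2

lemma exists_common_neighbor [Finite F] (hF : 3 < Nat.card F) (hi : i + 1 < n) (hD : FlagOpp D E)
    (hD' : FlagOpp D' E) (heq : D.space i = D'.space i)
    (hdisj : Disjoint (bperp B (D.space i) ⊓ E.space (i + 2))
      (D.space (i + 1) ⊔ D'.space (i + 1))) :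
    ∃ r ∈ bperp B (D.space (i + 1) ⊔ D'.space (i + 1)),
      SpaceOpp B (D.space i ⊔ Submodule.span F {r}) (E.space (i + 1)) ∧
      SpaceOpp B (D.space (i + 1) ⊔ Submodule.span F {r}) (E.space (i + 2)) ∧
      SpaceOpp B (D'.space (i + 1) ⊔ Submodule.span F {r}) (E.space (i + 2)) := by
  have hopp {X : Chamber B n} (hX : FlagOpp X E) (k) (hk : k < n) :=
    hB.exists_spaceOpp_sup_span_singleton_iff hk (X.finrank_space hk.le) (flagOpp_iff.1 hX k hk.le)
  obtain ⟨c, hc, hc0, hciff⟩ := hopp hD i (by omega)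
  obtain ⟨x, hx, hx0, hxiff⟩ := hopp hD (i + 1) hi
  obtain ⟨y, hy, hy0, hyiff⟩ := hopp hD' (i + 1) hi
  have hbperp : bperp B (D.space (i + 1)) ≤ bperp B (D.space i) :=
    bperp_anti (D.space_le (by omega) (by omega))
  have hbperp' : bperp B (D'.space (i + 1)) ≤ bperp B (D.space i) :=
    heq ▸ bperp_anti (D'.space_le (by omega) (by omega))
  have hnotMem {v : V} (hv : v ∈ bperp B (D.space i) ⊓ E.space (i + 2)) (hv0 : v ≠ 0) :
      v ∉ bperp B (bperp B (D.space (i + 1) ⊔ D'.space (i + 1))) := fun hmem =>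
    hv0 (Submodule.disjoint_def.1 hdisj v hv (by rwa [hB.bperp_bperp] at hmem))
  obtain ⟨r, hr, hcxy⟩ := hB.exists_mem_forall_apply_ne_zero (s := {c, x, y})
    (Finset.card_le_three.trans_lt hF) (by
      simp only [Finset.mem_insert, Finset.mem_singleton, forall_eq_or_imp, forall_eq]
      exact ⟨hnotMem (inf_le_inf_left _ (E.space_le (by omega) hi) hc) hc0,
        hnotMem (inf_le_inf_right _ hbperp hx) hx0, hnotMem (inf_le_inf_right _ hbperp' hy) hy0⟩)
  simp only [Finset.mem_insert, Finset.mem_singleton, forall_eq_or_imp, forall_eq] at hcxy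
  exact ⟨r, hr, (hciff r).2 hcxy.1, (hxiff r).2 hcxy.2.1, (hyiff r).2 hcxy.2.2⟩

lemma exists_spaceOpp_and_disjoint [Finite F] (hF : 3 < Nat.card F) (hi : i + 1 < n)
    (hD : FlagOpp D E) (hD' : FlagOpp D' E) :
    ∃ p ∈ bperp B (D.space i), SpaceOpp B (D.space i ⊔ Submodule.span F {p}) (E.space (i + 1)) ∧
      Disjoint (bperp B (D.space i) ⊓ E.space (i + 2))
        (D.space (i + 1) ⊔ Submodule.span F {p}) ∧
      Disjoint (bperp B (D.space i) ⊓ E.space (i + 2))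
        (D'.space (i + 1) ⊔ Submodule.span F {p}) := by
  have := hB.finiteDimensional
  have hopp := flagOpp_iff.1 hD i (by omega)
  have hrank := D.finrank_space (i := i) (by omega)
  obtain ⟨c, hc, hc0, hciff⟩ := hB.exists_spaceOpp_sup_span_singleton_iff (by omega) hrank hopp
  set Q := bperp B (D.space i) ⊓ E.space (i + 2)
  have hQ : finrank F Q = i + 2 - i :=
    hB.finrank_bperp_inf_space (by omega) (by omega) hrank hopp
  have hbperp := hB.finrank_bperp_add (D.space i)
  have hsup (X : Chamber B n) : ¬ bperp B (D.space i) ≤ Q ⊔ X.space (i + 1) := fun hle => by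
    have h1 := Submodule.finrank_mono hle
    have h2 := Submodule.finrank_add_le_finrank_add_finrank Q (X.space (i + 1))
    rw [X.finrank_space (by omega)] at h2
    omega
  have hker : ¬ bperp B (D.space i) ≤ LinearMap.ker (B c) := fun hle =>
    hc0 (spaceOpp_iff.1 (hB.spaceOpp_bperp_space_add_one (by omega) hrank hopp) c hc.2
      fun w hw => hB.apply_eq_zero_symm (hle hw))
  obtain ⟨p, hp, hps⟩ := exists_mem_forall_notMem (W := bperp B (D.space i))
    (s := {LinearMap.ker (B c), Q ⊔ D.space (i + 1), Q ⊔ D'.space (i + 1)})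
    (Finset.card_le_three.trans_lt hF) (by simp [hsup, hker])
  simp only [Finset.mem_insert, Finset.mem_singleton, forall_eq_or_imp, forall_eq] at hps
  have hdisj {X : Chamber B n} (hX : FlagOpp X E) (hpX : p ∉ Q ⊔ X.space (i + 1)) :
      Disjoint Q (X.space (i + 1) ⊔ Submodule.span F {p}) :=
    ((hB.disjoint_space_space_add_one hX (by omega)).symm.mono_left
      inf_le_right).disjoint_sup_right_of_disjoint_sup_left
      (Submodule.disjoint_span_singleton_of_notMem hpX)
  exact ⟨p, hp, (hciff p).2 hps.1, hdisj hD hps.2.1, hdisj hD' hps.2.2⟩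

section Step

variable [Finite F] (hF : 3 < Nat.card F) (hi : i + 1 < n) (hf : ConstOnOpp f E (i + 1))
  (hpanel : ∀ X Y, FlagOpp X E → FlagOpp Y E → SamePanel (i + 1) X Y → f X = f Y)
  (hD : FlagOpp D E) (hD' : FlagOpp D' E) (hDD' : ∀ k ≤ i, D.space k = D'.space k)
include hF hi hf hpanel hD hD' hDD'

lemma eq_of_space_le_of_space_le {U : Submodule F V} (hDU : D.space (i + 1) ≤ U)
    (hDU' : D'.space (i + 1) ≤ U) (hiso : IsTotIso B U) (hrank : finrank F U = i + 2)
    (hU : SpaceOpp B U (E.space (i + 2))) : f D = f D' := by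
  obtain ⟨X, hX, hXD, hXU⟩ :=
    hB.exists_flagOpp_agreeing (by omega) hD hi hDU hiso hrank hU
  obtain ⟨Y, hXY, hYD'⟩ := hB.exists_samePanel_space_eq X (i := i + 1) (by omega) hi.le
    (S := D'.space (i + 1))
    (by rw [Nat.add_sub_cancel, hXD i (by omega), hDD' i le_rfl]
        exact D'.space_le (by omega) (by omega))
    (by rwa [panelTop, if_pos hi, hXU]) (D'.finrank_space hi.le)
  have hY : FlagOpp Y E := flagOpp_iff.2 fun k hk => by
    obtain rfl | hki := eq_or_ne k (i + 1)
    · exact hYD' ▸ flagOpp_iff.1 hD' _ hk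
    · exact hXY k hki ▸ flagOpp_iff.1 hX k hk
  calc f D = f X := (hf X D hX hD hXD).symm
    _ = f Y := hpanel X Y hX hY hXY
    _ = f D' := hf Y D' hY hD' fun k hk => by
      obtain rfl | hki := eq_or_ne k (i + 1)
      · exact hYD'
      · rw [← hXY k hki, hXD k hk, hDD' k (by omega)]

lemma eq_of_disjoint_space_sup (hdisj : Disjoint (bperp B (D.space i) ⊓ E.space (i + 2))
    (D.space (i + 1) ⊔ D'.space (i + 1))) : f D = f D' := by
  obtain ⟨r, hr, hrE, hrD, hrD'⟩ :=
    hB.exists_common_neighbor hF hi hD hD' (hDD' i le_rfl) hdisj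
  have hle : D.space i ≤ D.space (i + 1) := D.space_le (by omega) hi.le
  have hle' : D.space i ≤ D'.space (i + 1) :=
    hDD' i le_rfl ▸ D'.space_le (by omega) hi.le
  have hr0 : r ∈ bperp B (D.space i) := bperp_anti (hle.trans le_sup_left) hr
  obtain ⟨R, hR, hRD, hRr⟩ := hB.exists_flagOpp_agreeing (by omega) hD (by omega) le_sup_left
    (hB.isTotIso_sup_span_singleton (D.isTotIso_space i) hr0)
    (hB.finrank_sup_span_singleton_of_spaceOpp (by omega) (D.finrank_space (by omega)) hrE) hrE
  have heqR {X : Chamber B n} (hX : FlagOpp X E) (hXD : ∀ k ≤ i, X.space k = D.space k)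
      (hDX : D.space i ≤ X.space (i + 1)) (hrX : r ∈ bperp B (X.space (i + 1)))
      (hXr : SpaceOpp B (X.space (i + 1) ⊔ Submodule.span F {r}) (E.space (i + 2))) : f X = f R :=
    hB.eq_of_space_le_of_space_le hF hi hf hpanel hX hR
      (fun k hk => (hXD k hk).trans (hRD k hk).symm) le_sup_left
      (hRr ▸ sup_le_sup_right hDX _)
      (hB.isTotIso_sup_span_singleton (X.isTotIso_space _) hrX)
      (hB.finrank_sup_span_singleton_of_spaceOpp hi (X.finrank_space hi.le) hXr) hXr
  exact (heqR hD (fun _ _ => rfl) hle (bperp_anti le_sup_left hr) hrD).trans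
    (heqR hD' (fun k hk => (hDD' k hk).symm) hle' (bperp_anti le_sup_right hr) hrD').symm

end Step

lemma constOnOpp_of_constOnOpp_add_one [Finite F] (hF : 3 < Nat.card F) (hi : i + 1 < n)
    (hf : ConstOnOpp f E (i + 1))
    (hpanel : ∀ X Y, FlagOpp X E → FlagOpp Y E → SamePanel (i + 1) X Y → f X = f Y) :
    ConstOnOpp f E i := by
  intro D D' hD hD' hDD'
  obtain ⟨p, hp, hpE, hpD, hpD'⟩ := hB.exists_spaceOpp_and_disjoint hF hi hD hD'
  obtain ⟨R, hR, hRD, hRp⟩ := hB.exists_flagOpp_agreeing (by omega) hD (by omega) le_sup_left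
    (hB.isTotIso_sup_span_singleton (D.isTotIso_space i) hp)
    (hB.finrank_sup_span_singleton_of_spaceOpp (by omega) (D.finrank_space (by omega)) hpE) hpE
  have heqR {X : Chamber B n} (hX : FlagOpp X E) (hXD : ∀ k ≤ i, X.space k = D.space k)
      (hdisj : Disjoint (bperp B (D.space i) ⊓ E.space (i + 2))
        (X.space (i + 1) ⊔ Submodule.span F {p})) : f X = f R := by
    refine hB.eq_of_disjoint_space_sup hF hi hf hpanel hX hR
      (fun k hk => (hXD k hk).trans (hRD k hk).symm) ?_
    have hDX : D.space i ≤ X.space (i + 1) := hXD i le_rfl ▸ X.space_le (by omega) hi.le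
    rwa [hXD i le_rfl, hRp, ← sup_assoc, sup_eq_left.2 hDX]
  exact (heqR hD (fun _ _ => rfl) hpD).trans (heqR hD' (fun k hk => (hDD' k hk).symm) hpD').symm

lemma constOnOpp [Finite F] (hF : 3 < Nat.card F) (hi : i < n)
    (hpanel : ∀ k, i < k → k ≤ n →
      ∀ X Y, FlagOpp X E → FlagOpp Y E → SamePanel k X Y → f X = f Y) :
    ConstOnOpp f E i := by
  induction hi.le using Nat.decreasingInduction with
  | self => omega
  | of_succ i hin ih =>
    obtain rfl | hlt := eq_or_lt_of_le (Nat.succ_le_of_lt hin)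
    · intro D D' hD hD' hDD'
      refine hpanel (i + 1) (by omega) le_rfl D D' hD hD' fun k hk => ?_
      rcases Nat.lt_or_ge i k with hik | hki
      · rw [D.space_of_lt (by omega), D'.space_of_lt (by omega)]
      · exact hDD' k hki
    · exact hB.constOnOpp_of_constOnOpp_add_one hF hlt
        (ih hlt fun k hk => hpanel k (by omega)) (hpanel (i + 1) (by omega) hin)

end IsSymplectic

end OppositeConnectivity

section Connectivity

open SFlag

variable {F V α : Type} [Field F] [AddCommGroup V] [Module F V] {B : V →ₗ[F] V →ₗ[F] F}
  {n i : ℕ} {f : Chamber B n → α} {C D : Chamber B n}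

lemma SFlag.exists_space_eq_of_le_of_ge (hi : i ≤ n) (h : C.space i = D.space i) :
    ∃ X : Chamber B n, (∀ k ≤ i, X.space k = D.space k) ∧ ∀ k ≥ i, X.space k = C.space k := by
  obtain ⟨X, hX⟩ := exists_space_eq (B := B) (n := n)
    (f := fun k => if k ≤ i then D.space k else C.space k)
    (by simp [D.space_zero])
    (fun k hk => by
      have hkn := (Finset.mem_Icc.1 hk).2
      by_cases hki : k ≤ i
      · rw [if_pos hki, D.finrank_space hkn]
      · rw [if_neg hki, C.finrank_space hkn])
    (by split_ifs; exacts [D.isTotIso_space n, C.isTotIso_space n])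
    (fun k hk => by
      rcases lt_trichotomy k i with hki | rfl | hki
      · simpa only [hki.le, Nat.succ_le_of_lt hki, if_true] using D.space_le k.le_succ hk
      · simpa only [le_rfl, if_true, Nat.not_succ_le_self, if_false, h] using
          h ▸ C.space_le k.le_succ hk
      · simpa only [not_le.2 hki, not_le.2 (hki.trans k.lt_succ_self), if_false] using
          C.space_le k.le_succ hk)
  refine ⟨X, fun k hk => by rw [hX k (hk.trans hi), if_pos hk], fun k hk => ?_⟩
  rcases lt_or_ge n k with hnk | hkn
  · rw [X.space_of_lt hnk, C.space_of_lt hnk]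
  · obtain rfl | hki := eq_or_ne k i
    · rw [hX k hkn, if_pos le_rfl, h]
    · rw [hX k hkn, if_neg (by omega)]

namespace IsSymplectic

variable (hB : IsSymplectic B n)
include hB

lemma eq_of_forall_le_space_eq [Finite F] (hF : 3 < Nat.card F) (hi : i < n)
    (hpanel : ∀ k, i < k → k ≤ n → ∀ X Y, SamePanel k X Y → f X = f Y)
    (h : ∀ k ≤ i, C.space k = D.space k) : f C = f D := by
  obtain ⟨E, hE⟩ := hB.exists_forall_flagOpp (s := {C, D}) (by simp)
    (Finset.card_le_two.trans_lt (by omega))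
  simp only [Finset.mem_insert, Finset.mem_singleton, forall_eq_or_imp, forall_eq] at hE
  exact hB.constOnOpp hF hi (fun k hik hk X Y _ _ => hpanel k hik hk X Y) C D
    (hB.flagOpp_symm hE.1) (hB.flagOpp_symm hE.2) h

lemma exists_space_eq_and_apply_eq (hi : i < n)
    (hpanel : ∀ k, 1 ≤ k → k ≤ i → ∀ X Y, SamePanel k X Y → f X = f Y) {T : Submodule F V}
    (hT : T ≤ C.space (i + 1)) (hrank : finrank F T = i) :
    ∃ Y : Chamber B n, Y.space i = T ∧ (∀ k > i, Y.space k = C.space k) ∧ f Y = f C := by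
  have := hB.finiteDimensional
  induction i generalizing T with
  | zero => exact ⟨C, by rw [C.space_zero, Submodule.finrank_eq_zero.1 hrank], fun _ _ => rfl, rfl⟩
  | succ i ih =>
    obtain ⟨L, hLC, hLT, hL⟩ : ∃ L ≤ C.space (i + 1), L ≤ T ∧ finrank F L = i := by
      have hC := C.space_le (Nat.le_succ i) (by omega)
      obtain rfl | hne := eq_or_ne T (C.space (i + 1))
      · exact ⟨C.space i, hC, hC, C.finrank_space (by omega)⟩
      · exact ⟨T ⊓ C.space (i + 1), inf_le_right, inf_le_left,
          (finrank_inf_and_sup_eq_of_finrank_eq_add_two (C.finrank_space (i := i + 2) hi) hrank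
            (C.finrank_space (by omega)) hT (C.space_le (by omega) hi) hne).1⟩
    obtain ⟨Y, hYL, hYC, hfY⟩ := ih (by omega) (fun k h1 hk => hpanel k h1 (by omega)) hLC hL
    obtain ⟨Z, hYZ, hZT⟩ := hB.exists_samePanel_space_eq Y (i := i + 1) (by omega) hi.le (S := T)
      (by rwa [Nat.add_sub_cancel, hYL])
      (by rwa [panelTop, if_pos hi, hYC _ (by omega)]) hrank
    refine ⟨Z, hZT, fun k hk => ?_, ?_⟩
    · rw [← hYZ k (by omega), hYC k (by omega)]
    · rw [← hfY, hpanel (i + 1) (by omega) le_rfl Y Z hYZ]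

lemma eq_of_forall_ge_space_eq (hi : i ≤ n)
    (hpanel : ∀ k, 1 ≤ k → k < i → ∀ X Y, SamePanel k X Y → f X = f Y)
    (h : ∀ k ≥ i, C.space k = D.space k) : f C = f D := by
  induction i generalizing C with
  | zero => exact congrArg f (SFlag.ext fun k _ => h k k.zero_le)
  | succ i ih =>
    obtain ⟨Y, hYD, hYC, hfY⟩ := hB.exists_space_eq_and_apply_eq (C := C) (T := D.space i) hi
      (fun k h1 hk => hpanel k h1 (by omega))
      (by rw [h _ le_rfl]; exact D.space_le i.le_succ hi) (D.finrank_space (by omega))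
    rw [← hfY]
    refine ih (by omega) (fun k h1 hk => hpanel k h1 (by omega)) fun k hk => ?_
    obtain rfl | hki := eq_or_ne k i
    · exact hYD
    · rw [hYC k (by omega), h k (by omega)]

variable [Finite F] (hF : 3 < Nat.card F)
include hF

lemma eq_of_space_eq (hi : i ≤ n)
    (hpanel : ∀ k, 1 ≤ k → k ≤ n → k ≠ i → ∀ X Y, SamePanel k X Y → f X = f Y)
    (h : C.space i = D.space i) : f C = f D := by
  obtain ⟨X, hXD, hXC⟩ := exists_space_eq_of_le_of_ge hi h
  refine (hB.eq_of_forall_ge_space_eq hi (fun k h1 hk => hpanel k h1 (by omega) (by omega))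
    fun k hk => (hXC k hk).symm).trans ?_
  obtain rfl | hlt := eq_or_lt_of_le hi
  · exact congrArg f (SFlag.ext fun k hk => hXD k (Finset.mem_Icc.1 hk).2)
  · exact hB.eq_of_forall_le_space_eq hF hlt
      (fun k hik hk => hpanel k (by omega) hk (by omega)) hXD

lemma eq_of_forall_samePanel
    (hpanel : ∀ k, 1 ≤ k → k ≤ n → ∀ X Y, SamePanel k X Y → f X = f Y) : f C = f D :=
  hB.eq_of_space_eq hF n.zero_le (fun k h1 hk _ => hpanel k h1 hk)
    (by rw [C.space_zero, D.space_zero])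

end IsSymplectic

end Connectivity

section ChamberHecke

open SFlag Matrix

variable {F V : Type} [Field F] [AddCommGroup V] [Module F V] {B : V →ₗ[F] V →ₗ[F] F}
  {n : ℕ} [Fintype (Chamber B n)] [Finite F]

namespace IsSymplectic

variable (hB : IsSymplectic B n)
include hB

lemma heckeGen_mulVec_eq_smul_iff {j : ℕ} (hj : j < n) {x : Chamber B n → ℝ} :
    heckeGen B n j *ᵥ x = (Nat.card F : ℝ) • x ↔ ∀ C D, SamePanel (n - j) C D → x C = x D :=
  hB.relMatrix_adj_mulVec_eq_smul_iff (by omega) (by omega)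

lemma isChamberHeckeB_heckeGen (hF : 3 < Nat.card F) :
    IsChamberHeckeB (heckeGen B n) n (Nat.card F) where
  braid := hB.isBraidB_heckeGen
  quad j hj := hB.relMatrix_adj_mul_self (by omega) (by omega)
  symm j _ := relMatrix_adj_transpose
  row_sum j hj := hB.relMatrix_adj_mulVec_one (by omega) (by omega)
  connected x hx := by
    obtain hempty | ⟨⟨C⟩⟩ := isEmpty_or_nonempty (Chamber B n)
    · exact ⟨0, Subsingleton.elim _ _⟩
    · refine ⟨x C, funext fun D => ?_⟩
      rw [Pi.smul_apply, Pi.one_apply, smul_eq_mul, mul_one]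
      refine hB.eq_of_forall_samePanel hF fun k h1 hk => ?_
      have hk' := (hB.heckeGen_mulVec_eq_smul_iff (by omega)).1 (hx (n - k) (by omega))
      rwa [Nat.sub_sub_self hk] at hk'

end IsSymplectic

end ChamberHecke

section RatioSharp

open SFlag Matrix

variable {F V : Type} [Field F] [AddCommGroup V] [Module F V] {B : V →ₗ[F] V →ₗ[F] F} {n : ℕ}

/-- A *ratio-sharp EKR-set of chambers*: an EKR-set of chambers whose cardinality attains the bound
`N / (q ^ n + 1)`, where `N` is the number of all chambers. -/
structure IsRatioSharp (S : Set (Chamber B n)) : Prop where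
  isEKR : IsEKRFlags S
  ncard_mul : S.ncard * (Nat.card F ^ n + 1) = Nat.card (Chamber B n)

variable {S : Set (Chamber B n)} {i : ℕ}

namespace IsSymplectic

variable (hB : IsSymplectic B n)
include hB

lemma longestWord_eq_zero_of_isEKRFlags [Fintype (Chamber B n)] (hS : IsEKRFlags S) :
    ∀ C ∈ S, ∀ D ∈ S, longestWord (heckeGen B n) n C D = 0 :=
  fun C hC D hD => by_contra fun h => hS C hC D hD (hB.flagOpp_of_longestWord_ne_zero h)

variable [Finite F]

lemma finite_chamber : Finite (Chamber B n) := by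
  have := hB.finiteDimensional
  have := Module.finite_of_finite F (M := V)
  infer_instance

variable {C D D' E : Chamber B n} (hF : 3 < Nat.card F)

lemma apply_eq_of_forall_heckeGen_mulVec_eq [Fintype (Chamber B n)]
    {w : Fin n → Chamber B n → ℝ}
    (hw : ∀ a b : Fin n, b ≠ a → heckeGen B n b *ᵥ w a = (Nat.card F : ℝ) • w a) (a : Fin n) (k : ℕ)
    (h1 : 1 ≤ k) (hk : k ≤ n) (hka : k ≠ n - a) (X Y : Chamber B n) (h : SamePanel k X Y) :
    w a X = w a Y := by
  have hfix := hw a ⟨n - k, by omega⟩ (by rw [ne_eq, Fin.ext_iff, Fin.val_mk]; omega)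
  rw [hB.heckeGen_mulVec_eq_smul_iff (by omega), Fin.val_mk, Nat.sub_sub_self hk] at hfix
  exact hfix X Y h

include hF

lemma ncard_mul_le (hS : IsEKRFlags S) :
    S.ncard * (Nat.card F ^ n + 1) ≤ Nat.card (Chamber B n) := by
  have := hB.finite_chamber
  let := Fintype.ofFinite (Chamber B n)
  have h := (hB.isChamberHeckeB_heckeGen hF).ncard_mul_le (by exact_mod_cast (by omega))
    (hB.longestWord_eq_zero_of_isEKRFlags hS)
  rw [Nat.card_eq_fintype_card (α := Chamber B n)]
  exact_mod_cast h

lemma longestWord_mulVec_indicator [Fintype (Chamber B n)] (hS : IsRatioSharp S) :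
    longestWord (heckeGen B n) n *ᵥ S.indicator 1 =
      (Nat.card F : ℝ) ^ (n * (n - 1)) • (1 - S.indicator 1) :=
  (hB.isChamberHeckeB_heckeGen hF).longestWord_mulVec_indicator (by exact_mod_cast (by omega))
    (hB.longestWord_eq_zero_of_isEKRFlags hS.isEKR)
    (by rw [← Nat.card_eq_fintype_card (α := Chamber B n)]; exact_mod_cast hS.ncard_mul)

lemma longestWord_mulVec_apply [Fintype (Chamber B n)] {w : Chamber B n → ℝ} {v : ℝ}
    (h : ∀ D, FlagOpp D C → w D = v) :
    (longestWord (heckeGen B n) n *ᵥ w) C = (Nat.card F : ℝ) ^ (n ^ 2) * v := by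
  have hsum := congrFun ((hB.isChamberHeckeB_heckeGen hF).longestWord_mulVec_one le_rfl) C
  simp only [mulVec, dotProduct, Pi.one_apply, mul_one, Pi.smul_apply, smul_eq_mul] at hsum ⊢
  rw [← hsum, Finset.sum_mul]
  refine Finset.sum_congr rfl fun D _ => ?_
  obtain h0 | h0 := eq_or_ne (longestWord (heckeGen B n) n C D) 0
  · rw [h0, zero_mul, zero_mul]
  · rw [h D (hB.flagOpp_symm (hB.flagOpp_of_longestWord_ne_zero h0))]

section Summands

variable {w : Fin n → Chamber B n → ℝ} {c : ℝ} (hw : ∀ a : Fin n, ∀ k, 1 ≤ k → k ≤ n →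
  k ≠ n - a → ∀ X Y, SamePanel k X Y → w a X = w a Y)
include hw

lemma apply_eq_of_flagOpp (hsum : ∀ X, FlagOpp X E → ∑ a, w a X = c) (hD : FlagOpp D E)
    (hD' : FlagOpp D' E) (a : Fin n) : w a D = w a D' := by
  refine hB.constOnOpp hF (i := 0) a.pos (fun k hk hkn X Y hX hY hXY => ?_) D D' hD hD'
    fun k hk => by rw [Nat.le_zero.1 hk, D.space_zero, D'.space_zero]
  by_cases hka : k = n - a
  · have hrest : ∑ b ∈ Finset.univ.erase a, w b X = ∑ b ∈ Finset.univ.erase a, w b Y :=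
      Finset.sum_congr rfl fun b hb => hw b k hk hkn
        (fun h => Finset.ne_of_mem_erase hb (Fin.ext (by omega))) X Y hXY
    have hX' := hsum X hX
    have hY' := hsum Y hY
    rw [← Finset.add_sum_erase _ _ (Finset.mem_univ a)] at hX' hY'
    linarith
  · exact hw a k hk hkn hka X Y hXY

lemma exists_forall_apply_eq_of_flagOpp
    (hsum : ∀ C ∈ S, ∀ X, FlagOpp X C → ∑ a, w a X = c) :
    ∃ v : Fin n → ℝ, ∀ C ∈ S, ∀ D, FlagOpp D C → ∀ a, w a D = v a := by
  obtain rfl | ⟨C₀, hC₀⟩ := S.eq_empty_or_nonempty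
  · exact ⟨0, by simp⟩
  obtain ⟨D₀, hD₀⟩ := hB.exists_forall_flagOpp (s := {C₀}) (by simp)
    (Finset.card_singleton C₀ ▸ by omega)
  refine ⟨fun a => w a D₀, fun C hC D hD a => ?_⟩
  obtain ⟨E, hE⟩ := hB.exists_forall_flagOpp (s := {C, C₀}) (by simp)
    (Finset.card_le_two.trans_lt (by omega))
  simp only [Finset.mem_insert, Finset.mem_singleton, forall_eq_or_imp, forall_eq] at hE hD₀
  exact (hB.apply_eq_of_flagOpp hF hw (hsum C hC) hD hE.1 a).trans
    (hB.apply_eq_of_flagOpp hF hw (hsum C₀ hC₀) hE.2 hD₀ a)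

end Summands

lemma not_spaceOpp_of_apply_ne {w : Chamber B n → ℝ} {u v : ℝ} (hi : i ≤ n)
    (hw : ∀ k, 1 ≤ k → k ≤ n → k ≠ i → ∀ X Y, SamePanel k X Y → w X = w Y)
    (hu : ∀ C ∈ S, w C = u) (hv : ∀ C ∈ S, ∀ D, FlagOpp D C → w D = v) (huv : u ≠ v) :
    ∀ C ∈ S, ∀ D ∈ S, ¬ SpaceOpp B (C.space i) (D.space i) := by
  intro C hC D hD hCD
  obtain ⟨X, hX, hXD⟩ := hB.exists_flagOpp_space_eq (s := {D}) (by simp)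
    (Finset.card_singleton D ▸ by omega) hi (C.finrank_space hi) (C.isTotIso_space i) (by simpa)
  apply huv
  rw [← hu C hC, ← hv D hD X (hXD D (Finset.mem_singleton_self D))]
  exact hB.eq_of_space_eq hF hi hw hX.symm

lemma exists_forall_not_spaceOpp (hS : IsRatioSharp S) (hne : S.Nonempty) :
    ∃ i ∈ Finset.Icc 1 n, ∀ C ∈ S, ∀ D ∈ S, ¬ SpaceOpp B (C.space i) (D.space i) := by
  have := hB.finite_chamber
  let := Fintype.ofFinite (Chamber B n)
  have hq : (1 : ℝ) < Nat.card F := by exact_mod_cast (by omega)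
  obtain ⟨w, hsum, hA, hfix⟩ := (hB.isChamberHeckeB_heckeGen hF).exists_sub_smul_one_eq_sum hq
    ((one_smul ℝ (1 : Chamber B n → ℝ)).symm ▸ hB.longestWord_mulVec_indicator hF hS)
  set q := (Nat.card F : ℝ)
  have hw := hB.apply_eq_of_forall_heckeGen_mulVec_eq hfix
  have hsumD (C : Chamber B n) (hC : C ∈ S) (D : Chamber B n) (hD : FlagOpp D C) :
      ∑ a, w a D = -(1 / (q ^ n + 1)) := by
    have h := congrFun hsum D
    rw [Pi.sub_apply, Set.indicator_of_notMem fun h => hS.isEKR D h C hC hD] at h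
    simpa using h.symm
  obtain ⟨v, hv⟩ := hB.exists_forall_apply_eq_of_flagOpp hF hw hsumD
  obtain ⟨C₀, hC₀⟩ := hne
  obtain ⟨D₀, hD₀⟩ := hB.exists_forall_flagOpp (s := {C₀}) (by simp)
    (Finset.card_singleton C₀ ▸ by omega)
  obtain ⟨a, -, ha⟩ : ∃ a ∈ Finset.univ, w a D₀ ≠ 0 := by
    refine Finset.exists_ne_zero_of_sum_ne_zero ?_
    rw [hsumD C₀ hC₀ D₀ (hD₀ C₀ (Finset.mem_singleton_self C₀))]
    exact neg_ne_zero.2 (by positivity)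
  rw [hv C₀ hC₀ D₀ (hD₀ C₀ (Finset.mem_singleton_self C₀))] at ha
  have hwC (C : Chamber B n) (hC : C ∈ S) : w a C = -(q ^ n * v a) := by
    have h := hB.longestWord_mulVec_apply hF fun D hD => hv C hC D hD a
    rw [hA a, Pi.smul_apply, smul_eq_mul, pow_sq_eq_mul] at h
    exact mul_left_cancel₀ (by positivity : q ^ (n * (n - 1)) ≠ 0) (by linear_combination -h)
  refine ⟨n - a, Finset.mem_Icc.2 ⟨by omega, by omega⟩, hB.not_spaceOpp_of_apply_ne hF (by omega)
    (hw a) hwC (fun C hC D hD => hv C hC D hD a) fun h => ?_⟩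
  exact ha ((mul_eq_zero.1 (by linear_combination -h : (q ^ n + 1) * v a = 0)).resolve_left
    (by positivity))

end IsSymplectic

lemma IsRatioSharp.mem_of_space_eq [Finite F] (hS : IsRatioSharp S) (hB : IsSymplectic B n)
    (hF : 3 < Nat.card F) (hi : i ≤ n)
    (h : ∀ C ∈ S, ∀ D ∈ S, ¬ SpaceOpp B (C.space i) (D.space i)) {C D : Chamber B n}
    (hC : C ∈ S) (hCD : D.space i = C.space i) : D ∈ S := by
  have := hB.finite_chamber
  let T : Set (Chamber B n) := {D | ∃ C ∈ S, D.space i = C.space i}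
  have hT : IsEKRFlags T := by
    rintro X ⟨C, hC, hX⟩ Y ⟨D, hD, hY⟩ hXY
    exact h C hC D hD (hX ▸ hY ▸ flagOpp_iff.1 hXY i hi)
  have hle := hB.ncard_mul_le hF hT
  rw [← hS.ncard_mul] at hle
  have hST : S = T := Set.eq_of_subset_of_ncard_le (fun C hC => ⟨C, hC, rfl⟩)
    (le_of_mul_le_mul_right hle (Nat.succ_pos _))
  exact hST ▸ ⟨C, hC, hCD⟩

end RatioSharp

section PencilFamilies

variable {F V : Type} [Field F] [AddCommGroup V] [Module F V] {B : V →ₗ[F] V →ₗ[F] F} {e : ℕ}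
  {P : Set (Submodule F V)} {A S T U U' : Submodule F V}

/-- The number of members of `P` in the interval from `A` to `U`. -/
noncomputable def intervalCount (P : Set (Submodule F V)) (A U : Submodule F V) : ℕ :=
  (P ∩ Set.Icc A U).ncard

/-- `A ≤ U` bound a pencil of `e + 2`-spaces: `U` is a totally isotropic `e + 3`-space and `A` is an
`e + 1`-space. -/
structure IsPencil (B : V →ₗ[F] V →ₗ[F] F) (e : ℕ) (A U : Submodule F V) : Prop where
  le : A ≤ U
  isTotIso : IsTotIso B U
  finrank_low : finrank F A = e + 1
  finrank_top : finrank F U = e + 3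

/-- A family of `e + 2`-spaces which contains every pencil of which it contains two members, and
whose pencil counts are the sum of a function of the bottom and a function of the top of the
pencil. This is what remains of ratio-sharpness for the family of `i`-spaces of a set of
chambers. -/
structure IsPencilFamily (B : V →ₗ[F] V →ₗ[F] F) (e : ℕ) (P : Set (Submodule F V)) : Prop where
  finrank_eq : ∀ T ∈ P, finrank F T = e + 2
  mem_of_mem : ∀ {A U T₁ T₂}, IsPencil B e A U → T₁ ∈ P → T₂ ∈ P → T₁ ≠ T₂ →
    T₁ ∈ Set.Icc A U → T₂ ∈ Set.Icc A U → ∀ T ∈ Set.Icc A U, finrank F T = e + 2 → T ∈ P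
  count_add_count : ∀ {A₁ A₂ U₁ U₂}, IsPencil B e A₁ U₁ → IsPencil B e A₁ U₂ →
    IsPencil B e A₂ U₁ → IsPencil B e A₂ U₂ →
    intervalCount P A₁ U₁ + intervalCount P A₂ U₂ = intervalCount P A₂ U₁ + intervalCount P A₁ U₂

/-- The members of `P` below `U` are the `e + 2`-spaces below `U` through some point of `U`. -/
def IsPointed (e : ℕ) (P : Set (Submodule F V)) (U : Submodule F V) : Prop :=
  ∃ x ∈ U, x ≠ 0 ∧ ∀ T ≤ U, finrank F T = e + 2 → (T ∈ P ↔ x ∈ T)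

lemma mem_span_singleton_of_spaceOpp [FiniteDimensional F V] {v w : V} (hop : SpaceOpp B U U')
    (hSU : S ≤ U) (hS : finrank F U = finrank F S + 1) (hv : v ∈ U' ⊓ bperp B S)
    (hw : w ∈ U' ⊓ bperp B S) (hw0 : w ≠ 0) : v ∈ Submodule.span F {w} := by
  obtain ⟨u, huU, huS⟩ := SetLike.not_le_iff_exists.1 (fun h : U ≤ S => by
    have := Submodule.finrank_mono h
    omega)
  have hspan : S ⊔ Submodule.span F {u} = U :=
    Submodule.eq_of_le_of_finrank_eq
      (sup_le hSU ((Submodule.span_singleton_le_iff_mem _ _).2 huU))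
      (by rw [Submodule.finrank_sup_span_singleton huS, hS])
  have heq_zero : ∀ y ∈ U' ⊓ bperp B S, B u y = 0 → y = 0 := by
    refine fun y hy hu => spaceOpp_iff.1 hop y hy.1 fun z hz => ?_
    obtain ⟨s, hs, a, rfl⟩ := mem_sup_span_singleton_iff.1 (hspan ▸ hz)
    simp [mem_bperp.1 hy.2 s hs, hu]
  have huw : B u w ≠ 0 := fun h => hw0 (heq_zero w hw h)
  have hdiff := heq_zero (v - (B u v / B u w) • w)
    (Submodule.sub_mem _ hv (Submodule.smul_mem _ _ hw)) (by simp [huw])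
  exact Submodule.mem_span_singleton.2 ⟨_, (sub_eq_zero.1 hdiff).symm⟩

namespace IsPointed

lemma not_spaceOpp [FiniteDimensional F V] (hP : ∀ T ∈ P, ∀ T' ∈ P, ¬ SpaceOpp B T T')
    (hU : finrank F U = e + 3) (hU' : finrank F U' = e + 3) (h : IsPointed e P U)
    (h' : IsPointed e P U') : ¬ SpaceOpp B U U' := by
  intro hop
  obtain ⟨x, hxU, -, hx⟩ := h
  obtain ⟨y, hyU', hy0, hy⟩ := h'
  have hspan : ∀ {z : V} {W : Submodule F V}, z ∈ W → Submodule.span F {z} ≤ W :=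
    fun hz => (Submodule.span_singleton_le_iff_mem _ _).2 hz
  have hmem_bperp : ∀ S ≤ U, finrank F S = e + 2 → x ∈ S → y ∈ bperp B S := by
    intro S hSU hS hxS
    have hmeet : ∀ T ≤ U', finrank F T = e + 2 → y ∈ T → ∃ z ∈ bperp B S ⊓ T, z ≠ 0 :=
      fun T hTU hT hyT => Submodule.exists_mem_ne_zero_of_ne_bot
        (hP S ((hx S hSU hS).2 hxS) T ((hy T hTU hT).2 hyT))
    obtain ⟨T₀, hyT₀, hT₀U, hT₀⟩ := exists_le_le_finrank_eq (k := e + 2) (hspan hyU')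
      (by rw [finrank_span_singleton hy0]; omega) (by omega)
    obtain ⟨z, ⟨hzS, hzT₀⟩, hz0⟩ := hmeet T₀ hT₀U hT₀ (hyT₀ (Submodule.mem_span_singleton_self y))
    by_cases hzy : z ∈ Submodule.span F {y}
    · obtain ⟨a, rfl⟩ := Submodule.mem_span_singleton.1 hzy
      exact (Submodule.smul_mem_iff _ fun ha => hz0 (by rw [ha, zero_smul])).1 hzS
    obtain ⟨T, hyT, hTU, hzT, hT⟩ := exists_finrank_add_one_eq_notMem (hspan hyU') (hT₀U hzT₀) hzy
    obtain ⟨t, ⟨htS, htT⟩, ht0⟩ :=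
      hmeet T hTU (by omega) (hyT (Submodule.mem_span_singleton_self y))
    exact absurd (hspan htT (mem_span_singleton_of_spaceOpp hop hSU (by omega)
      ⟨hT₀U hzT₀, hzS⟩ ⟨hTU htT, htS⟩ ht0)) hzT
  refine hy0 (spaceOpp_iff.1 hop y hyU' fun u hu => ?_)
  have hxu : finrank F ↥(Submodule.span F {x, u}) ≤ e + 2 :=
    (finrank_span_le_card _).trans (by
      have := Finset.card_le_two (a := x) (b := u)
      simp only [Set.toFinset_insert, Set.toFinset_singleton]
      omega)
  obtain ⟨S, hS', hSU, hS⟩ := exists_le_le_finrank_eq (k := e + 2)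
    (Submodule.span_le.2 (Set.insert_subset hxU (Set.singleton_subset_iff.2 hu))) hxu (by omega)
  exact mem_bperp.1 (hmem_bperp S hSU hS (hS' (Submodule.subset_span (by simp)))) u
    (hS' (Submodule.subset_span (by simp)))

end IsPointed

namespace IsPencilFamily

variable [FiniteDimensional F V] (hP : IsPencilFamily B e P)
include hP

lemma exists_forall_mem_iff_le (hU : IsTotIso B U) (hdU : finrank F U = e + 3) (hT : T ∈ P)
    (hTU : T ≤ U) : ∃ R ≤ U, ∀ S ≤ U, finrank F S = e + 2 → (S ∈ P ↔ R ≤ S) := by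
  obtain ⟨R, ⟨hRU, hR⟩, hmin⟩ := wellFounded_lt.has_min
    {R | R ≤ U ∧ ∀ S ≤ U, finrank F S = e + 2 → R ≤ S → S ∈ P}
    ⟨T, hTU, fun S _ hS hTS =>
      Submodule.eq_of_le_of_finrank_eq hTS ((hP.finrank_eq T hT).trans hS.symm) ▸ hT⟩
  refine ⟨R, hRU, fun S hSU hS => ⟨fun hSP => ?_, hR S hSU hS⟩⟩
  by_contra hRS
  have hrank := finrank_inf_add_one_of_not_le (by omega) hSU hRU hRS
  refine hmin (R ⊓ S) ⟨inf_le_left.trans hRU, fun S' hS'U hS' hle => ?_⟩ (inf_lt_left.2 hRS)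
  rcases eq_or_ne S' S with rfl | hne
  · exact hSP
  obtain ⟨hA, -⟩ :=
    finrank_inf_and_sup_eq_of_finrank_eq_add_two (k := e + 1) hdU hS' hS hS'U hSU hne
  have hAU : S' ⊓ S ≤ U := inf_le_left.trans hS'U
  have hQ := Submodule.finrank_sup_add_finrank_inf_eq (S' ⊓ S) R
  rw [show S' ⊓ S ⊓ R = R ⊓ S by rw [inf_assoc, inf_comm S R, inf_eq_right.2 hle]] at hQ
  exact hP.mem_of_mem ⟨hAU, hU, hA, hdU⟩ hSP
    (hR (S' ⊓ S ⊔ R) (sup_le hAU hRU) (by omega) le_sup_right)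
    (fun h => hRS (le_sup_right.trans h.ge)) ⟨inf_le_right, hSU⟩
    ⟨le_sup_left, sup_le hAU hRU⟩ S' ⟨inf_le_left, hS'U⟩ hS'

lemma isPointed_of_notMem (hU : IsTotIso B U) (hdU : finrank F U = e + 3) (hSU : S ≤ U)
    (hdS : finrank F S = e + 2) (hS : S ∉ P)
    (h : ∀ A ≤ S, finrank F A = e + 1 → ∃ T ∈ P, T ∈ Set.Icc A U) : IsPointed e P U := by
  obtain ⟨A₀, -, hA₀S, hA₀⟩ := exists_le_le_finrank_eq (F := F) (k := e + 1) (bot_le (a := S))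
    (by simp) (by omega)
  obtain ⟨T₀, hT₀, -, hT₀U⟩ := h A₀ hA₀S hA₀
  obtain ⟨R, hRU, hR⟩ := hP.exists_forall_mem_iff_le hU hdU hT₀ hT₀U
  have hRS := finrank_inf_add_one_of_not_le (by omega) hSU hRU (mt (hR S hSU hdS).2 hS)
  have hbot : R ⊓ S = ⊥ := by
    by_contra hne
    obtain ⟨y, ⟨hyR, hyS⟩, hy0⟩ := Submodule.exists_mem_ne_zero_of_ne_bot hne
    obtain ⟨A, -, hAS, hyA, hA⟩ := exists_finrank_add_one_eq_notMem (bot_le (a := S)) hyS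
      (mt (Submodule.mem_bot F).1 hy0)
    obtain ⟨T, hT, hAT, hTU⟩ := h A hAS (by omega)
    have hdT := hP.finrank_eq T hT
    rcases eq_or_ne S T with rfl | hne
    · exact hS hT
    rw [← inf_eq_of_finrank_eq_add_one (k := e + 1) (by omega) hdS hdT hAS hAT hne] at hyA
    exact hyA ⟨hyS, (hR T hTU hdT).1 hT hyR⟩
  rw [hbot, finrank_bot] at hRS
  obtain ⟨x, hxR, hx0⟩ := R.exists_mem_ne_zero_of_ne_bot (by rintro rfl; simp at hRS)
  obtain rfl : Submodule.span F {x} = R := Submodule.eq_of_le_of_finrank_eq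
    ((Submodule.span_singleton_le_iff_mem _ _).2 hxR) (by rw [finrank_span_singleton hx0]; omega)
  exact ⟨x, hRU hxR, hx0, fun T hTU hT =>
    (hR T hTU hT).trans (Submodule.span_singleton_le_iff_mem _ _)⟩

end IsPencilFamily

section Counting

variable [Finite F] [FiniteDimensional F V]

lemma ncard_pencil (h : IsPencil B e A U) :
    {T | T ∈ Set.Icc A U ∧ finrank F T = e + 2}.ncard = Nat.card F + 1 := by
  have hcard := card_interval_finrank_eq_add_one h.le
    (by rw [h.finrank_low, h.finrank_top] : finrank F U = finrank F A + 2)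
  rw [h.finrank_low] at hcard
  simp only [Set.mem_Icc, and_assoc]
  exact hcard

lemma intervalCount_pos (hT : T ∈ P) (h : T ∈ Set.Icc A U) : 0 < intervalCount P A U := by
  have := Module.finite_of_finite F (M := V)
  exact (Set.ncard_pos (Set.toFinite _)).2 ⟨T, hT, h⟩

lemma eq_of_intervalCount_le_one (h : intervalCount P A U ≤ 1) (hS : S ∈ P) (hT : T ∈ P)
    (hS' : S ∈ Set.Icc A U) (hT' : T ∈ Set.Icc A U) : S = T := by
  have := Module.finite_of_finite F (M := V)
  exact (Set.ncard_le_one (Set.toFinite _)).1 h S ⟨hS, hS'⟩ T ⟨hT, hT'⟩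

lemma intervalCount_le (hP : ∀ T ∈ P, finrank F T = e + 2) (h : IsPencil B e A U) :
    intervalCount P A U ≤ Nat.card F + 1 := by
  have := Module.finite_of_finite F (M := V)
  exact ncard_pencil h ▸
    Set.ncard_le_ncard (fun T hT => ⟨hT.2, hP T hT.1⟩) (Set.toFinite _)

lemma mem_of_card_add_one_le_intervalCount (hP : ∀ T ∈ P, finrank F T = e + 2)
    (h : IsPencil B e A U) (hcount : Nat.card F + 1 ≤ intervalCount P A U) (hT : T ∈ Set.Icc A U)
    (hdim : finrank F T = e + 2) : T ∈ P := by
  have := Module.finite_of_finite F (M := V)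
  have heq : P ∩ Set.Icc A U = {T | T ∈ Set.Icc A U ∧ finrank F T = e + 2} :=
    Set.eq_of_subset_of_ncard_le (fun T hT => ⟨hT.2, hP T hT.1⟩)
      ((ncard_pencil h).trans_le hcount) (Set.toFinite _)
  exact (heq.ge ⟨hT, hdim⟩).1

namespace IsPointed

lemma exists_intervalCount_eq (h : IsPointed e P U) (hP : ∀ T ∈ P, finrank F T = e + 2) :
    ∃ x ∈ U, x ≠ 0 ∧ (∀ T ≤ U, finrank F T = e + 2 → (T ∈ P ↔ x ∈ T)) ∧
      ∀ A, IsPencil B e A U → intervalCount P A U = if x ∈ A then Nat.card F + 1 else 1 := by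
  obtain ⟨x, hxU, hx0, hx⟩ := h
  refine ⟨x, hxU, hx0, hx, fun A hA => ?_⟩
  split_ifs with hxA
  · rw [← ncard_pencil hA, intervalCount]
    congr 1 with T
    exact ⟨fun h => ⟨h.2, hP T h.1⟩, fun h => ⟨(hx T h.1.2 h.2).2 (h.1.1 hxA), h.1⟩⟩
  have hdim : finrank F ↥(A ⊔ Submodule.span F {x}) = e + 2 := by
    rw [Submodule.finrank_sup_span_singleton hxA, hA.finrank_low]
  have hle : A ⊔ Submodule.span F {x} ≤ U :=
    sup_le hA.le ((Submodule.span_singleton_le_iff_mem _ _).2 hxU)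
  refine Set.ncard_eq_one.2 ⟨A ⊔ Submodule.span F {x}, Set.Subset.antisymm ?_ ?_⟩
  · rintro T ⟨hT, hAT, hTU⟩
    have hTdim := hP T hT
    exact (Submodule.eq_of_le_of_finrank_eq (sup_le hAT
      ((Submodule.span_singleton_le_iff_mem _ _).2 ((hx T hTU hTdim).1 hT))) (by omega)).symm
  · rintro T rfl
    exact ⟨(hx _ hle hdim).2 (Submodule.mem_sup_right (Submodule.mem_span_singleton_self x)),
      le_sup_left, hle⟩

end IsPointed

namespace IsPencilFamily

variable (hP : IsPencilFamily B e P)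
include hP

lemma isPointed_of_mem (hU : IsTotIso B U) (hU' : IsTotIso B U') (hdU : finrank F U = e + 3)
    (hdU' : finrank F U' = e + 3) (hSU : S ≤ U) (hSU' : S ≤ U') (hS : S ∈ P)
    (h : IsPointed e P U) : IsPointed e P U' := by
  obtain ⟨x, -, hx0, hx, hcount⟩ := h.exists_intervalCount_eq (B := B) hP.finrank_eq
  have hdS := hP.finrank_eq S hS
  have hxS : x ∈ S := (hx S hSU hdS).1 hS
  have hpencil : ∀ A ≤ S, finrank F A = e + 1 → IsPencil B e A U ∧ IsPencil B e A U' :=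
    fun A hAS hA => ⟨⟨hAS.trans hSU, hU, hA, hdU⟩, ⟨hAS.trans hSU', hU', hA, hdU'⟩⟩
  obtain ⟨A₀, -, hA₀S, hxA₀, hA₀⟩ :=
    exists_finrank_add_one_eq_notMem (bot_le (a := S)) hxS (mt (Submodule.mem_bot F).1 hx0)
  obtain ⟨A₁, hxA₁, hA₁S, hA₁⟩ := exists_le_le_finrank_eq (k := e + 1)
    ((Submodule.span_singleton_le_iff_mem x S).2 hxS) (by simp [finrank_span_singleton hx0])
    (by omega)
  rw [Submodule.span_singleton_le_iff_mem] at hxA₁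
  obtain ⟨h₀, h₀'⟩ := hpencil A₀ hA₀S (by omega)
  obtain ⟨h₁, h₁'⟩ := hpencil A₁ hA₁S hA₁
  refine ⟨x, hSU' hxS, hx0, fun T hTU' hT => ?_⟩
  rcases eq_or_ne T S with rfl | hne
  · exact iff_of_true hS hxS
  obtain ⟨hA, -⟩ :=
    finrank_inf_and_sup_eq_of_finrank_eq_add_two (k := e + 1) hdU' hT hdS hTU' hSU' hne
  obtain ⟨hA, hA'⟩ := hpencil (T ⊓ S) inf_le_right hA
  have hcount_A := hcount _ hA
  by_cases hxT : x ∈ T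
  · refine iff_of_true (mem_of_card_add_one_le_intervalCount hP.finrank_eq hA' ?_
      ⟨inf_le_left, hTU'⟩ hT) hxT
    have hadd := hP.count_add_count h₀ h₀' hA hA'
    have hpos := intervalCount_pos hS ⟨hA₀S, hSU'⟩
    rw [hcount A₀ h₀, hcount_A, if_neg hxA₀, if_pos ⟨hxT, hxS⟩] at hadd
    omega
  · refine iff_of_false (fun hTP => hne ?_) hxT
    refine eq_of_intervalCount_le_one ?_ hTP hS ⟨inf_le_left, hTU'⟩ ⟨inf_le_right, hSU'⟩
    have hadd := hP.count_add_count h₁ h₁' hA hA'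
    have hle := intervalCount_le hP.finrank_eq h₁'
    rw [hcount A₁ h₁, hcount_A, if_pos hxA₁, if_neg fun h => hxT h.1] at hadd
    omega

lemma isPointed_or_forall_notMem (hU : IsTotIso B U) (hU' : IsTotIso B U')
    (hdU : finrank F U = e + 3) (hdU' : finrank F U' = e + 3) (hdS : finrank F S = e + 2)
    (hSU : S ≤ U) (hSU' : S ≤ U') (h : (∀ T ∈ P, ¬ T ≤ U) ∨ IsPointed e P U) :
    (∀ T ∈ P, ¬ T ≤ U') ∨ IsPointed e P U' := by
  by_cases hS : S ∈ P
  · exact .inr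
      (hP.isPointed_of_mem hU hU' hdU hdU' hSU hSU' hS (h.resolve_left fun h => h S hS hSU))
  have hpencil : ∀ A ≤ S, finrank F A = e + 1 → IsPencil B e A U ∧ IsPencil B e A U' :=
    fun A hAS hA => ⟨⟨hAS.trans hSU, hU, hA, hdU⟩, ⟨hAS.trans hSU', hU', hA, hdU'⟩⟩
  obtain ⟨c, hc⟩ : ∃ c, ∀ A ≤ S, finrank F A = e + 1 → intervalCount P A U = c := by
    rcases h with h | h
    · refine ⟨0, fun A _ _ => ?_⟩
      have hempty : P ∩ Set.Icc A U = ∅ :=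
        Set.eq_empty_of_forall_notMem fun T hT => h T hT.1 hT.2.2
      rw [intervalCount, hempty, Set.ncard_empty]
    · obtain ⟨x, -, -, hx, hcount⟩ := h.exists_intervalCount_eq (B := B) hP.finrank_eq
      exact ⟨1, fun A hAS hA => (hcount A (hpencil A hAS hA).1).trans
        (if_neg fun hxA => hS ((hx S hSU hdS).2 (hAS hxA)))⟩
  refine or_iff_not_imp_left.2 fun hne => ?_
  push Not at hne
  obtain ⟨T, hT, hTU'⟩ := hne
  refine hP.isPointed_of_notMem hU' hdU' hSU' hdS hS fun A hAS hA => ?_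
  have hrank := (finrank_inf_and_sup_eq_of_finrank_eq_add_two (k := e + 1) hdU'
    (hP.finrank_eq T hT) hdS hTU' hSU' fun h => hS (h ▸ hT)).1
  have hpos := intervalCount_pos hT ⟨(inf_le_left : T ⊓ S ≤ T), hTU'⟩
  obtain ⟨h₀, h₀'⟩ := hpencil _ inf_le_right hrank
  obtain ⟨h₁, h₁'⟩ := hpencil A hAS hA
  have hadd := hP.count_add_count h₀ h₀' h₁ h₁'
  rw [hc _ inf_le_right hrank, hc A hAS hA, add_right_inj] at hadd
  rw [← hadd] at hpos
  exact Set.nonempty_of_ncard_ne_zero hpos.ne'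

end IsPencilFamily

end Counting

end PencilFamilies

section PencilsOfChambers

open SFlag Matrix

variable {F V : Type} [Field F] [AddCommGroup V] [Module F V] {B : V →ₗ[F] V →ₗ[F] F} {n e : ℕ}
  {P : Set (Submodule F V)} {A U : Submodule F V}

namespace IsSymplectic

variable (hB : IsSymplectic B n)
include hB

lemma exists_chamber_space_eq {J : Finset ℕ} {f : ℕ → Submodule F V} (hJ : ∀ j ∈ J, j ≤ n)
    (hiso : ∀ j ∈ J, IsTotIso B (f j)) (hrank : ∀ j ∈ J, finrank F (f j) = j)
    (hmono : ∀ i ∈ J, ∀ j ∈ J, i ≤ j → f i ≤ f j) :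
    ∃ C : Chamber B n, ∀ j ∈ J, C.space j = f j := by
  have := hB.finiteDimensional
  refine (exists_forall_space
    (P := fun k M => ∀ j ∈ J, (j ≤ k → f j ≤ M) ∧ (k ≤ j → M ≤ f j)) ?_ ?_).imp fun C hC j hj =>
      le_antisymm ((hC j (hJ j hj) j hj).2 le_rfl) ((hC j (hJ j hj) j hj).1 le_rfl)
  · refine fun j hj => ⟨fun h => ?_, fun _ => bot_le⟩
    rw [Submodule.finrank_eq_zero.1 ((hrank j hj).trans (Nat.le_zero.1 h))]
  intro k hk M hM hMiso hMk
  by_cases hex : ∃ j, k < j ∧ j ∈ J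
  · obtain ⟨j, hkj, hj, hmin⟩ : ∃ j, k < j ∧ j ∈ J ∧ ∀ i ∈ J, k < i → j ≤ i :=
      ⟨Nat.find hex, (Nat.find_spec hex).1, (Nat.find_spec hex).2,
        fun i hi hki => Nat.find_min' hex ⟨hki, hi⟩⟩
    obtain ⟨M', hMM', hM'j, hM'⟩ := exists_le_le_finrank_eq (k := k + 1) ((hM j hj).2 hkj.le)
      (by omega) ((hrank j hj).symm ▸ hkj)
    refine ⟨M', hMM', (hiso j hj).mono hM'j, hM', fun i hi => ⟨fun hik => ?_, fun hki =>
      hM'j.trans (hmono j hj i hi (hmin i hi (by omega)))⟩⟩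
    obtain hik | rfl := Nat.le_succ_iff.1 hik
    · exact ((hM i hi).1 hik).trans hMM'
    · obtain rfl := le_antisymm (hmin _ hi k.lt_succ_self) hkj
      exact (Submodule.eq_of_le_of_finrank_eq hM'j (hM'.trans (hrank _ hi).symm)).ge
  · push Not at hex
    have hperp := hB.finrank_bperp_add M
    obtain ⟨v, hvM, hv⟩ := SetLike.not_le_iff_exists.1 (fun h : bperp B M ≤ M => by
      have := Submodule.finrank_mono h
      omega)
    refine ⟨M ⊔ Submodule.span F {v}, le_sup_left, hB.isTotIso_sup_span_singleton hMiso hvM,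
      by rw [Submodule.finrank_sup_span_singleton hv, hMk], fun i hi => ⟨fun _ => ?_, fun hki =>
        absurd hi (hex i hki)⟩⟩
    exact ((hM i hi).1 (not_lt.1 fun hki => hex i hki hi)).trans le_sup_left

lemma nonempty_chamber : Nonempty (Chamber B n) :=
  have ⟨C, _⟩ := hB.exists_chamber_space_eq (J := ∅) (f := fun _ => ⊥) (by simp) (by simp) (by simp)
    (by simp)
  ⟨C⟩

lemma exists_chamber_of_isPencil (hn : e + 3 ≤ n) (h : IsPencil B e A U) :
    ∃ C : Chamber B n, C.space (e + 1) = A ∧ C.space (e + 3) = U := by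
  obtain ⟨C, hC⟩ := hB.exists_chamber_space_eq (J := {e + 1, e + 3})
    (f := fun k => if k = e + 1 then A else U) (by simp; omega)
    (by simpa using ⟨h.isTotIso.mono h.le, h.isTotIso⟩)
    (by
      simp only [Finset.mem_insert, Finset.mem_singleton, forall_eq_or_imp, forall_eq]
      exact ⟨by rw [if_pos rfl, h.finrank_low], by rw [if_neg (by omega), h.finrank_top]⟩)
    (by simpa using h.le)
  exact ⟨C, by simpa using hC (e + 1) (by simp), by simpa using hC (e + 3) (by simp)⟩

end IsSymplectic

lemma SFlag.isPencil (C : Chamber B n) (hn : e + 3 ≤ n) :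
    IsPencil B e (C.space (e + 1)) (C.space (e + 3)) where
  le := C.space_le (by omega) hn
  isTotIso := C.isTotIso_space _
  finrank_low := C.finrank_space (by omega)
  finrank_top := C.finrank_space hn

lemma intervalCount_eq_zero [FiniteDimensional F V] {A' U' T₁ T₂ : Submodule F V}
    (hP : ∀ T ∈ P, finrank F T = e + 2) (hop : ∀ T ∈ P, ∀ T' ∈ P, ¬ SpaceOpp B T T')
    (h : IsPencil B e A U) (h' : IsPencil B e A' U') (hA : SpaceOpp B A' A) (hU : SpaceOpp B U' U)
    (h₁ : T₁ ∈ P) (h₂ : T₂ ∈ P) (hne : T₁ ≠ T₂) (hT₁ : T₁ ∈ Set.Icc A U) (hT₂ : T₂ ∈ Set.Icc A U) :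
    intervalCount P A' U' = 0 := by
  rw [intervalCount, (Set.eq_empty_of_forall_notMem _ : P ∩ Set.Icc A' U' = ∅), Set.ncard_empty]
  rintro T ⟨hT, hA'T, hTU'⟩
  obtain ⟨v, ⟨hvT, hv⟩, hv0⟩ := Submodule.exists_mem_ne_zero_of_ne_bot (hop T hT T₁ h₁)
  obtain ⟨w, ⟨hwT, hw⟩, hw0⟩ := Submodule.exists_mem_ne_zero_of_ne_bot (hop T hT T₂ h₂)
  have hvw := mem_span_singleton_of_spaceOpp hU hTU' (by rw [hP T hT, h'.finrank_top])
    ⟨hT₁.2 hv, hvT⟩ ⟨hT₂.2 hw, hwT⟩ hw0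
  have hvA : v ∈ T₁ ⊓ T₂ := ⟨hv, (Submodule.span_singleton_le_iff_mem _ _).2 hw hvw⟩
  rw [inf_eq_of_finrank_eq_add_one h.finrank_low (hP _ h₁) (hP _ h₂) hT₁.1 hT₂.1 hne] at hvA
  exact hv0 (spaceOpp_iff.1 hA v hvA (mem_bperp.1 (bperp_anti hA'T hvT)))

namespace IsSymplectic

variable (hB : IsSymplectic B n) [Fintype (Chamber B n)]
include hB

lemma relMatrix_samePanel_mulVec_indicator_apply (hn : e + 3 ≤ n)
    (hP : ∀ T ∈ P, finrank F T = e + 2) (C : Chamber B n) :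
    (relMatrix (SamePanel (e + 2)) *ᵥ {D : Chamber B n | D.space (e + 2) ∈ P}.indicator 1) C =
      intervalCount P (C.space (e + 1)) (C.space (e + 3)) := by
  simp only [relMatrix_mulVec, Set.indicator_apply, Set.mem_ofPred_eq, Pi.one_apply,
    Finset.sum_boole, Finset.filter_filter]
  rw [intervalCount, ← Set.ncard_coe_finset, Nat.cast_inj]
  refine Set.ncard_congr (fun D _ => D.space (e + 2)) ?_ ?_ ?_
  · intro D hD
    obtain ⟨hCD, hDP⟩ := (Finset.mem_filter.1 hD).2
    rw [hCD (e + 1) (by omega), hCD (e + 3) (by omega)]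
    exact ⟨hDP, D.space_le (by omega) (by omega), D.space_le (by omega) hn⟩
  · intro D E hD hE hDE
    exact ((Finset.mem_filter.1 hD).2.1.symm.trans (Finset.mem_filter.1 hE).2.1).eq hDE
  · rintro T ⟨hT, hAT, hTU⟩
    obtain ⟨D, hCD, rfl⟩ := hB.exists_samePanel_space_eq C (by omega) (by omega) hAT
      (by rwa [panelTop, if_pos (by omega)]) (hP T hT)
    exact ⟨D, Finset.mem_coe.2 (Finset.mem_filter.2 ⟨Finset.mem_univ D, hCD, hT⟩), rfl⟩

lemma longestWord_mulVec_relMatrix_samePanel_mulVec [Finite F] {f : Chamber B n → ℝ} {c d : ℝ}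
    {i : ℕ} (hi : 1 ≤ i) (hin : i ≤ n) (hf : longestWord (heckeGen B n) n *ᵥ f = c • (d • 1 - f)) :
    longestWord (heckeGen B n) n *ᵥ (relMatrix (SamePanel i) *ᵥ f) =
      c • ((d * (Nat.card F + 1 : ℕ)) • 1 - relMatrix (SamePanel i) *ᵥ f) := by
  have hcomm : Commute (longestWord (heckeGen B n) n) (relMatrix (SamePanel i)) := by
    rw [relMatrix_samePanel, ← Nat.sub_sub_self hin]
    exact (hB.isBraidB_heckeGen.commute_longestWord (by omega) le_rfl).add_right
      (Commute.one_right _)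
  rw [mulVec_mulVec, hcomm.eq, ← mulVec_mulVec, hf, mulVec_smul, mulVec_sub, mulVec_smul,
    relMatrix_mulVec_one fun C => hB.card_panel C hi hin, smul_smul]

variable [Finite F] (hF : 3 < Nat.card F)
include hF

lemma apply_add_apply_eq_of_longestWord_mulVec {f : Chamber B n → ℝ} {d : ℝ} {i j : ℕ}
    (hf : longestWord (heckeGen B n) n *ᵥ f = (Nat.card F : ℝ) ^ (n * (n - 1)) • (d • 1 - f))
    (hi : i ≤ n) (hj : j ≤ n)
    (hpanel : ∀ k, k ≠ i → k ≠ j → ∀ X Y, SamePanel k X Y → f X = f Y)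
    {C₁₁ C₁₂ C₂₁ C₂₂ : Chamber B n} (hi₁ : C₁₁.space i = C₁₂.space i)
    (hi₂ : C₂₁.space i = C₂₂.space i) (hj₁ : C₁₁.space j = C₂₁.space j)
    (hj₂ : C₁₂.space j = C₂₂.space j) : f C₁₁ + f C₂₂ = f C₂₁ + f C₁₂ := by
  obtain ⟨w, hsum, -, hw⟩ := (hB.isChamberHeckeB_heckeGen hF).exists_sub_smul_one_eq_sum
    (by exact_mod_cast (by omega)) hf
  have hpanel_w := hB.apply_eq_of_forall_heckeGen_mulVec_eq hw
  have hfw : ∀ C, f C = d / ((Nat.card F : ℝ) ^ n + 1) + ∑ a, w a C := fun C => by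
    have := congrFun hsum C
    simp only [Pi.sub_apply, Pi.smul_apply, Pi.one_apply, smul_eq_mul, mul_one,
      Finset.sum_apply] at this
    linarith
  have hconst : ∀ a : Fin n, n - a ≠ i → n - a ≠ j → ∀ C D, w a C = w a D := by
    refine fun a hai haj C D => hB.eq_of_forall_samePanel hF fun k h1 hk X Y h => ?_
    by_cases hka : k = n - a
    · have hXY := hpanel k (hka ▸ hai) (hka ▸ haj) X Y h
      have hrest : ∑ b ∈ Finset.univ.erase a, w b X = ∑ b ∈ Finset.univ.erase a, w b Y :=
        Finset.sum_congr rfl fun b hb => hpanel_w b k h1 hk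
          (fun h => Finset.ne_of_mem_erase hb (Fin.ext (by omega))) X Y h
      rw [hfw, hfw, ← Finset.add_sum_erase _ _ (Finset.mem_univ a),
        ← Finset.add_sum_erase _ _ (Finset.mem_univ a), hrest] at hXY
      linarith
    · exact hpanel_w a k h1 hk hka X Y h
  have hadd : ∀ a, w a C₁₁ + w a C₂₂ = w a C₂₁ + w a C₁₂ := fun a => by
    by_cases hai : n - a = i
    · have h₁ : w a C₁₁ = w a C₁₂ := hB.eq_of_space_eq hF hi (hai ▸ hpanel_w a) hi₁
      have h₂ : w a C₂₁ = w a C₂₂ := hB.eq_of_space_eq hF hi (hai ▸ hpanel_w a) hi₂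
      rw [h₁, h₂, add_comm]
    by_cases haj : n - a = j
    · have h₁ : w a C₁₁ = w a C₂₁ := hB.eq_of_space_eq hF hj (haj ▸ hpanel_w a) hj₁
      have h₂ : w a C₁₂ = w a C₂₂ := hB.eq_of_space_eq hF hj (haj ▸ hpanel_w a) hj₂
      rw [h₁, h₂]
    rw [hconst a hai haj C₁₁ C₂₁, hconst a hai haj C₂₂ C₁₂]
  have := Finset.sum_congr rfl fun a (_ : a ∈ Finset.univ) => hadd a
  simp only [Finset.sum_add_distrib] at this
  rw [hfw, hfw, hfw, hfw]
  linarith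

variable (hn : e + 3 ≤ n) (hP : ∀ T ∈ P, finrank F T = e + 2)
include hn hP

lemma longestWord_mulVec_intervalCount
    (hS : IsRatioSharp {D : Chamber B n | D.space (e + 2) ∈ P}) :
    longestWord (heckeGen B n) n *ᵥ
        (fun D => (intervalCount P (D.space (e + 1)) (D.space (e + 3)) : ℝ)) =
      (Nat.card F : ℝ) ^ (n * (n - 1)) • ((Nat.card F + 1 : ℝ) • 1 -
        fun D => (intervalCount P (D.space (e + 1)) (D.space (e + 3)) : ℝ)) := by
  have h := hB.longestWord_mulVec_relMatrix_samePanel_mulVec (i := e + 2) (by omega) (by omega)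
    (c := (Nat.card F : ℝ) ^ (n * (n - 1))) (d := 1)
    (by rw [one_smul, hB.longestWord_mulVec_indicator hF hS])
  rwa [funext (hB.relMatrix_samePanel_mulVec_indicator_apply hn hP), one_mul, Nat.cast_succ] at h

omit [Fintype (Chamber B n)] in
lemma intervalCount_eq_card_add_one (hS : IsRatioSharp {D : Chamber B n | D.space (e + 2) ∈ P})
    {C : Chamber B n} (h : ∀ D : Chamber B n, FlagOpp D C →
      intervalCount P (D.space (e + 1)) (D.space (e + 3)) = 0) :
    intervalCount P (C.space (e + 1)) (C.space (e + 3)) = Nat.card F + 1 := by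
  have := hB.finite_chamber
  let := Fintype.ofFinite (Chamber B n)
  have hcount := congrFun (hB.longestWord_mulVec_intervalCount hF hn hP hS) C
  rw [hB.longestWord_mulVec_apply hF (v := 0) fun D hD => by rw [h D hD, Nat.cast_zero],
    mul_zero, Pi.smul_apply, smul_eq_mul, zero_eq_mul] at hcount
  have := sub_eq_zero.1 (hcount.resolve_left (by positivity))
  simp only [Pi.smul_apply, Pi.one_apply, smul_eq_mul, mul_one] at this
  exact_mod_cast this.symm

omit [Fintype (Chamber B n)] in
theorem isPencilFamily (hop : ∀ T ∈ P, ∀ T' ∈ P, ¬ SpaceOpp B T T')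
    (hS : IsRatioSharp {D : Chamber B n | D.space (e + 2) ∈ P}) : IsPencilFamily B e P where
  finrank_eq := hP
  mem_of_mem {A U T₁ T₂} h h₁ h₂ hne hT₁ hT₂ T hT hdim := by
    have := hB.finiteDimensional
    obtain ⟨C, rfl, rfl⟩ := hB.exists_chamber_of_isPencil hn h
    refine mem_of_card_add_one_le_intervalCount hP h (hB.intervalCount_eq_card_add_one hF hn hP hS
      fun D hD => ?_).ge hT hdim
    exact intervalCount_eq_zero hP hop h (D.isPencil hn) (flagOpp_iff.1 hD _ (by omega))
      (flagOpp_iff.1 hD _ hn) h₁ h₂ hne hT₁ hT₂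
  count_add_count h₁₁ h₁₂ h₂₁ h₂₂ := by
    have := hB.finite_chamber
    let := Fintype.ofFinite (Chamber B n)
    obtain ⟨C₁₁, rfl, rfl⟩ := hB.exists_chamber_of_isPencil hn h₁₁
    obtain ⟨C₂₂, rfl, rfl⟩ := hB.exists_chamber_of_isPencil hn h₂₂
    obtain ⟨C₁₂, hA₁, hU₂⟩ := hB.exists_chamber_of_isPencil hn h₁₂
    obtain ⟨C₂₁, hA₂, hU₁⟩ := hB.exists_chamber_of_isPencil hn h₂₁
    have h := hB.apply_add_apply_eq_of_longestWord_mulVec hF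
      (hB.longestWord_mulVec_intervalCount hF hn hP hS) (by omega) hn
      (fun k hk hk' X Y hXY => by rw [hXY _ hk.symm, hXY _ hk'.symm])
      hA₁.symm hA₂ hU₁.symm hU₂
    rw [hA₁, hU₂, hA₂, hU₁] at h
    exact_mod_cast h

end IsSymplectic

end PencilsOfChambers

section ProperDimensions

open SFlag Matrix

variable {F V : Type} [Field F] [AddCommGroup V] [Module F V] {B : V →ₗ[F] V →ₗ[F] F} {n e : ℕ}
  {P : Set (Submodule F V)}

lemma sum_indicator_one_eq_ncard {X : Type*} [Fintype X] (W : Set X) :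
    ∑ x, W.indicator 1 x = (W.ncard : ℝ) := by
  simp [Set.indicator_apply, Set.ncard_eq_toFinset_card']

lemma ncard_le_sum_of_forall_one_le {X : Type*} [Fintype X] {h : X → ℝ} (h0 : ∀ x, 0 ≤ h x)
    {W : Set X} (hW : ∀ x ∈ W, 1 ≤ h x) : (W.ncard : ℝ) ≤ ∑ x, h x := by
  rw [← sum_indicator_one_eq_ncard]
  exact Finset.sum_le_sum fun x _ => Set.indicator_apply_le' (hW x) fun _ => h0 x

namespace IsSymplectic

variable (hB : IsSymplectic B n)
include hB

lemma sum_relMatrix_adj_mulVec [Finite F] [Fintype (Chamber B n)] {i : ℕ} (hi : 1 ≤ i) (hin : i ≤ n)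
    (h : Chamber B n → ℝ) : ∑ C, (relMatrix (Adj i) *ᵥ h) C = Nat.card F * ∑ C, h C := by
  rw [← one_dotProduct, dotProduct_mulVec, ← mulVec_transpose, relMatrix_adj_transpose,
    hB.relMatrix_adj_mulVec_one hi hin, smul_dotProduct, one_dotProduct, smul_eq_mul]

lemma exists_finrank_eq_and_one_le_relMatrix_adj_mulVec [Fintype (Chamber B n)] {m : ℕ}
    (hm : m + 1 < n) {h : Chamber B n → ℝ} (h0 : ∀ C, 0 ≤ h C) {C : Chamber B n}
    {T : Submodule F V} (hT : T ≤ C.space (m + 2)) (hrank : finrank F T = m + 1)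
    (hne : T ≠ C.space (m + 1))
    (hY : ∀ Y : Chamber B n, Y.space (m + 1) = T → (∀ j > m + 1, Y.space j = C.space j) → 1 ≤ h Y) :
    ∃ L ≤ C.space (m + 1), finrank F L = m ∧ ∀ Y : Chamber B n, Y.space m = L →
      (∀ j > m, Y.space j = C.space j) → 1 ≤ (relMatrix (Adj (m + 1)) *ᵥ h) Y := by
  have := hB.finiteDimensional
  refine ⟨T ⊓ C.space (m + 1), inf_le_right,
    (finrank_inf_and_sup_eq_of_finrank_eq_add_two (C.finrank_space (i := m + 2) hm) hrank
      (C.finrank_space hm.le) hT (C.space_le (by omega) hm) hne).1, fun Y hYm hYC => ?_⟩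
  obtain ⟨Z, hYZ, hZ⟩ := hB.exists_samePanel_space_eq Y (i := m + 1) (by omega) hm.le (S := T)
    (by rw [Nat.add_sub_cancel, hYm]; exact inf_le_left)
    (by rwa [panelTop, if_pos hm, hYC _ (by omega)]) hrank
  rw [relMatrix_mulVec]
  calc 1 ≤ h Z := hY Z hZ fun j hj => by rw [← hYZ j (by omega), hYC j (by omega)]
    _ ≤ _ := Finset.single_le_sum (f := h) (fun _ _ => h0 _) (Finset.mem_filter.2
      ⟨Finset.mem_univ Z, hYZ.adj (by rw [hZ, hYC _ m.lt_succ_self]; exact hne.symm)⟩)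

lemma ncard_le_geom_sum_mul_sum [Finite F] [Fintype (Chamber B n)] {m : ℕ} (hm : m < n)
    {h : Chamber B n → ℝ} (h0 : ∀ C, 0 ≤ h C) {Z : Set (Chamber B n)}
    (hZ : ∀ C ∈ Z, ∃ T ≤ C.space (m + 1), finrank F T = m ∧
      ∀ Y : Chamber B n, Y.space m = T → (∀ j > m, Y.space j = C.space j) → 1 ≤ h Y) :
    (Z.ncard : ℝ) ≤ (∑ k ∈ Finset.range (m + 1), (Nat.card F : ℝ) ^ k) * ∑ C, h C := by
  have := hB.finiteDimensional
  induction m generalizing h Z with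
  | zero =>
    rw [zero_add, Finset.sum_range_one, pow_zero, one_mul]
    refine ncard_le_sum_of_forall_one_le h0 fun C hC => ?_
    obtain ⟨T, -, hT, hY⟩ := hZ C hC
    exact hY C (by rw [C.space_zero, Submodule.finrank_eq_zero.1 hT]) fun _ _ => rfl
  | succ m ih =>
    have hA := ih (h := relMatrix (Adj (m + 1)) *ᵥ h) (Z := {C ∈ Z | h C < 1}) (by omega)
      (fun C => by rw [relMatrix_mulVec]; exact Finset.sum_nonneg fun _ _ => h0 _) fun C hC => by
        obtain ⟨T, hT, hrank, hY⟩ := hZ C hC.1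
        exact hB.exists_finrank_eq_and_one_le_relMatrix_adj_mulVec hm h0 hT hrank
          (fun hTC => hC.2.not_ge (hY C hTC.symm fun _ _ => rfl)) hY
    have hunion : {C ∈ Z | h C < 1} ∪ {C ∈ Z | 1 ≤ h C} = Z := by
      ext C
      simp only [Set.mem_union, Set.mem_sep_iff, ← and_or_left, lt_or_ge, and_true]
    calc (Z.ncard : ℝ) ≤ ({C ∈ Z | h C < 1}.ncard : ℝ) + ({C ∈ Z | 1 ≤ h C}.ncard : ℝ) := by
          exact_mod_cast (congrArg Set.ncard hunion).ge.trans (Set.ncard_union_le _ _)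
      _ ≤ _ := add_le_add hA (ncard_le_sum_of_forall_one_le h0 fun C hC => hC.2)
      _ = _ := by
          rw [hB.sum_relMatrix_adj_mulVec (by omega) hm.le, geom_sum_succ (n := m + 1)]
          ring

lemma exists_forall_not_le_space [Finite F] {i : ℕ} (hin : i < n) (hP : ∀ T ∈ P, finrank F T = i)
    (hS : IsRatioSharp {D : Chamber B n | D.space i ∈ P})
    (hne : {D : Chamber B n | D.space i ∈ P}.Nonempty) :
    ∃ C : Chamber B n, ∀ T ∈ P, ¬ T ≤ C.space (i + 1) := by
  have := hB.finite_chamber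
  let := Fintype.ofFinite (Chamber B n)
  by_contra! hcon
  have hle := hB.ncard_le_geom_sum_mul_sum (Z := Set.univ) hin
    (h := {D : Chamber B n | D.space i ∈ P}.indicator 1)
    (Set.indicator_nonneg fun _ _ => zero_le_one) fun C _ => by
      obtain ⟨T, hT, hTC⟩ := hcon C
      exact ⟨T, hTC, hP T hT, fun Y hY _ => by
        rw [Set.indicator_of_mem (Set.mem_ofPred_eq.symm ▸ hY ▸ hT), Pi.one_apply]⟩
  rw [sum_indicator_one_eq_ncard, Set.ncard_univ, ← hS.ncard_mul, mul_comm] at hle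
  have hgeom : ∑ k ∈ Finset.range (i + 1), Nat.card F ^ k < Nat.card F ^ n :=
    Nat.geomSum_lt Finite.one_lt_card fun k hk => by
      have := Finset.mem_range.1 hk
      omega
  have hle' := Nat.le_of_mul_le_mul_right (by exact_mod_cast hle)
    ((Set.ncard_pos (Set.toFinite _)).2 hne)
  omega

variable [Finite F] (hF : 3 < Nat.card F)
include hF

lemma forall_forall_notMem_or_isPointed (hn : e + 3 ≤ n) (hP : IsPencilFamily B e P)
    {C : Chamber B n} (hC : ∀ T ∈ P, ¬ T ≤ C.space (e + 3)) (D : Chamber B n) :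
    (∀ T ∈ P, ¬ T ≤ D.space (e + 3)) ∨ IsPointed e P (D.space (e + 3)) := by
  have := hB.finiteDimensional
  have hstep : ∀ X Y : Chamber B n, SamePanel (e + 3) X Y →
      ((∀ T ∈ P, ¬ T ≤ X.space (e + 3)) ∨ IsPointed e P (X.space (e + 3))) →
      (∀ T ∈ P, ¬ T ≤ Y.space (e + 3)) ∨ IsPointed e P (Y.space (e + 3)) := fun X Y hXY =>
    hP.isPointed_or_forall_notMem (S := X.space (e + 2)) (X.isTotIso_space _) (Y.isTotIso_space _)
      (X.finrank_space hn) (Y.finrank_space hn) (X.finrank_space (by omega))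
      (X.space_le (by omega) hn) (hXY (e + 2) (by omega) ▸ Y.space_le (by omega) hn)
  have heq := hB.eq_of_forall_samePanel hF (C := C) (D := D)
    (f := fun X => (∀ T ∈ P, ¬ T ≤ X.space (e + 3)) ∨ IsPointed e P (X.space (e + 3)))
    fun k _ _ X Y hXY => by
      obtain rfl | hk := eq_or_ne (e + 3) k
      · exact propext ⟨hstep X Y hXY, hstep Y X hXY.symm⟩
      · simp only [hXY _ hk]
  exact heq.mp (.inl hC)

theorem not_isRatioSharp (hn : e + 3 ≤ n) (hP : ∀ T ∈ P, finrank F T = e + 2)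
    (hop : ∀ T ∈ P, ∀ T' ∈ P, ¬ SpaceOpp B T T')
    (hne : {D : Chamber B n | D.space (e + 2) ∈ P}.Nonempty) :
    ¬ IsRatioSharp {D : Chamber B n | D.space (e + 2) ∈ P} := by
  intro hS
  have := hB.finiteDimensional
  have := hB.finite_chamber
  let := Fintype.ofFinite (Chamber B n)
  obtain ⟨C₀, hC₀⟩ := hB.exists_forall_not_le_space hn hP hS hne
  have hpt := hB.forall_forall_notMem_or_isPointed hF hn (hB.isPencilFamily hF hn hP hop hS) hC₀
  let S' : Set (Chamber B n) := {D | ∃ T ∈ P, T ≤ D.space (e + 3)}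
  have hS'pt : ∀ D ∈ S', IsPointed e P (D.space (e + 3)) := fun D ⟨T, hT, hTD⟩ =>
    (hpt D).resolve_left fun h => h T hT hTD
  have hS' : IsEKRFlags S' := fun C hC D hD hCD =>
    IsPointed.not_spaceOpp hop (C.finrank_space hn) (D.finrank_space hn) (hS'pt C hC) (hS'pt D hD)
      (flagOpp_iff.1 hCD _ hn)
  have hsub : {D : Chamber B n | D.space (e + 2) ∈ P} ⊆ S' := fun D hD =>
    ⟨_, hD, D.space_le (by omega) hn⟩
  have hle := hB.ncard_mul_le hF hS'
  rw [← hS.ncard_mul] at hle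
  have heq := Set.eq_of_subset_of_ncard_le hsub (le_of_mul_le_mul_right hle (Nat.succ_pos _))
  obtain ⟨C, hC⟩ := hne
  obtain ⟨x, hxC, hx0, hx⟩ := hS'pt C (hsub hC)
  obtain ⟨T, -, hTC, hxT, hT⟩ := exists_finrank_add_one_eq_notMem bot_le hxC (by simpa using hx0)
  rw [C.finrank_space hn, add_left_inj] at hT
  obtain ⟨Y, rfl, hYC, -⟩ := hB.exists_space_eq_and_apply_eq (f := fun _ => ()) hn
    (fun _ _ _ _ _ _ => rfl) hTC hT
  have hY : Y ∈ S' := ⟨_, hC, by rw [hYC _ (by omega)]; exact C.space_le (by omega) hn⟩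
  rw [← heq] at hY
  exact hxT ((hx _ hTC hT).1 hY)

end IsSymplectic

end ProperDimensions

section Isometries

variable {F V : Type} [Field F] [AddCommGroup V] [Module F V] {B : V →ₗ[F] V →ₗ[F] F} {n i : ℕ}

namespace IsSymplectic

variable (hB : IsSymplectic B n)
include hB

lemma exists_linearEquiv_eq {g : V →ₗ[F] V} (hg : ∀ x y, B (g x) (g y) = B x y) :
    ∃ e : V ≃ₗ[F] V, ∀ x, e x = g x := by
  have := hB.finiteDimensional
  refine ⟨LinearEquiv.ofInjectiveEndo g <| (injective_iff_map_eq_zero g).2 fun x hx =>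
    hB.nondeg x fun y => ?_, fun _ => rfl⟩
  rw [← hg, hx, map_zero, LinearMap.zero_apply]

lemma exists_isometry_of_apply_ne_zero {p p' : V} (h : B p p' ≠ 0) :
    ∃ g : V ≃ₗ[F] V, (∀ x y, B (g x) (g y) = B x y) ∧ g p = p' ∧
      ∀ x, B x (p' - p) = 0 → g x = x := by
  set u := p' - p with hu
  obtain ⟨g, hg⟩ := hB.exists_linearEquiv_eq
    (g := LinearMap.transvection ((B p p')⁻¹ • B.flip u) u) fun x y => by
      simp only [LinearMap.transvection.apply, LinearMap.smul_apply, LinearMap.flip_apply, map_add,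
        map_smul, LinearMap.add_apply, smul_eq_mul, hB.alt u, hB.apply_eq_neg u y]
      ring
  simp only [LinearMap.transvection.apply, LinearMap.smul_apply, LinearMap.flip_apply] at hg
  refine ⟨g, fun x y => ?_, ?_, fun x hx => ?_⟩
  · simp only [hg, map_add, map_smul, LinearMap.add_apply, LinearMap.smul_apply, smul_eq_mul,
      hB.alt u, hB.apply_eq_neg u y]
    ring
  · rw [hg, hu, map_sub, hB.alt p, sub_zero, smul_eq_mul, inv_mul_cancel₀ h, one_smul,
      add_sub_cancel]
  · rw [hg, hx, smul_zero, zero_smul, add_zero]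

lemma exists_isometry_of_apply_eq_zero {p p' : V} {S : Submodule F V} (h : B p p' = 0)
    (hp : p ∉ S ⊔ Submodule.span F {p' - p}) :
    ∃ g : V ≃ₗ[F] V, (∀ x y, B (g x) (g y) = B x y) ∧ g p = p' ∧
      (∀ x ∈ S, B x (p' - p) = 0 → g x = x) ∧
      ∀ x, B x (p' - p) = 0 → g x - x ∈ Submodule.span F {p' - p} := by
  set u := p' - p with hu
  obtain ⟨w, hw, hwp⟩ : ∃ w ∈ bperp B (S ⊔ Submodule.span F {u}), B p w = 1 := by
    obtain ⟨z, hz, hzp⟩ := hB.exists_mem_bperp_ne_zero hp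
    refine ⟨-(B z p)⁻¹ • z, Submodule.smul_mem _ _ hz, ?_⟩
    rw [map_smul, hB.apply_eq_neg p z, smul_neg, neg_smul, neg_neg, smul_eq_mul,
      inv_mul_cancel₀ hzp]
  have hSw : ∀ x ∈ S, B x w = 0 := fun x hx => mem_bperp.1 hw x (Submodule.mem_sup_left hx)
  have huw : B u w = 0 :=
    mem_bperp.1 hw u (Submodule.mem_sup_right (Submodule.mem_span_singleton_self u))
  let f : V →ₗ[F] V := LinearMap.id + (B.flip u).smulRight w + (B.flip w).smulRight u
  have hf (x : V) : f x = x + B x u • w + B x w • u := by simp [f]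
  have hfB (x y : V) : B (f x) (f y) = B x y := by
    simp only [hf, map_add, map_smul, LinearMap.add_apply, LinearMap.smul_apply, smul_eq_mul,
      huw, hB.apply_eq_zero_symm huw, hB.alt u, hB.alt w, hB.apply_eq_neg u y, hB.apply_eq_neg w y]
    ring
  obtain ⟨g, hg⟩ := hB.exists_linearEquiv_eq hfB
  refine ⟨g, fun x y => by rw [hg, hg, hfB], ?_, fun x hx hxu => ?_, fun x hxu => ?_⟩
  · rw [hg, hf, hwp, hu, map_sub, h, hB.alt p, sub_zero, zero_smul, add_zero, one_smul,
      add_sub_cancel]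
  · rw [hg, hf, hxu, hSw x hx, zero_smul, zero_smul, add_zero, add_zero]
  · rw [hg, hf, hxu, zero_smul, add_zero, add_sub_cancel_left]
    exact Submodule.smul_mem _ _ (Submodule.mem_span_singleton_self u)

lemma exists_isometry_apply_eq {p p' : V} {S : Submodule F V}
    (hp : p ∉ S ⊔ Submodule.span F {p' - p}) :
    ∃ g : V ≃ₗ[F] V, (∀ x y, B (g x) (g y) = B x y) ∧ g p = p' ∧
      (∀ x ∈ S, B x (p' - p) = 0 → g x = x) ∧
      ∀ x, B x (p' - p) = 0 → g x - x ∈ Submodule.span F {p' - p} := by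
  by_cases h : B p p' = 0
  · exact hB.exists_isometry_of_apply_eq_zero h hp
  · obtain ⟨g, hg, hgp, hfix⟩ := hB.exists_isometry_of_apply_ne_zero h
    exact ⟨g, hg, hgp, fun x _ => hfix x, fun x hx => by
      rw [hfix x hx, sub_self]
      exact Submodule.zero_mem _⟩

end IsSymplectic

namespace SFlag

/-- The image of a flag under an isometry. -/
def map {J : Finset ℕ} (g : V ≃ₗ[F] V) (hg : ∀ x y, B (g x) (g y) = B x y) (C : SFlag B J) :
    SFlag B J where
  space j := (C.space j).map (g : V →ₗ[F] V)
  isotropic := by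
    rintro i hi _ ⟨u, hu, rfl⟩ _ ⟨w, hw, rfl⟩
    exact (hg u w).trans (C.isotropic i hi u hu w hw)
  finrank_eq i hi := (LinearEquiv.finrank_map_eq g _).trans (C.finrank_eq i hi)
  mono i hi j hj hij := Submodule.map_mono (C.mono i hi j hj hij)
  eq_bot i hi := by rw [C.eq_bot i hi, Submodule.map_bot]

lemma map_injective {J : Finset ℕ} {g : V ≃ₗ[F] V} (hg : ∀ x y, B (g x) (g y) = B x y) :
    Function.Injective (map (J := J) g hg) := fun _ _ h => ext fun j _ =>
  Submodule.map_injective_of_injective (f := (g : V →ₗ[F] V)) g.injective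
    (congrArg (fun E => E.space j) h)

end SFlag

namespace IsSymplectic

open SFlag

variable (hB : IsSymplectic B n) {C D : Chamber B n}
include hB

lemma exists_isometry_map_space_eq (hi : i < n) (h : Adj (i + 1) C D) :
    ∃ g : V ≃ₗ[F] V, (∀ x y, B (g x) (g y) = B x y) ∧
      ∀ j ≤ n, (C.space j).map (g : V →ₗ[F] V) = D.space j := by
  have := hB.finiteDimensional
  have hrank (j : ℕ) (hj : j ≤ n) : finrank F (C.space j) = finrank F (D.space j) := by
    rw [C.finrank_space hj, D.finrank_space hj]
  obtain ⟨p, hpC, hpD⟩ := SetLike.not_le_iff_exists.1 fun hle =>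
    h.space_ne (Submodule.eq_of_le_of_finrank_eq hle (hrank _ hi))
  obtain ⟨p', hp'D, hp'C⟩ := SetLike.not_le_iff_exists.1 fun hle =>
    h.space_ne (Submodule.eq_of_le_of_finrank_eq hle (hrank _ hi).symm).symm
  have hCi : C.space i ≤ C.space (i + 1) := C.space_le i.le_succ hi
  have hCDi : C.space i ≤ D.space (i + 1) := h.2 i (by omega) ▸ D.space_le i.le_succ hi
  obtain ⟨g, hg, hgp, hfix, hspan⟩ := hB.exists_isometry_apply_eq
    (notMem_sup_span_singleton_sub hCi hCDi hpC hpD hp'C)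
  have hfixC (x : V) (hx : x ∈ C.space i) : g x = x := hfix x hx <| by
    rw [map_sub, C.isTotIso_space _ x (hCi hx) p hpC, D.isTotIso_space _ x (hCDi hx) p' hp'D,
      sub_zero]
  refine ⟨g, hg, fun j hj => Submodule.eq_of_le_of_finrank_eq ?_
    ((LinearEquiv.finrank_map_eq g _).trans (hrank j hj))⟩
  rintro _ ⟨x, hx, rfl⟩
  obtain hji | rfl | hij := lt_trichotomy j (i + 1)
  · rw [← h.2 j hji.ne]
    exact (hfixC x (C.space_le (by omega) hi.le hx)).symm ▸ hx
  · rw [← sup_span_singleton_eq_of_finrank_eq_add_one hCi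
      (by rw [C.finrank_space hi, C.finrank_space hi.le]) hpC fun hp => hpD (hCDi hp)] at hx
    obtain ⟨w, hw, a, rfl⟩ := mem_sup_span_singleton_iff.1 hx
    rw [LinearEquiv.coe_coe, map_add, map_smul, hgp, hfixC w hw]
    exact Submodule.add_mem _ (hCDi hw) (Submodule.smul_mem _ a hp'D)
  · rw [← h.2 j hij.ne']
    have hu : p' - p ∈ C.space j := Submodule.sub_mem _
      (h.2 j hij.ne' ▸ D.space_le hij.le hj hp'D) (C.space_le hij.le hj hpC)
    have hgx := hspan x (C.isTotIso_space j x hx _ hu)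
    exact (Submodule.sub_mem_iff_left _ hx).1 ((Submodule.span_singleton_le_iff_mem _ _).2 hu hgx)

end IsSymplectic

end Isometries

lemma ncard_preimage_eq_mul {ι α : Type*} [Finite ι] {f : ι → α} {r : ℕ}
    (hr : ∀ x, (f ⁻¹' {f x}).ncard = r) {A : Set α} (hA : A ⊆ Set.range f) :
    (f ⁻¹' A).ncard = A.ncard * r := by
  have hAfin : A.Finite := (Set.finite_range f).subset hA
  let := Fintype.ofFinite ι
  rw [Set.ncard_eq_toFinset_card', Set.ncard_eq_toFinset_card A hAfin,
    Finset.card_eq_sum_card_fiberwise (t := hAfin.toFinset) (f := f) (by simp [Set.MapsTo])]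
  refine Finset.sum_const_nat fun a ha => ?_
  obtain ⟨x, rfl⟩ := hA (hAfin.mem_toFinset.1 ha)
  rw [← hr x, Set.ncard_eq_toFinset_card']
  congr 1
  ext y
  simp only [Finset.mem_filter, Set.mem_toFinset, Set.mem_preimage, Set.mem_singleton_iff,
    and_iff_right_iff_imp]
  exact fun hy => hy ▸ hAfin.mem_toFinset.1 ha

section Fibers

open SFlag

variable {F V : Type} [Field F] [AddCommGroup V] [Module F V] {B : V →ₗ[F] V →ₗ[F] F} {n i : ℕ}
  {J : Finset ℕ} {C D : Chamber B n}

/-- The flag of type `J` consisting of the members of `C` whose dimension lies in `J`. -/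
noncomputable def SFlag.restrict {K : Finset ℕ} (hJ : J ⊆ K) (C : SFlag B K) : SFlag B J where
  space j := if j ∈ J then C.space j else ⊥
  isotropic j hj := by
    simp only [hj, if_true]
    exact C.isotropic j (hJ hj)
  finrank_eq j hj := by
    rw [if_pos hj]
    exact C.finrank_eq j (hJ hj)
  mono i hi j hj hij := by
    simp only [hi, hj, if_true]
    exact C.mono i (hJ hi) j (hJ hj) hij
  eq_bot _ hj := if_neg hj

lemma SFlag.restrict_space {K : Finset ℕ} {hJ : J ⊆ K} {C : SFlag B K} {j : ℕ} (hj : j ∈ J) :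
    (C.restrict hJ).space j = C.space j :=
  if_pos hj

lemma SFlag.restrict_eq_iff {K : Finset ℕ} {hJ : J ⊆ K} {C : SFlag B K} {E : SFlag B J} :
    C.restrict hJ = E ↔ ∀ j ∈ J, C.space j = E.space j :=
  ⟨fun h _ hj => h ▸ (restrict_space hj).symm,
    fun h => ext fun j hj => (restrict_space hj).trans (h j hj)⟩

lemma SFlag.restrict_eq_restrict_iff {K : Finset ℕ} {hJ : J ⊆ K} {C D : SFlag B K} :
    C.restrict hJ = D.restrict hJ ↔ ∀ j ∈ J, C.space j = D.space j :=
  restrict_eq_iff.trans <| forall₂_congr fun _ hj => by rw [restrict_space hj]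

namespace IsSymplectic

variable (hB : IsSymplectic B n)
include hB

lemma restrict_surjective (hJ : J ⊆ Finset.Icc 1 n) :
    Function.Surjective (restrict (B := B) hJ) := fun E =>
  (hB.exists_chamber_space_eq (fun _ hj => (Finset.mem_Icc.1 (hJ hj)).2) E.isotropic
    E.finrank_eq E.mono).imp fun _ => restrict_eq_iff.2

variable [Finite F]

lemma ncard_setOf_space_eq_le (hJ : ∀ j ∈ J, j ≤ n) (hi : i < n) (h : SamePanel (i + 1) C D) :
    {X : Chamber B n | ∀ j ∈ J, X.space j = C.space j}.ncard ≤
      {X : Chamber B n | ∀ j ∈ J, X.space j = D.space j}.ncard := by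
  have := hB.finite_chamber
  obtain rfl | hne := eq_or_ne C D
  · rfl
  obtain ⟨g, hg, hgC⟩ := hB.exists_isometry_map_space_eq hi ⟨hne, h⟩
  refine Set.ncard_le_ncard_of_injOn (SFlag.map g hg) (fun X hX j hj => ?_)
    (map_injective hg).injOn
  rw [← hgC j (hJ j hj), ← hX j hj]
  rfl

variable (hF : 3 < Nat.card F)
include hF

lemma ncard_setOf_space_eq (hJ : ∀ j ∈ J, j ≤ n) (C D : Chamber B n) :
    {X : Chamber B n | ∀ j ∈ J, X.space j = C.space j}.ncard =
      {X : Chamber B n | ∀ j ∈ J, X.space j = D.space j}.ncard := by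
  refine hB.eq_of_forall_samePanel hF
    (f := fun C => {X : Chamber B n | ∀ j ∈ J, X.space j = C.space j}.ncard)
    fun k hk hkn X Y h => ?_
  obtain ⟨i, rfl⟩ := Nat.exists_eq_add_of_le' hk
  exact le_antisymm (hB.ncard_setOf_space_eq_le hJ hkn h)
    (hB.ncard_setOf_space_eq_le hJ hkn h.symm)

lemma exists_ncard_preimage_eq_mul {α : Type*} (hJ : ∀ j ∈ J, j ≤ n) {f : Chamber B n → α}
    (hf : ∀ X Y, f X = f Y ↔ ∀ j ∈ J, X.space j = Y.space j) :
    ∃ r > 0, ∀ A ⊆ Set.range f, (f ⁻¹' A).ncard = A.ncard * r := by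
  have := hB.finite_chamber
  obtain ⟨C⟩ := hB.nonempty_chamber
  refine ⟨{X : Chamber B n | ∀ j ∈ J, X.space j = C.space j}.ncard,
    (Set.ncard_pos (Set.toFinite _)).2 ⟨C, fun _ _ => rfl⟩, fun A hA => ?_⟩
  refine ncard_preimage_eq_mul (fun X => ?_) hA
  rw [← hB.ncard_setOf_space_eq hF hJ X C]
  exact congrArg Set.ncard (Set.ext fun Y => hf Y X)

end IsSymplectic

end Fibers

section MainTheorem

open SFlag

variable {F V : Type} [Field F] [AddCommGroup V] [Module F V] {B : V →ₗ[F] V →ₗ[F] F} {n i : ℕ}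
  {J : Finset ℕ} {S : Set (Chamber B n)} {𝓕 : Set (SFlag B J)} [Finite F]

namespace IsSymplectic

variable (hB : IsSymplectic B n) (hF : 3 < Nat.card F)
include hB hF

lemma exists_ncard_preimage_restrict_eq_mul (hJ : J ⊆ Finset.Icc 1 n) :
    ∃ r > 0, ∀ 𝓕 : Set (SFlag B J), (restrict hJ ⁻¹' 𝓕).ncard = 𝓕.ncard * r := by
  obtain ⟨r, hr, h⟩ := hB.exists_ncard_preimage_eq_mul hF
    (fun j hj => (Finset.mem_Icc.1 (hJ hj)).2) (f := restrict hJ)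
    fun _ _ => restrict_eq_restrict_iff
  exact ⟨r, hr, fun 𝓕 => h 𝓕 (by simp [(hB.restrict_surjective hJ).range_eq])⟩

lemma isRatioSharp_preimage_restrict (hJ : J ⊆ Finset.Icc 1 n) (h𝓕 : IsEKRFlags 𝓕)
    (hcard : 𝓕.ncard * (Nat.card F ^ n + 1) = Nat.card (SFlag B J)) :
    IsRatioSharp (restrict hJ ⁻¹' 𝓕) where
  isEKR C hC D hD hCD := h𝓕 _ hC _ hD fun j hj => by
    rw [restrict_space hj, restrict_space hj]
    exact hCD j (hJ hj)
  ncard_mul := by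
    obtain ⟨r, -, h⟩ := hB.exists_ncard_preimage_restrict_eq_mul hF hJ
    rw [h, mul_right_comm, hcard, ← Set.ncard_univ (SFlag B J), ← h, Set.preimage_univ,
      Set.ncard_univ]

lemma exists_ncard_setOf_space_mem_eq_mul (hi : i ≤ n) :
    ∃ r > 0, ∀ 𝓖 : Set (Submodule F V), (∀ T ∈ 𝓖, IsTotIso B T ∧ finrank F T = i) →
      {C : Chamber B n | C.space i ∈ 𝓖}.ncard = 𝓖.ncard * r := by
  obtain ⟨r, hr, h⟩ := hB.exists_ncard_preimage_eq_mul hF (J := {i}) (by simpa using hi)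
    (f := fun C : Chamber B n => C.space i) (by simp)
  refine ⟨r, hr, fun 𝓖 h𝓖 => h 𝓖 fun T hT => ?_⟩
  obtain ⟨C, hC⟩ := hB.exists_chamber_space_eq (J := {i}) (f := fun _ => T) (by simpa using hi)
    (by simpa using (h𝓖 T hT).1) (by simpa using (h𝓖 T hT).2) (by simp)
  exact ⟨C, hC i (Finset.mem_singleton_self i)⟩

end IsSymplectic

namespace IsRatioSharp

variable (hS : IsRatioSharp S) (hB : IsSymplectic B n)
include hS hB

lemma nonempty : S.Nonempty := by
  have := hB.finite_chamber
  have := hB.nonempty_chamber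
  rw [Set.nonempty_iff_ne_empty]
  rintro rfl
  have h := hS.ncard_mul
  rw [Set.ncard_empty, zero_mul] at h
  exact Nat.card_pos.ne h

lemma ne_univ : S ≠ Set.univ := by
  have := hB.finite_chamber
  have := hB.nonempty_chamber
  rintro rfl
  have h := hS.ncard_mul
  rw [Set.ncard_univ, mul_add_one, Nat.add_eq_right] at h
  exact mul_ne_zero Nat.card_pos.ne' (pow_ne_zero n Nat.card_pos.ne') h

variable (hF : 3 < Nat.card F)
include hF

lemma exists_eq_setOf_space_mem :
    ∃ i ∈ Finset.Icc 1 n, ∃ P, IsEKRSpaces B i P ∧ S = {C | C.space i ∈ P} := by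
  obtain ⟨i, hi, hSi⟩ := hB.exists_forall_not_spaceOpp hF hS (hS.nonempty hB)
  have hin := (Finset.mem_Icc.1 hi).2
  refine ⟨i, hi, (fun C => C.space i) '' S, ⟨?_, ?_⟩,
    Set.Subset.antisymm (fun C hC => ⟨C, hC, rfl⟩) ?_⟩
  · rintro _ ⟨C, -, rfl⟩
    exact ⟨C.isTotIso_space i, C.finrank_space hin⟩
  · rintro _ ⟨C, hC, rfl⟩ _ ⟨D, hD, rfl⟩
    exact hSi C hC D hD
  · rintro D ⟨C, hC, hCD⟩
    exact hS.mem_of_space_eq hB hF hin hSi hC hCD.symm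

end IsRatioSharp

namespace IsSymplectic

variable (hB : IsSymplectic B n) (hF : 3 < Nat.card F) {P : Set (Submodule F V)}
include hB hF

lemma mem_of_isRatioSharp (hP : IsRatioSharp {C : Chamber B n | C.space i ∈ P})
    (hJ : ∀ C D : Chamber B n, (∀ j ∈ J, C.space j = D.space j) →
      (C.space i ∈ P ↔ D.space i ∈ P)) : i ∈ J := by
  by_contra hiJ
  obtain ⟨C, hC⟩ := hP.nonempty hB
  refine hP.ne_univ hB (Set.eq_univ_of_forall fun D => ?_)
  have heq := hB.eq_of_forall_samePanel hF (f := fun C => C.space i ∈ P) (C := C) (D := D)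
    fun k _ _ X Y h => propext <| by
      obtain rfl | hk := eq_or_ne i k
      · exact hJ X Y fun j hj => h j (ne_of_mem_of_not_mem hj hiJ)
      · rw [h i hk]
  exact heq.mp hC

lemma ncard_le_of_isRatioSharp (hi : i ≤ n) (hPS : IsRatioSharp {C : Chamber B n | C.space i ∈ P})
    (hP : IsEKRSpaces B i P) {𝓖 : Set (Submodule F V)} (h𝓖 : IsEKRSpaces B i 𝓖) :
    𝓖.ncard ≤ P.ncard := by
  obtain ⟨r, hr, h⟩ := hB.exists_ncard_setOf_space_mem_eq_mul hF hi
  have hle := hB.ncard_mul_le hF (S := {C : Chamber B n | C.space i ∈ 𝓖}) fun C hC D hD hCD =>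
    h𝓖.2 _ hC _ hD (flagOpp_iff.1 hCD i hi)
  rw [← hPS.ncard_mul, h 𝓖 h𝓖.1, h P hP.1] at hle
  exact le_of_mul_le_mul_right (le_of_mul_le_mul_right hle (Nat.succ_pos _)) hr

lemma eq_one_or_eq_of_isRatioSharp (hi : i ∈ Finset.Icc 1 n)
    (hPS : IsRatioSharp {C : Chamber B n | C.space i ∈ P}) (hP : IsEKRSpaces B i P) :
    i = 1 ∨ i = n := by
  by_contra! h
  obtain ⟨hi1, hin⟩ := Finset.mem_Icc.1 hi
  obtain ⟨e, rfl⟩ : ∃ e, i = e + 2 := ⟨i - 2, by omega⟩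
  exact hB.not_isRatioSharp hF (by omega) (fun T hT => (hP.1 T hT).2) hP.2 (hPS.nonempty hB) hPS

end IsSymplectic

end MainTheorem

theorem stmt_1_general {F V : Type} [Field F] [Finite F] [AddCommGroup V] [Module F V]
    {B : V →ₗ[F] V →ₗ[F] F} {n : ℕ} {J : Finset ℕ} {𝓕 : Set (SFlag B J)} (hB : IsSymplectic B n)
    (hF : 3 < Nat.card F) (hJ : J ⊆ Finset.Icc 1 n) (h𝓕 : IsEKRFlags 𝓕)
    (hcard : 𝓕.ncard * (Nat.card F ^ n + 1) = Nat.card (SFlag B J)) :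
    ∃ i : ℕ, (i = 1 ∨ i = n) ∧ i ∈ J ∧
      ∃ 𝓕i : Set (Submodule F V),
        IsEKRSpaces B i 𝓕i ∧
        (∀ 𝓖 : Set (Submodule F V), IsEKRSpaces B i 𝓖 → 𝓖.ncard ≤ 𝓕i.ncard) ∧
        𝓕 = {Fl : SFlag B J | Fl.space i ∈ 𝓕i} := by
  have hS := hB.isRatioSharp_preimage_restrict hF hJ h𝓕 hcard
  obtain ⟨i, hi, P, hP, hSP⟩ := hS.exists_eq_setOf_space_mem hB hF
  have hmem (C : Chamber B n) : C.restrict hJ ∈ 𝓕 ↔ C.space i ∈ P := Set.ext_iff.1 hSP C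
  rw [hSP] at hS
  have hiJ : i ∈ J := hB.mem_of_isRatioSharp hF hS fun C D hCD => by
    rw [← hmem, ← hmem, SFlag.restrict_eq_restrict_iff.2 hCD]
  refine ⟨i, hB.eq_one_or_eq_of_isRatioSharp hF hi hS hP, hiJ, P, hP,
    fun 𝓖 => hB.ncard_le_of_isRatioSharp hF (Finset.mem_Icc.1 hi).2 hS hP, ?_⟩
  ext E
  obtain ⟨C, rfl⟩ := hB.restrict_surjective hJ E
  rw [hmem, Set.mem_ofPred_eq, SFlag.restrict_space hiJ]

/-- For large `q`, a ratio-sharp EKR-set of flags of type `J` with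
`1 ∈ J` or `n ∈ J` is the set of all flags of type `J` containing a member of a
maximum EKR-set of `i`-spaces for some `i ∈ {1,n} ∩ J`. -/
theorem stmt_1 (n : ℕ) (hn : 3 ≤ n) :
    ∃ q₀ : ℕ, ∀ (F V : Type) [Field F] [Fintype F] [AddCommGroup V] [Module F V],
      ∀ q : ℕ, Fintype.card F = q → q₀ ≤ q →
      ∀ B : V →ₗ[F] V →ₗ[F] F, IsAltForm B → NondegForm B →
      FiniteDimensional F V → Module.finrank F V = 2 * n →
      ∀ J : Finset ℕ, J ⊆ Finset.Icc 1 n → (1 ∈ J ∨ n ∈ J) →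
      ∀ 𝓕 : Set (SFlag B J),
        IsEKRFlags 𝓕 →
        (𝓕.ncard : ℝ) = (Nat.card (SFlag B J) : ℝ) / ((q : ℝ) ^ n + 1) →
        ∃ i : ℕ, (i = 1 ∨ i = n) ∧ i ∈ J ∧
          ∃ 𝓕i : Set (Submodule F V),
            IsEKRSpaces B i 𝓕i ∧
            (∀ 𝓖 : Set (Submodule F V), IsEKRSpaces B i 𝓖 → 𝓖.ncard ≤ 𝓕i.ncard) ∧
            𝓕 = {Fl : SFlag B J | Fl.space i ∈ 𝓕i} := by
  refine ⟨4, ?_⟩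
  rintro F V _ _ _ _ q rfl hq B hAlt hNd hfd hdim J hJ - 𝓕 h𝓕 hcard
  rw [Fintype.card_eq_nat_card] at hq hcard
  rw [eq_div_iff (by positivity)] at hcard
  exact stmt_1_general ⟨hAlt, hNd, hfd, hdim⟩ hq hJ h𝓕 (by exact_mod_cast hcard)
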